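/- Let Q be a bipartite recurrent quiver on a finite vertex set V, and let T be the T-system associated with Q. Then there exists a positive integer N such that T(t+2N, v) = T(t, v) for all v ∈ V and all t ∈ ℤ with t + ε(v) even, if and only if G(Q) is an admissible ADE bigraph. -/

import Mathlib

/-!
The theorem compares both sides with a numerical condition, `SmallEig`. On each connected component
of the bigraph (edges of `Γ` and `Δ` together) the commuting symmetric matrices `A` and `B` have a
common positive eigenvector `p`, with eigenvalues `l` and `m` (`joint_eigen`); the condition is that
`l < 2` and `m < 2`.

*Passage to the positive reals.* A rational function is determined by its values at positive points
(`eq_of_evalsTo`), and the `T`-system can be evaluated at any such point, so periodicity of `T` is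
periodicity of solutions `X t v` of the `T`-system in positive reals (`exists_realSol`,
`tsystem_periodic_of_real`, `real_periodic_of_tsystem`). These carry values at all pairs `(t, v)`,
irrespective of parity.

*Periodic implies `SmallEig`* (`RealSol.eig_lt_two`, `smallEig_of_periodic`). Let all initial
variables be `2`. If `l ≥ 2`, then dropping the `B`-monomial from the exchange relation shows that
`L t = ∑ v, p v * log (X t v)` satisfies `L (t + 1) + L (t - 1) > l * L t ≥ 2 * L t` wherever
`L t ≥ 0`; this is impossible at a maximum of `L`, which exists by periodicity and is positive.

*`SmallEig` is equivalent to ADE* (`smallEig_iff`). An eigenvalue below `2` forces multiplicities at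
most `1`, and forbids nonzero functions `d : V → ℕ` with `2 * d u ≤ ∑ d w` (over the neighbours `w`
of `u`) wherever `d u ≠ 0`, the property `Pos`. A connected graph with this property has a leaf; by
induction it arises from a path with one further vertex attached (a Y-shaped tree) by attaching a
leaf. It is then again of this shape, with arms bounded as for ADE diagrams, since otherwise it
contains an affine diagram, whose marks are a forbidden `d` (`Pos.exists_lab`, `Pos.isADE`). Conversely an ADE diagram carries positive labels `d` with
`∑ d w ≤ 2 * d u`, strictly somewhere; pairing them with `p` gives `l < 2` (`IsADE.hasLabels`,
`HasLabels.eig_lt_two`).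

*`SmallEig` implies periodic* (`exists_phased`, `Phased.periodic`, `periodic_of_smallEig`). Insert
coefficients into the `T`-system: fix a sequence of phases `β t`, and multiply either the
`A`-monomial by `Y t v` or the `B`-monomial by `(Y t v)⁻¹`, according to `β t`, where `Y` evolves
multiplicatively by `B` in the first phase and by `A` in the second (`CoefSys`). Setting `Y = 1`
recovers the `T`-system. Three facts are combined.

* The Laurent phenomenon: the variables are Laurent polynomials in the initial data
  (`GenSys.laurent`). The relation `A B = B A` makes the variable two exchanges later affine-linear
  in the present one (`GenSys.leading`, `GenSys.affine`), which is what propagates Laurentness from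
  one seed to the previous one.
* Let `h` and `h'` be the Coxeter numbers of `B` and `A`: the Chebyshev matrices
  `cheb (toM B) h` and `cheb (toM A) h'` vanish, and the previous ones are involutions
  (`Dynkin.coxeter`). Let the phases run through `h` steps of `B` and `h'` steps of `A` in turn.
  Then the linear recursion `ρ (t + 2) + ρ t = B ρ (t + 1)` or `A ρ (t + 1)` has a period `P`, and an
  integer solution `r` which is positive in the first phase and negative in the second
  (`exists_phased`, in the notion `Phased`).
* Put `Y t v = s ^ r t v`. As `s → 0` only one monomial survives in each exchange relation, and the
  logarithms of the variables follow the same linear recursion, so that the variables after the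
  period `P` tend to the initial ones (`val_tendsto`, `Phased.tendsto`).

A variable at time `P` is, up to a power of `s`, a polynomial in `s`. If the initial variables are
scaled by powers of `s`, comparison with the limit shows that the growth exponents for `s → ∞` at
time `P` are at least the initial ones (`trop_ge`). Applied to the solution read backwards this gives
the opposite inequality (`Phased.trop_le`): for constant initial variables, the variable at time `P`
stays bounded for `s → ∞`. Being bounded there and convergent for `s → 0`, it does not depend on `s`
(`val_const`). Hence it equals the initial variable also for `s = 1`, that is, in the `T`-system.
-/

open scoped BigOperators

/-- A bipartite quiver on a finite vertex set `V`, encoded by a bipartition `eps`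
and the two symmetric edge-multiplicity matrices `A` (arrows from `eps = 0` to `eps = 1`)
and `B` (arrows from `eps = 1` to `eps = 0`). -/
def BipartiteData {V : Type} [Fintype V] (eps : V → ℤ) (A B : V → V → ℕ) : Prop :=
  (∀ v, eps v = 0 ∨ eps v = 1) ∧
  (∀ u v, A u v = A v u) ∧
  (∀ u v, B u v = B v u) ∧
  (∀ v, A v v = 0) ∧
  (∀ v, B v v = 0) ∧
  (∀ u v, eps u = eps v → A u v = 0 ∧ B u v = 0) ∧
  (∀ u v, A u v * B u v = 0)

/-- A bipartite quiver is recurrent iff the matrices `A` and `B` commute. -/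
def RecurrentQuiver {V : Type} [Fintype V] (A B : V → V → ℕ) : Prop :=
  ∀ u v, (∑ w, A u w * B w v) = ∑ w, B u w * A w v

/-- The `T`-system associated with a bipartite quiver: a family `T t v` of elements of the
field of fractions of `ℚ[x_v : v ∈ V]` satisfying
`T (t+1) v * T (t-1) v = ∏ u, T t u ^ A v u + ∏ u, T t u ^ B v u` whenever `t + eps v` is odd,
with initial conditions `T (eps v) v = x_v`. -/
def IsTSystem {V : Type} [Fintype V] (eps : V → ℤ) (A B : V → V → ℕ)
    (T : ℤ → V → FractionRing (MvPolynomial V ℚ)) : Prop :=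
  (∀ v, T (eps v) v =
      algebraMap (MvPolynomial V ℚ) (FractionRing (MvPolynomial V ℚ)) (MvPolynomial.X v)) ∧
  (∀ (t : ℤ) (v : V), Odd (t + eps v) →
    T (t + 1) v * T (t - 1) v = (∏ u, T t u ^ A v u) + (∏ u, T t u ^ B v u))

/-- The Dynkin diagram `A_n`: vertices `0, …, n-1` with edges `{i, i+1}`. -/
def adeA (n : ℕ) : SimpleGraph (Fin n) :=
  SimpleGraph.fromRel (fun i j => (i : ℕ) + 1 = (j : ℕ))

/-- The Dynkin diagram `D_n` (`n ≥ 4`): a path on vertices `0, …, n-2`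
together with the edge `{n-3, n-1}`. -/
def adeD (n : ℕ) : SimpleGraph (Fin n) :=
  SimpleGraph.fromRel (fun i j =>
    ((i : ℕ) + 1 = (j : ℕ) ∧ (j : ℕ) ≤ n - 2) ∨ ((i : ℕ) = n - 3 ∧ (j : ℕ) = n - 1))

/-- The Dynkin diagram `E_n` (`n = 6, 7, 8`): a path on vertices `0, …, n-2`
together with the edge `{2, n-1}`. -/
def adeE (n : ℕ) : SimpleGraph (Fin n) :=
  SimpleGraph.fromRel (fun i j =>
    ((i : ℕ) + 1 = (j : ℕ) ∧ (j : ℕ) ≤ n - 2) ∨ ((i : ℕ) = 2 ∧ (j : ℕ) = n - 1))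

/-- A graph is an ADE Dynkin diagram if it is isomorphic to some `A_n` (`n ≥ 1`),
`D_n` (`n ≥ 4`), or `E_n` (`n = 6, 7, 8`). -/
def IsADE {W : Type*} (G : SimpleGraph W) : Prop :=
  (∃ n : ℕ, 1 ≤ n ∧ Nonempty (G ≃g adeA n)) ∨
  (∃ n : ℕ, 4 ≤ n ∧ Nonempty (G ≃g adeD n)) ∨
  (∃ n : ℕ, (n = 6 ∨ n = 7 ∨ n = 8) ∧ Nonempty (G ≃g adeE n))

/-- The simple graph on `V` whose edges are the pairs `{u, v}` with `A u v = 1`. -/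
def graphOf {V : Type} (A : V → V → ℕ) : SimpleGraph V :=
  SimpleGraph.fromRel (fun u v => A u v = 1)

/-- `G(Q)` is an admissible ADE bigraph: `A` and `B` take values in `{0, 1}` and every
connected component of `Γ` and of `Δ` is an ADE Dynkin diagram. -/
def AdmissibleADE {V : Type} [Fintype V] (A B : V → V → ℕ) : Prop :=
  (∀ u v, A u v ≤ 1) ∧ (∀ u v, B u v ≤ 1) ∧
  (∀ c : (graphOf A).ConnectedComponent, IsADE ((graphOf A).induce c.supp)) ∧
  (∀ c : (graphOf B).ConnectedComponent, IsADE ((graphOf B).induce c.supp))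

set_option linter.unusedSectionVars false

/-! ### Partial evaluation of rational expressions -/

/-- `Ev g ξ f r`: the element `f`, written as a quotient of polynomials in the family `g` whose
denominator does not vanish at the point `ξ`, takes the value `r` at `ξ`. -/
def Ev {ι K F : Type} [Field K] [Algebra ℚ K] [Field F] [Algebra ℚ F] (g : ι → K) (ξ : ι → F)
    (f : K) (r : F) : Prop :=
  ∃ N D : MvPolynomial ι ℚ, MvPolynomial.aeval ξ D ≠ 0 ∧
    f * MvPolynomial.aeval g D = MvPolynomial.aeval g N ∧
    r * MvPolynomial.aeval ξ D = MvPolynomial.aeval ξ N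

namespace Ev
open MvPolynomial
variable {ι K F : Type} [Field K] [Algebra ℚ K] [Field F] [Algebra ℚ F] {g : ι → K} {ξ : ι → F}

theorem unique (hg : AlgebraicIndependent ℚ g) {f : K} {r s : F} (h1 : Ev g ξ f r)
    (h2 : Ev g ξ f s) : r = s := by
  obtain ⟨N, D, hD, h, h'⟩ := h1
  obtain ⟨N2, D2, hD2, k, k'⟩ := h2
  have : N * D2 = N2 * D := by
    apply hg
    rw [map_mul, map_mul, ← h, ← k]; ring
  have := congrArg (aeval ξ) this
  rw [map_mul, map_mul, ← h', ← k'] at this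
  have hh : (r - s) * (aeval ξ D * aeval ξ D2) = 0 := by linear_combination this
  rcases mul_eq_zero.1 hh with h0 | h0
  · exact sub_eq_zero.1 h0
  · exact absurd h0 (mul_ne_zero hD hD2)

theorem poly (N : MvPolynomial ι ℚ) : Ev g ξ (aeval g N) (aeval ξ N) := ⟨N, 1, by simp⟩

theorem X (i : ι) : Ev g ξ (g i) (ξ i) := by simpa using poly (g := g) (ξ := ξ) (MvPolynomial.X i)

theorem C (c : ℚ) : Ev g ξ (algebraMap ℚ K c) (algebraMap ℚ F c) := by
  simpa using poly (g := g) (ξ := ξ) (MvPolynomial.C c)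

theorem one : Ev g ξ 1 1 := by simpa using C (g := g) (ξ := ξ) 1
theorem zero : Ev g ξ 0 0 := by simpa using C (g := g) (ξ := ξ) 0

theorem add {f f' : K} {r r' : F} (h1 : Ev g ξ f r) (h2 : Ev g ξ f' r') :
    Ev g ξ (f + f') (r + r') := by
  obtain ⟨N, D, hD, h, h'⟩ := h1
  obtain ⟨N2, D2, hD2, k, k'⟩ := h2
  refine ⟨N * D2 + N2 * D, D * D2, by simpa using ⟨hD, hD2⟩, ?_, ?_⟩
  · simp only [map_add, map_mul, ← h, ← k]; ring
  · simp only [map_add, map_mul, ← h', ← k']; ring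

theorem mul {f f' : K} {r r' : F} (h1 : Ev g ξ f r) (h2 : Ev g ξ f' r') :
    Ev g ξ (f * f') (r * r') := by
  obtain ⟨N, D, hD, h, h'⟩ := h1
  obtain ⟨N2, D2, hD2, k, k'⟩ := h2
  refine ⟨N * N2, D * D2, by simpa using ⟨hD, hD2⟩, ?_, ?_⟩
  · simp only [map_mul, ← h, ← k]; ring
  · simp only [map_mul, ← h', ← k']; ring

theorem inv (hg : AlgebraicIndependent ℚ g) {f : K} {r : F} (h1 : Ev g ξ f r) (hr : r ≠ 0) :
    Ev g ξ f⁻¹ r⁻¹ := by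
  have hf : f ≠ 0 := by
    rintro rfl
    exact hr (h1.unique hg zero)
  obtain ⟨N, D, hD, h, h'⟩ := h1
  refine ⟨D, N, by rw [← h']; exact mul_ne_zero hr hD, ?_, ?_⟩
  · rw [← h]; field_simp
  · rw [← h']; field_simp

theorem pow {f : K} {r : F} (h1 : Ev g ξ f r) (n : ℕ) : Ev g ξ (f ^ n) (r ^ n) := by
  induction n with
  | zero => simpa using one
  | succ n ih => simpa [pow_succ] using ih.mul h1

theorem prod {κ : Type} (s : Finset κ) {f : κ → K} {r : κ → F} (h : ∀ k ∈ s, Ev g ξ (f k) (r k)) :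
    Ev g ξ (∏ k ∈ s, f k) (∏ k ∈ s, r k) := by
  classical
  induction s using Finset.induction_on with
  | empty => simpa using one
  | insert a s ha ih =>
    rw [Finset.prod_insert ha, Finset.prod_insert ha]
    exact (h a (by simp)).mul (ih fun k hk => h k (by simp [hk]))

theorem div (hg : AlgebraicIndependent ℚ g) {f f' : K} {r r' : F} (h1 : Ev g ξ f r)
    (h2 : Ev g ξ f' r') (hr : r' ≠ 0) : Ev g ξ (f / f') (r / r') := by
  rw [div_eq_mul_inv, div_eq_mul_inv]; exact h1.mul (h2.inv hg hr)

end Ev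

/-! ### Laurent rings -/

/-- The ring of Laurent polynomials in the family `g`. -/
def Lau {κ K : Type} [Field K] [Algebra ℚ K] (g : κ → K) : Subalgebra ℚ K :=
  Algebra.adjoin ℚ (Set.range g ∪ Set.range fun k => (g k)⁻¹)

/-- `x` and its inverse both lie in the subring `L`. -/
def Mon {K : Type} [Field K] [Algebra ℚ K] (L : Subalgebra ℚ K) (x : K) : Prop :=
  x ∈ L ∧ x⁻¹ ∈ L

namespace Mon
variable {K : Type} [Field K] [Algebra ℚ K] {L : Subalgebra ℚ K} {x y : K}
theorem one : Mon L (1 : K) := ⟨one_mem _, by simp⟩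
theorem mul (hx : Mon L x) (hy : Mon L y) : Mon L (x * y) :=
  ⟨mul_mem hx.1 hy.1, by rw [mul_inv]; exact mul_mem hx.2 hy.2⟩
theorem inv (hx : Mon L x) : Mon L x⁻¹ := ⟨hx.2, by simpa using hx.1⟩
theorem div (hx : Mon L x) (hy : Mon L y) : Mon L (x / y) := by
  rw [div_eq_mul_inv]; exact hx.mul hy.inv
theorem pow (hx : Mon L x) (n : ℕ) : Mon L (x ^ n) :=
  ⟨pow_mem hx.1 n, by rw [← inv_pow]; exact pow_mem hx.2 n⟩
theorem prod {κ : Type} (s : Finset κ) {f : κ → K} (h : ∀ k ∈ s, Mon L (f k)) :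
    Mon L (∏ k ∈ s, f k) :=
  ⟨prod_mem fun k hk => (h k hk).1, by rw [← Finset.prod_inv_distrib]; exact prod_mem fun k hk => (h k hk).2⟩
end Mon

section
variable {ι κ K : Type} [Field K] [Algebra ℚ K]

theorem Lau.mon (g : κ → K) (k : κ) : Mon (Lau g) (g k) :=
  ⟨Algebra.subset_adjoin (Or.inl ⟨k, rfl⟩), Algebra.subset_adjoin (Or.inr ⟨k, rfl⟩)⟩

theorem Lau.le {g : κ → K} {L : Subalgebra ℚ K} (h : ∀ k, Mon L (g k)) : Lau g ≤ L := by
  refine Algebra.adjoin_le ?_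
  rintro x (⟨k, rfl⟩ | ⟨k, rfl⟩)
  exacts [(h k).1, (h k).2]

/-- If a power of `d` clears the denominators, relative to `L`, of the generators of a Laurent
ring, then it does so for each of its elements. -/
theorem Lau.clear {g : κ → K} {L : Subalgebra ℚ K} {d : K} (hd : d ∈ L)
    (h : ∀ k, (∃ n : ℕ, d ^ n * g k ∈ L) ∧ ∃ n : ℕ, d ^ n * (g k)⁻¹ ∈ L) {f : K} (hf : f ∈ Lau g) :
    ∃ n : ℕ, d ^ n * f ∈ L := by
  induction hf using Algebra.adjoin_induction with
  | mem x hx =>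
    rcases hx with ⟨k, rfl⟩ | ⟨k, rfl⟩
    exacts [(h k).1, (h k).2]
  | algebraMap r => exact ⟨0, by simpa using L.algebraMap_mem r⟩
  | add x y _ _ hx hy =>
    obtain ⟨n, hn⟩ := hx
    obtain ⟨m, hm⟩ := hy
    refine ⟨n + m, ?_⟩
    have : d ^ (n + m) * (x + y) = d ^ m * (d ^ n * x) + d ^ n * (d ^ m * y) := by ring
    rw [this]
    exact add_mem (mul_mem (pow_mem hd _) hn) (mul_mem (pow_mem hd _) hm)
  | mul x y _ _ hx hy =>
    obtain ⟨n, hn⟩ := hx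
    obtain ⟨m, hm⟩ := hy
    refine ⟨n + m, ?_⟩
    have : d ^ (n + m) * (x * y) = (d ^ n * x) * (d ^ m * y) := by ring
    rw [this]
    exact mul_mem hn hm

/-- `p` is a prime element of the subring `L`. -/
def PrimeIn (L : Subalgebra ℚ K) (p : K) : Prop :=
  p ≠ 0 ∧ p ∈ L ∧ ∀ a ∈ L, ∀ b ∈ L, (∃ c ∈ L, a * b = p * c) →
    (∃ c ∈ L, a = p * c) ∨ ∃ c ∈ L, b = p * c

/-- Divisibility in the subring `L`. -/
def DvdIn (L : Subalgebra ℚ K) (p a : K) : Prop := ∃ c ∈ L, a = p * c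

theorem PrimeIn.not_dvd_pow {L : Subalgebra ℚ K} {p : K} (hp : PrimeIn L p)
    (h1 : ¬ DvdIn L p 1) {a : K} (ha : a ∈ L)
    (hpa : ¬ DvdIn L p a) (n : ℕ) : ¬ DvdIn L p (a ^ n) := by
  induction n with
  | zero => simpa using h1
  | succ n ih =>
    intro h
    rw [pow_succ] at h
    rcases hp.2.2 _ (pow_mem ha n) _ ha h with h | h
    exacts [ih h, hpa h]

theorem PrimeIn.descend {L : Subalgebra ℚ K} {p : K} (hp : PrimeIn L p) {f d : K} (hd : d ∈ L)
    (hpd : ¬ DvdIn L p d) (hdf : d * f ∈ L) (n : ℕ) (hn : p ^ n * f ∈ L) : f ∈ L := by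
  induction n with
  | zero => simpa using hn
  | succ n ih =>
    have : d * (p ^ (n + 1) * f) = p * (p ^ n * (d * f)) := by ring
    rcases hp.2.2 d hd _ hn ⟨_, mul_mem (pow_mem hp.2.1 n) hdf, this⟩ with h | ⟨c, hc, h⟩
    · exact absurd h hpd
    · apply ih
      have : p ^ n * f = c := by
        apply mul_left_cancel₀ hp.1
        rw [← h]; ring
      rw [this]; exact hc

theorem descend_finset {L : Subalgebra ℚ K} {p : κ → K} (s : Finset κ)
    (hp : ∀ v ∈ s, PrimeIn L (p v)) {f : K} (n : ℕ) (hn : (∏ v ∈ s, p v) ^ n * f ∈ L)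
    (hd : ∀ v ∈ s, ∃ d ∈ L, ¬ DvdIn L (p v) d ∧ d * f ∈ L) : f ∈ L := by
  classical
  induction s using Finset.induction_on generalizing f with
  | empty => simpa using hn
  | insert a s ha ih =>
    apply ih (fun v hv => hp v (by simp [hv]))
    · obtain ⟨d, hdL, hpd, hdf⟩ := hd a (by simp)
      refine (hp a (by simp)).descend hdL hpd ?_ n ?_
      · rw [mul_left_comm]
        exact mul_mem (pow_mem (prod_mem fun v hv => (hp v (by simp [hv])).2.1) n) hdf
      · rw [Finset.prod_insert ha, mul_pow, mul_assoc] at hn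
        exact hn
    · exact fun v hv => hd v (by simp [hv])

theorem Lau.num_den {ι : Type} [Fintype ι] {g : ι → K} (hg : ∀ i, g i ≠ 0) {f : K}
    (hf : f ∈ Lau g) : ∃ (N : MvPolynomial ι ℚ) (n : ℕ),
      (∏ i, g i) ^ n * f = MvPolynomial.aeval g N := by
  classical
  have hmem : ∀ i, g i ∈ (MvPolynomial.aeval (R := ℚ) g).range := fun i => ⟨MvPolynomial.X i, by simp⟩
  obtain ⟨n, N, hN⟩ := Lau.clear (g := g) (L := (MvPolynomial.aeval g).range) (d := ∏ i, g i)
    (prod_mem fun i _ => hmem i) (fun k => ⟨⟨0, by simpa using hmem k⟩, ⟨1, by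
      rw [← Finset.mul_prod_erase Finset.univ g (Finset.mem_univ k)]
      have : (g k * ∏ i ∈ Finset.univ.erase k, g i) ^ 1 * (g k)⁻¹
          = ∏ i ∈ Finset.univ.erase k, g i := by
        have := hg k
        field_simp
      rw [this]
      exact prod_mem fun i _ => hmem i⟩⟩) hf
  exact ⟨N, n, hN.symm⟩

theorem Lau.ev {ι F : Type} [Fintype ι] [Field F] [Algebra ℚ F] {g : ι → K} {ξ : ι → F}
    (hg : ∀ i, g i ≠ 0) (hξ : ∀ i, ξ i ≠ 0) {f : K} (hf : f ∈ Lau g) : ∃ r, Ev g ξ f r := by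
  obtain ⟨N, n, h⟩ := Lau.num_den hg hf
  have h0 : (∏ i, ξ i) ^ n ≠ 0 := pow_ne_zero _ (Finset.prod_ne_zero_iff.2 fun i _ => hξ i)
  refine ⟨MvPolynomial.aeval ξ N / (∏ i, ξ i) ^ n, N, (∏ i, MvPolynomial.X i) ^ n, ?_, ?_, ?_⟩
  · simpa using h0
  · simp [← h, mul_comm]
  · simp only [map_pow, map_prod, MvPolynomial.aeval_X]; field_simp

/-- An element with nonzero value at a point where `p` vanishes is not divisible by `p`. -/
theorem Lau.not_dvd {ι F : Type} [Fintype ι] [Field F] [Algebra ℚ F] {g : ι → K} {ξ : ι → F}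
    (hg : AlgebraicIndependent ℚ g)
    (hξ : ∀ i, ξ i ≠ 0) {p a : K} {r : F} (hp : Ev g ξ p 0) (ha : Ev g ξ a r) (hr : r ≠ 0) :
    ¬ DvdIn (Lau g) p a := by
  rintro ⟨c, hc, rfl⟩
  obtain ⟨s, hs⟩ := Lau.ev (ξ := ξ) (fun i => hg.ne_zero i) hξ hc
  have := ha.unique hg (hp.mul hs)
  simp at this
  exact hr this

theorem prime_one_add_X {ι : Type} (i : ι) : Prime (1 + MvPolynomial.X i : MvPolynomial ι ℚ) := by
  classical
  let e : MvPolynomial ι ℚ ≃ₐ[ℚ] MvPolynomial ι ℚ := AlgEquiv.ofAlgHom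
    (MvPolynomial.aeval fun j => if j = i then 1 + MvPolynomial.X j else MvPolynomial.X j)
    (MvPolynomial.aeval fun j => if j = i then MvPolynomial.X j - 1 else MvPolynomial.X j)
    (by
      ext j
      by_cases h : j = i <;> simp [h])
    (by
      ext j
      by_cases h : j = i <;> simp [h])
  have h1 : e (MvPolynomial.X i) = 1 + MvPolynomial.X i := by simp [e]
  rw [← h1]
  exact (MulEquiv.prime_iff e.toMulEquiv).2 (MvPolynomial.X_prime (R := ℚ) (i := i))

/-- In a Laurent polynomial ring, one plus a coordinate is prime. -/
theorem Lau.prime {ι : Type} [Fintype ι] {g : ι → K} (hg : AlgebraicIndependent ℚ g) (i : ι) :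
    PrimeIn (Lau g) (1 + g i) := by
  classical
  have hgi : ∀ i, g i ≠ 0 := fun i => hg.ne_zero i
  set m := ∏ i, g i with hm
  have hm0 : m ≠ 0 := Finset.prod_ne_zero_iff.2 fun i _ => hgi i
  have hX : MvPolynomial.aeval g (1 + MvPolynomial.X i : MvPolynomial ι ℚ) = 1 + g i := by simp
  have hP : MvPolynomial.aeval g (∏ i, MvPolynomial.X i : MvPolynomial ι ℚ) = m := by simp [hm]
  have hmm : Mon (Lau g) m := Mon.prod _ fun k _ => Lau.mon g k
  have hrange : ∀ N : MvPolynomial ι ℚ, MvPolynomial.aeval g N ∈ Lau g := by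
    intro N
    induction N using MvPolynomial.induction_on with
    | C a => simpa using (Lau g).algebraMap_mem a
    | add p q hp hq => simpa using add_mem hp hq
    | mul_X p n hp => simpa using mul_mem hp (Lau.mon g n).1
  refine ⟨?_, add_mem (one_mem _) (Lau.mon g i).1, ?_⟩
  · rw [← hX]
    intro h
    exact (prime_one_add_X i).ne_zero (hg (by simpa using h))
  · rintro a ha b hb ⟨c, hc, habc⟩
    obtain ⟨Na, na, ha'⟩ := Lau.num_den hgi ha
    obtain ⟨Nb, nb, hb'⟩ := Lau.num_den hgi hb
    obtain ⟨Nc, nc, hc'⟩ := Lau.num_den hgi hc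
    rw [← hm] at ha' hb' hc'
    have key : (∏ i, MvPolynomial.X i) ^ nc * (Na * Nb)
        = (1 + MvPolynomial.X i) * ((∏ i, MvPolynomial.X i) ^ (na + nb) * Nc) := by
      apply hg
      simp only [map_mul, map_pow, hP, hX, ← ha', ← hb', ← hc']
      linear_combination m ^ (na + nb + nc) * habc
    have hnX : ¬ (1 + MvPolynomial.X i : MvPolynomial ι ℚ) ∣ (∏ i, MvPolynomial.X i) ^ nc := by
      intro h
      have h2 := (prime_one_add_X i).dvd_of_dvd_pow h
      obtain ⟨q, hq⟩ := h2
      have := congrArg (MvPolynomial.aeval fun _ : ι => (-1 : ℚ)) hq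
      simp [Finset.prod_const] at this
    have fin : ∀ (a : K) (N : MvPolynomial ι ℚ) (n : ℕ), m ^ n * a = MvPolynomial.aeval g N →
        (1 + MvPolynomial.X i : MvPolynomial ι ℚ) ∣ N → ∃ c ∈ Lau g, a = (1 + g i) * c := by
      rintro a N n h ⟨q, rfl⟩
      refine ⟨(m ^ n)⁻¹ * MvPolynomial.aeval g q, mul_mem (hmm.pow n).2 (hrange q), ?_⟩
      rw [map_mul, hX] at h
      field_simp
      linear_combination h
    rcases (prime_one_add_X i).dvd_or_dvd (Dvd.intro _ key.symm) with h | h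
    · exact absurd h hnX
    · rcases (prime_one_add_X i).dvd_or_dvd h with h | h
      · exact Or.inl (fin a Na na ha' h)
      · exact Or.inr (fin b Nb nb hb' h)

open scoped IntermediateField.algebraAdjoinAdjoin in
/-- A family of size at most the transcendence degree which generates the field is algebraically
independent. -/
theorem algInd_of_gen {ι : Type} [Fintype ι] {g g' : ι → K} (hg' : AlgebraicIndependent ℚ g')
    (hg : IntermediateField.adjoin ℚ (Set.range g) = ⊤) : AlgebraicIndependent ℚ g := by
  have halg : Algebra.IsAlgebraic (Algebra.adjoin ℚ (Set.range g)) K := by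
    have h1 : Algebra.IsAlgebraic (IntermediateField.adjoin ℚ (Set.range g)) K := by
      rw [hg]
      exact ⟨fun x => isAlgebraic_algebraMap (⟨x, trivial⟩ : (⊤ : IntermediateField ℚ K))⟩
    exact (IsFractionRing.comap_isAlgebraic_iff (A := Algebra.adjoin ℚ (Set.range g)) (K := IntermediateField.adjoin ℚ (Set.range g)) (C := K)).2 h1
  refine (Algebra.IsAlgebraic.isTranscendenceBasis_of_le_trdeg_of_finite (R := ℚ) g ?_).1
  exact hg'.cardinalMk_le_trdeg

end

/-! ### The system with phased coefficients and its Laurent phenomenon -/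

section
variable {V K : Type} [Fintype V] [Field K]

/-- The coefficient in front of the `A`-monomial: the phase `β t` decides whether the coefficient
variable `Y t v` sits in front of the `A`-monomial, or its inverse in front of the
`B`-monomial. -/
def pc (β : ℕ → Bool) (Y : ℕ → V → K) (t : ℕ) (v : V) : K := if β t then Y t v else 1

/-- The coefficient in front of the `B`-monomial; see `pc`. -/
def qc (β : ℕ → Bool) (Y : ℕ → V → K) (t : ℕ) (v : V) : K := if β t then 1 else (Y t v)⁻¹

/-- The T-system with coefficients `Y`, which themselves evolve multiplicatively by `B` in
the phase `β t = true` and by `A` in the other phase. All pairs `(t, v)` are allowed, so that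
this system is two decoupled copies of a T-system. -/
structure CoefSys (A B : V → V → ℕ) (β : ℕ → Bool) (Y X : ℕ → V → K) : Prop where
  hY : ∀ t v, Y (t + 2) v * Y t v =
    if β (t + 1) then ∏ u, Y (t + 1) u ^ B v u else ∏ u, Y (t + 1) u ^ A v u
  hX : ∀ t v, X (t + 2) v * X t v =
    pc β Y (t + 1) v * ∏ u, X (t + 1) u ^ A v u + qc β Y (t + 1) v * ∏ u, X (t + 1) u ^ B v u

/-- Hypotheses on the pair of matrices which the Laurent phenomenon uses. -/
structure GoodPair (A B : V → V → ℕ) : Prop where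
  symA : ∀ u v, A u v = A v u
  symB : ∀ u v, B u v = B v u
  disj : ∀ u v, A u v = 0 ∨ B u v = 0
  comm : ∀ u v, (∑ w, A u w * B w v) = ∑ w, B u w * A w v

/-- Four families put together into one. -/
def ch {W : Type} (a b c d : V → W) : (V ⊕ V) ⊕ (V ⊕ V) → W := Sum.elim (Sum.elim a b) (Sum.elim c d)

variable {A B : V → V → ℕ} {β : ℕ → Bool} {Y X : ℕ → V → K}

/-- The ratio of the two monomials in the exchange relation at time `t + 1`. -/
def yhat (A B : V → V → ℕ) (Y X : ℕ → V → K) (t : ℕ) (v : V) : K :=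
  Y (t + 1) v * (∏ u, X (t + 1) u ^ A v u) / ∏ u, X (t + 1) u ^ B v u

/-- The second monomial of the exchange relation at time `t + 1`. -/
def mu (B : V → V → ℕ) (β : ℕ → Bool) (Y X : ℕ → V → K) (t : ℕ) (v : V) : K :=
  qc β Y (t + 1) v * ∏ u, X (t + 1) u ^ B v u

/-- The `X`-variables at time `t`, those indexed by `W` moved on to time `t + 2`. -/
def xm [DecidableEq V] (X : ℕ → V → K) (t : ℕ) (W : Finset V) (v : V) : K :=
  if v ∈ W then X (t + 2) v else X t v

theorem pc_eq (hY0 : ∀ t v, Y t v ≠ 0) (t : ℕ) (v : V) : pc β Y t v = Y t v * qc β Y t v := by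
  unfold pc qc
  split
  · simp
  · rw [mul_inv_cancel₀ (hY0 t v)]

theorem qc_ne (hY0 : ∀ t v, Y t v ≠ 0) (t : ℕ) (v : V) : qc β Y t v ≠ 0 := by
  unfold qc
  split
  · simp
  · exact inv_ne_zero (hY0 t v)

theorem CoefSys.exch (h : CoefSys A B β Y X) (hY0 : ∀ t v, Y t v ≠ 0) (hX0 : ∀ t v, X t v ≠ 0)
    (t : ℕ) (v : V) : X (t + 2) v * X t v = mu B β Y X t v * (1 + yhat A B Y X t v) := by
  have hp : (∏ u, X (t + 1) u ^ B v u) ≠ 0 :=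
    Finset.prod_ne_zero_iff.2 fun u _ => pow_ne_zero _ (hX0 _ _)
  rw [h.hX, pc_eq hY0, mu, yhat]
  field_simp
  ring

theorem CoefSys.consistent (h : CoefSys A B β Y X) (hY0 : ∀ t v, Y t v ≠ 0) (t : ℕ) (v : V) :
    Y (t + 2) v * Y t v * ∏ u, qc β Y (t + 1) u ^ A v u = ∏ u, pc β Y (t + 1) u ^ B v u := by
  rw [h.hY]
  unfold pc qc
  by_cases hb : β (t + 1)
  · simp [hb]
  · simp only [hb, if_false, Bool.false_eq_true]
    rw [← Finset.prod_mul_distrib]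
    simp only [inv_pow, one_pow, Finset.prod_const_one]
    exact Finset.prod_eq_one fun u _ => mul_inv_cancel₀ (pow_ne_zero _ (hY0 _ _))

end

section
variable {V K : Type} [Fintype V] [Field K] [Algebra ℚ K]
  {A B : V → V → ℕ} {β : ℕ → Bool} {Y X : ℕ → V → K}

theorem gen_of {ι κ : Type} {g : ι → K} {g' : κ → K}
    (hg : IntermediateField.adjoin ℚ (Set.range g) = ⊤)
    (h : ∀ i, g i ∈ IntermediateField.adjoin ℚ (Set.range g')) :
    IntermediateField.adjoin ℚ (Set.range g') = ⊤ := by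
  rw [eq_top_iff, ← hg, IntermediateField.adjoin_le_iff]
  rintro x ⟨i, rfl⟩
  exact h i

theorem pc_mem {E : IntermediateField ℚ K} {t : ℕ} {v : V} (h : Y t v ∈ E) : pc β Y t v ∈ E := by
  unfold pc; split
  exacts [h, one_mem _]

theorem qc_mem {E : IntermediateField ℚ K} {t : ℕ} {v : V} (h : Y t v ∈ E) : qc β Y t v ∈ E := by
  unfold qc; split
  exacts [one_mem _, inv_mem h]

theorem CoefSys.gen_succ (h : CoefSys A B β Y X) {g' : (V ⊕ V) ⊕ (V ⊕ V) → K}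
    (hg' : AlgebraicIndependent ℚ g') {t : ℕ}
    (hgen : IntermediateField.adjoin ℚ (Set.range (ch (Y t) (Y (t + 1)) (X t) (X (t + 1)))) = ⊤) :
    (∀ v, Y (t + 2) v ≠ 0 ∧ X (t + 2) v ≠ 0) ∧ IntermediateField.adjoin ℚ
      (Set.range (ch (Y (t + 1)) (Y (t + 1 + 1)) (X (t + 1)) (X (t + 1 + 1)))) = ⊤ := by
  have hai := algInd_of_gen hg' hgen
  set g := ch (Y t) (Y (t + 1)) (X t) (X (t + 1)) with hgdef
  have hg0 := fun i => hai.ne_zero i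
  have hY1 : ∀ v, Y (t + 1) v ≠ 0 := fun v => hg0 (Sum.inl (Sum.inr v))
  have hne : ∀ v, Y (t + 2) v ≠ 0 ∧ X (t + 2) v ≠ 0 := by
    intro v
    constructor
    · intro h0
      have := h.hY t v
      rw [h0, zero_mul] at this
      split at this
      · exact Finset.prod_ne_zero_iff.2 (fun u _ => pow_ne_zero _ (hY1 u)) this.symm
      · exact Finset.prod_ne_zero_iff.2 (fun u _ => pow_ne_zero _ (hY1 u)) this.symm
    · intro h0
      have := h.hX t v
      rw [h0, zero_mul] at this
      have hev : ∀ i, Ev g (fun _ => (1 : ℚ)) (g i) 1 := fun i => Ev.X i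
      have e1 : Ev g (fun _ => (1 : ℚ)) (pc β Y (t + 1) v) 1 := by
        unfold pc; split
        · exact hev (Sum.inl (Sum.inr v))
        · exact Ev.one
      have e2 : Ev g (fun _ => (1 : ℚ)) (qc β Y (t + 1) v) 1 := by
        unfold qc; split
        · exact Ev.one
        · have := (hev (Sum.inl (Sum.inr v))).inv hai one_ne_zero
          rwa [inv_one] at this
      have e3 : ∀ A : V → V → ℕ, Ev g (fun _ => (1 : ℚ)) (∏ u, X (t + 1) u ^ A v u) 1 := by
        intro A
        have := Ev.prod (g := g) (ξ := fun _ => (1 : ℚ)) (f := fun u => X (t + 1) u ^ A v u)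
          (r := fun u => 1 ^ A v u) Finset.univ
          fun u _ => (hev (Sum.inr (Sum.inr u))).pow (A v u)
        simpa using this
      have e4 := (e1.mul (e3 A)).add (e2.mul (e3 B))
      rw [← this] at e4
      have := e4.unique hai Ev.zero
      norm_num at this
  refine ⟨hne, gen_of hgen ?_⟩
  set E := IntermediateField.adjoin ℚ
      (Set.range (ch (Y (t + 1)) (Y (t + 1 + 1)) (X (t + 1)) (X (t + 1 + 1))))
  have hE : ∀ i, ch (Y (t + 1)) (Y (t + 1 + 1)) (X (t + 1)) (X (t + 1 + 1)) i ∈ E :=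
    fun i => IntermediateField.subset_adjoin _ _ ⟨i, rfl⟩
  have hEY : ∀ v, Y (t + 1) v ∈ E := fun v => hE (Sum.inl (Sum.inl v))
  have hEX : ∀ v, X (t + 1) v ∈ E := fun v => hE (Sum.inr (Sum.inl v))
  rintro ((v | v) | (v | v))
  · change Y t v ∈ E
    rw [eq_div_of_mul_eq (hne v).1 ((mul_comm _ _).trans (h.hY t v))]
    refine div_mem ?_ (hE (Sum.inl (Sum.inr v)))
    split
    exacts [prod_mem fun u _ => pow_mem (hEY u) _, prod_mem fun u _ => pow_mem (hEY u) _]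
  · exact hEY v
  · change X t v ∈ E
    rw [eq_div_of_mul_eq (hne v).2 ((mul_comm _ _).trans (h.hX t v))]
    refine div_mem ?_ (hE (Sum.inr (Sum.inr v)))
    exact add_mem (mul_mem (pc_mem (hEY v)) (prod_mem fun u _ => pow_mem (hEX u) _))
      (mul_mem (qc_mem (hEY v)) (prod_mem fun u _ => pow_mem (hEX u) _))
  · exact hEX v

theorem CoefSys.gen (h : CoefSys A B β Y X)
    (hai : AlgebraicIndependent ℚ (ch (Y 0) (Y 1) (X 0) (X 1)))
    (hgen : IntermediateField.adjoin ℚ (Set.range (ch (Y 0) (Y 1) (X 0) (X 1))) = ⊤) (t : ℕ) :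
    IntermediateField.adjoin ℚ (Set.range (ch (Y t) (Y (t + 1)) (X t) (X (t + 1)))) = ⊤ := by
  induction t with
  | zero => exact hgen
  | succ t ih => exact (h.gen_succ hai ih).2

theorem CoefSys.ne (h : CoefSys A B β Y X)
    (hai : AlgebraicIndependent ℚ (ch (Y 0) (Y 1) (X 0) (X 1)))
    (hgen : IntermediateField.adjoin ℚ (Set.range (ch (Y 0) (Y 1) (X 0) (X 1))) = ⊤) (t : ℕ)
    (v : V) : Y t v ≠ 0 ∧ X t v ≠ 0 := by
  have := algInd_of_gen hai (h.gen hai hgen t)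
  exact ⟨this.ne_zero (Sum.inl (Sum.inl v)), this.ne_zero (Sum.inr (Sum.inl v))⟩

theorem pc_mon {L : Subalgebra ℚ K} {t : ℕ} {v : V} (h : Mon L (Y t v)) : Mon L (pc β Y t v) := by
  unfold pc; split
  exacts [h, Mon.one]

theorem qc_mon {L : Subalgebra ℚ K} {t : ℕ} {v : V} (h : Mon L (Y t v)) : Mon L (qc β Y t v) := by
  unfold qc; split
  exacts [Mon.one, h.inv]

theorem CoefSys.Y_mon (h : CoefSys A B β Y X) (hY0 : ∀ t v, Y t v ≠ 0) {L : Subalgebra ℚ K} {s : ℕ}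
    (h0 : ∀ v, Mon L (Y s v)) (h1 : ∀ v, Mon L (Y (s + 1) v)) (t : ℕ) (v : V) : Mon L (Y t v) := by
  have up : ∀ r, (∀ v, Mon L (Y r v)) → (∀ v, Mon L (Y (r + 1) v)) → ∀ v, Mon L (Y (r + 2) v) := by
    intro r h0 h1 v
    rw [eq_div_of_mul_eq (hY0 _ _) (h.hY r v)]
    refine Mon.div ?_ (h0 v)
    split
    exacts [Mon.prod _ fun u _ => (h1 u).pow _, Mon.prod _ fun u _ => (h1 u).pow _]
  have down : ∀ r, (∀ v, Mon L (Y (r + 1) v)) → (∀ v, Mon L (Y (r + 2) v)) → ∀ v, Mon L (Y r v) := by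
    intro r h0 h1 v
    rw [eq_div_of_mul_eq (hY0 _ _) ((mul_comm _ _).trans (h.hY r v))]
    refine Mon.div ?_ (h1 v)
    split
    exacts [Mon.prod _ fun u _ => (h0 u).pow _, Mon.prod _ fun u _ => (h0 u).pow _]
  have hdown : ∀ k r, (∀ v, Mon L (Y (r + k) v)) → (∀ v, Mon L (Y (r + k + 1) v)) →
      (∀ v, Mon L (Y r v)) ∧ ∀ v, Mon L (Y (r + 1) v) := by
    intro k
    induction k with
    | zero => exact fun r a b => ⟨a, b⟩
    | succ k ih => exact fun r a b => ih r (down _ a b) a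
  have hup : ∀ r, (∀ v, Mon L (Y r v)) ∧ ∀ v, Mon L (Y (r + 1) v) := by
    intro r
    induction r with
    | zero => exact hdown s 0 (by simpa using h0) (by simpa using h1)
    | succ r ih => exact ⟨ih.2, up r ih.1 ih.2⟩
  exact (hup t).1 v

variable [DecidableEq V]

/-- The Laurent ring of the seed at time `t` in which the variables indexed by `W` have been
exchanged. -/
def LR (Y X : ℕ → V → K) (t : ℕ) (W : Finset V) : Subalgebra ℚ K :=
  Lau (Sum.elim (fun s : ℕ × V => Y s.1 s.2) (Sum.elim (xm X t W) (X (t + 1))))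

theorem LR.monY (t : ℕ) (W : Finset V) (s : ℕ) (v : V) : Mon (LR Y X t W) (Y s v) :=
  Lau.mon (Sum.elim (fun s : ℕ × V => Y s.1 s.2) (Sum.elim (xm X t W) (X (t + 1)))) (Sum.inl (s, v))
theorem LR.monxm (t : ℕ) (W : Finset V) (v : V) : Mon (LR Y X t W) (xm X t W v) :=
  Lau.mon (Sum.elim (fun s : ℕ × V => Y s.1 s.2) (Sum.elim (xm X t W) (X (t + 1))))
    (Sum.inr (Sum.inl v))
theorem LR.monX (t : ℕ) (W : Finset V) (v : V) : Mon (LR Y X t W) (X (t + 1) v) :=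
  Lau.mon (Sum.elim (fun s : ℕ × V => Y s.1 s.2) (Sum.elim (xm X t W) (X (t + 1))))
    (Sum.inr (Sum.inr v))

theorem LR.le {t : ℕ} {W : Finset V} {L : Subalgebra ℚ K} (h1 : ∀ s v, Mon L (Y s v))
    (h2 : ∀ v, Mon L (xm X t W v)) (h3 : ∀ v, Mon L (X (t + 1) v)) : LR Y X t W ≤ L := by
  refine Lau.le ?_
  rintro (⟨s, v⟩ | v | v)
  exacts [h1 s v, h2 v, h3 v]

theorem LR.clear {t : ℕ} {W : Finset V} {L : Subalgebra ℚ K} {d : K} (hd : d ∈ L)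
    (h1 : ∀ s v, Mon L (Y s v))
    (h2 : ∀ v, xm X t W v ∈ L ∧ d * (xm X t W v)⁻¹ ∈ L)
    (h3 : ∀ v, X (t + 1) v ∈ L ∧ d * (X (t + 1) v)⁻¹ ∈ L) {f : K} (hf : f ∈ LR Y X t W) :
    ∃ n : ℕ, d ^ n * f ∈ L := by
  refine Lau.clear hd ?_ hf
  rintro (⟨s, v⟩ | v | v)
  · exact ⟨⟨0, by simpa using (h1 s v).1⟩, ⟨0, by simpa using (h1 s v).2⟩⟩
  · exact ⟨⟨0, by simpa using (h2 v).1⟩, ⟨1, by simpa using (h2 v).2⟩⟩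
  · exact ⟨⟨0, by simpa using (h3 v).1⟩, ⟨1, by simpa using (h3 v).2⟩⟩

/-- Coordinates adapted to the exchange relations at time `t + 1`. -/
def Hch (A B : V → V → ℕ) (Y X : ℕ → V → K) (t : ℕ) (W : Finset V) : (V ⊕ V) ⊕ (V ⊕ V) → K :=
  ch (yhat A B Y X t) (Y (t + 2)) (xm X t W) (X (t + 1))

theorem yhat_mon {L : Subalgebra ℚ K} {t : ℕ} {v : V} (h1 : Mon L (Y (t + 1) v))
    (h2 : ∀ u, Mon L (X (t + 1) u)) : Mon L (yhat A B Y X t v) :=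
  (h1.mul (Mon.prod _ fun u _ => (h2 u).pow _)).div (Mon.prod _ fun u _ => (h2 u).pow _)

theorem mu_mon {L : Subalgebra ℚ K} {t : ℕ} {v : V} (h1 : Mon L (Y (t + 1) v))
    (h2 : ∀ u, Mon L (X (t + 1) u)) : Mon L (mu B β Y X t v) :=
  (qc_mon h1).mul (Mon.prod _ fun u _ => (h2 u).pow _)

theorem Y_eq_yhat (hX0 : ∀ t v, X t v ≠ 0) (t : ℕ) (v : V) :
    Y (t + 1) v = yhat A B Y X t v * (∏ u, X (t + 1) u ^ B v u) / ∏ u, X (t + 1) u ^ A v u := by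
  have hp : ∀ A : V → V → ℕ, (∏ u, X (t + 1) u ^ A v u) ≠ 0 :=
    fun A => Finset.prod_ne_zero_iff.2 fun u _ => pow_ne_zero _ (hX0 _ _)
  have := hp A
  have := hp B
  unfold yhat
  field_simp

/-- The Laurent ring of a seed can be written with `yhat t` in place of `Y (t + 1)`; this makes
`1 + yhat t v` a linear polynomial in a generator. -/
theorem CoefSys.LR_eq (h : CoefSys A B β Y X) (hY0 : ∀ t v, Y t v ≠ 0) (hX0 : ∀ t v, X t v ≠ 0)
    (t : ℕ) (W : Finset V) : LR Y X t W = Lau (Hch A B Y X t W) := by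
  apply le_antisymm
  · have hX1 : ∀ v, Mon (Lau (Hch A B Y X t W)) (X (t + 1) v) :=
      fun v => Lau.mon (Hch A B Y X t W) (Sum.inr (Sum.inr v))
    refine LR.le (h.Y_mon hY0 (s := t + 1) ?_ ?_) ?_ hX1
    · intro v
      rw [Y_eq_yhat (Y := Y) (A := A) (B := B) hX0]
      exact ((Lau.mon (Hch A B Y X t W) (Sum.inl (Sum.inl v))).mul
        (Mon.prod _ fun u _ => (hX1 u).pow _)).div (Mon.prod _ fun u _ => (hX1 u).pow _)
    · exact fun v => Lau.mon (Hch A B Y X t W) (Sum.inl (Sum.inr v))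
    · exact fun v => Lau.mon (Hch A B Y X t W) (Sum.inr (Sum.inl v))
  · refine Lau.le ?_
    rintro ((v | v) | (v | v))
    · exact yhat_mon (LR.monY _ _ _ _) fun u => LR.monX _ _ _
    · exact LR.monY _ _ _ _
    · exact LR.monxm _ _ _
    · exact LR.monX _ _ _

theorem CoefSys.Hch_algInd (h : CoefSys A B β Y X)
    (hai : AlgebraicIndependent ℚ (ch (Y 0) (Y 1) (X 0) (X 1)))
    (hgen : IntermediateField.adjoin ℚ (Set.range (ch (Y 0) (Y 1) (X 0) (X 1))) = ⊤)
    (t : ℕ) (W : Finset V) : AlgebraicIndependent ℚ (Hch A B Y X t W) := by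
  have hX0 : ∀ t v, X t v ≠ 0 := fun t v => (h.ne hai hgen t v).2
  refine algInd_of_gen hai (gen_of (h.gen hai hgen (t + 1)) ?_)
  set E := IntermediateField.adjoin ℚ (Set.range (Hch A B Y X t W))
  have hE : ∀ i, Hch A B Y X t W i ∈ E := fun i => IntermediateField.subset_adjoin _ _ ⟨i, rfl⟩
  have hEX : ∀ v, X (t + 1) v ∈ E := fun v => hE (Sum.inr (Sum.inr v))
  have hEY : ∀ v, Y (t + 1) v ∈ E := by
    intro v
    rw [Y_eq_yhat (Y := Y) (A := A) (B := B) hX0]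
    exact div_mem (mul_mem (hE (Sum.inl (Sum.inl v))) (prod_mem fun u _ => pow_mem (hEX u) _))
      (prod_mem fun u _ => pow_mem (hEX u) _)
  rintro ((v | v) | (v | v))
  · exact hEY v
  · exact hE (Sum.inl (Sum.inr v))
  · exact hEX v
  · change X (t + 2) v ∈ E
    have h1 : xm X t W v ∈ E := hE (Sum.inr (Sum.inl v))
    unfold xm at h1
    split at h1
    · exact h1
    · rw [eq_div_of_mul_eq (hX0 _ _) (h.hX t v)]
      exact div_mem (add_mem (mul_mem (pc_mem (hEY v)) (prod_mem fun u _ => pow_mem (hEX u) _))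
        (mul_mem (qc_mem (hEY v)) (prod_mem fun u _ => pow_mem (hEX u) _))) h1

end

/-! ### Test points at which an exchange factor vanishes -/

section
variable {V K : Type} [Fintype V] [Field K] [Algebra ℚ K] [DecidableEq V]
  {A B : V → V → ℕ} {β : ℕ → Bool} {Y X : ℕ → V → K}

/-- A solution of the system with coefficients whose initial values are free generators of the
field. -/
structure GenSys (A B : V → V → ℕ) (β : ℕ → Bool) (Y X : ℕ → V → K) : Prop where
  sys : CoefSys A B β Y X
  hai : AlgebraicIndependent ℚ (ch (Y 0) (Y 1) (X 0) (X 1))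
  hgen : IntermediateField.adjoin ℚ (Set.range (ch (Y 0) (Y 1) (X 0) (X 1))) = ⊤

namespace GenSys

theorem Y0 (G : GenSys A B β Y X) (t : ℕ) (v : V) : Y t v ≠ 0 := (G.sys.ne G.hai G.hgen t v).1
theorem X0 (G : GenSys A B β Y X) (t : ℕ) (v : V) : X t v ≠ 0 := (G.sys.ne G.hai G.hgen t v).2

theorem H_ai (G : GenSys A B β Y X) (t : ℕ) (W : Finset V) :
    AlgebraicIndependent ℚ (Hch A B Y X t W) := G.sys.Hch_algInd G.hai G.hgen t W

theorem LR_H (G : GenSys A B β Y X) (t : ℕ) (W : Finset V) :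
    LR Y X t W = Lau (Hch A B Y X t W) := G.sys.LR_eq G.Y0 G.X0 t W

theorem prime (G : GenSys A B β Y X) (t : ℕ) (W : Finset V) (v : V) :
    PrimeIn (LR Y X t W) (1 + yhat A B Y X t v) := by
  rw [G.LR_H]
  exact Lau.prime (G.H_ai t W) (Sum.inl (Sum.inl v))

/-- The test point at which `1 + yhat t u` vanishes; the variable of `xm` at `u` gets the
value `c`, all others get the value one. -/
def pt (u : V) (c : ℚ) : (V ⊕ V) ⊕ (V ⊕ V) → ℚ :=
  ch (fun v => if v = u then -1 else 1) (fun _ => 1) (fun v => if v = u then c else 1) fun _ => 1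

theorem pt_ne (u : V) {c : ℚ} (hc : c ≠ 0) (i) : pt u c i ≠ 0 := by
  rcases i with ((v | v) | (v | v))
  · change (if v = u then (-1 : ℚ) else 1) ≠ 0
    split <;> norm_num
  · exact one_ne_zero
  · change (if v = u then c else 1) ≠ 0
    split
    exacts [hc, one_ne_zero]
  · exact one_ne_zero

theorem ev_pi (t : ℕ) (W : Finset V) (u : V) (c : ℚ) (v : V) :
    Ev (Hch A B Y X t W) (pt u c) (1 + yhat A B Y X t v) (if v = u then 0 else 2) := by
  have h := (Ev.one (g := Hch A B Y X t W) (ξ := pt u c)).add (Ev.X (Sum.inl (Sum.inl v)))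
  have e : (1 + pt u c (Sum.inl (Sum.inl v))) = if v = u then 0 else 2 := by
    change (1 + if v = u then (-1 : ℚ) else 1) = _
    split <;> norm_num
  rw [e] at h
  exact h

theorem ev_pi_self (t : ℕ) (W : Finset V) (u : V) (c : ℚ) :
    Ev (Hch A B Y X t W) (pt u c) (1 + yhat A B Y X t u) 0 := by
  simpa using ev_pi (A := A) (B := B) (Y := Y) (X := X) t W u c u

theorem not_dvd (G : GenSys A B β Y X) {t : ℕ} {W : Finset V} {u : V} {a : K} {r c : ℚ}
    (hc : c ≠ 0)
    (ha : Ev (Hch A B Y X t W) (pt u c) a r) (hr : r ≠ 0) :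
    ¬ DvdIn (LR Y X t W) (1 + yhat A B Y X t u) a := by
  rw [G.LR_H]
  exact Lau.not_dvd (G.H_ai t W) (pt_ne u hc) (ev_pi_self t W u c) ha hr

open scoped symmDiff in
/-- Seeds at the same time differ by exchanges, whose factors `1 + yhat` clear the denominators. -/
theorem clear_symmDiff (G : GenSys A B β Y X) (t : ℕ) (W W0 : Finset V) {f : K}
    (hf : f ∈ LR Y X t W0) :
    ∃ n : ℕ, (∏ v ∈ W ∆ W0, (1 + yhat A B Y X t v)) ^ n * f ∈ LR Y X t W := by
  have hp : ∀ v, 1 + yhat A B Y X t v ∈ LR Y X t W := fun v => (G.prime t W v).2.1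
  have hd : ∏ v ∈ W ∆ W0, (1 + yhat A B Y X t v) ∈ LR Y X t W := prod_mem fun v _ => hp v
  refine LR.clear hd (LR.monY t W) ?_ ?_ hf
  · intro v
    by_cases hv : v ∈ W ∆ W0
    · have hx : xm X t W0 v = mu B β Y X t v * (1 + yhat A B Y X t v) / xm X t W v := by
        have h1 := G.sys.exch G.Y0 G.X0 t v
        have h2 := G.X0 t v
        have h3 := G.X0 (t + 2) v
        rw [← h1]
        rcases Finset.mem_symmDiff.1 hv with ⟨a, b⟩ | ⟨a, b⟩ <;> simp [xm, a, b]
        · field_simp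
        · field_simp
      have hm : Mon (LR Y X t W) (mu B β Y X t v) := mu_mon (LR.monY _ _ _ _) (LR.monX t W)
      have hw : Mon (LR Y X t W) (xm X t W v) := LR.monxm _ _ _
      refine ⟨?_, ?_⟩
      · rw [hx, div_eq_mul_inv]
        exact mul_mem (mul_mem hm.1 (hp v)) hw.2
      · rw [hx, ← Finset.mul_prod_erase _ _ hv]
        have : (1 + yhat A B Y X t v) * (∏ x ∈ (W ∆ W0).erase v, (1 + yhat A B Y X t x)) *
            (mu B β Y X t v * (1 + yhat A B Y X t v) / xm X t W v)⁻¹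
            = (∏ x ∈ (W ∆ W0).erase v, (1 + yhat A B Y X t x)) *
              ((mu B β Y X t v)⁻¹ * xm X t W v) := by
          have := (G.prime t W v).1
          rw [inv_div]
          by_cases h0 : mu B β Y X t v = 0
          · simp [h0]
          field_simp
        rw [this]
        exact mul_mem (prod_mem fun v _ => hp v) (mul_mem hm.2 hw.1)
    · have hx : xm X t W0 v = xm X t W v := by
        have : v ∈ W0 ↔ v ∈ W := by
          rw [Finset.mem_symmDiff] at hv; tauto
        simp [xm, this]
      rw [hx]
      exact ⟨(LR.monxm _ _ _).1, mul_mem hd (LR.monxm _ _ _).2⟩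
  · exact fun v => ⟨(LR.monX _ _ _).1, mul_mem hd (LR.monX _ _ _).2⟩

open scoped symmDiff in
/-- An element which is Laurent in one seed at time `t` and in all the seeds one exchange away is
Laurent in all seeds at time `t`. -/
theorem spread (G : GenSys A B β Y X) (t : ℕ) (W0 : Finset V) {f : K} (h0 : f ∈ LR Y X t W0)
    (h1 : ∀ v, f ∈ LR Y X t (W0 ∆ {v})) (W : Finset V) : f ∈ LR Y X t W := by
  obtain ⟨n, hn⟩ := G.clear_symmDiff t W W0 h0
  refine descend_finset _ (fun v _ => G.prime t W v) n hn ?_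
  intro v hv
  obtain ⟨m, hm⟩ := G.clear_symmDiff t W _ (h1 v)
  refine ⟨_, pow_mem (prod_mem fun v _ => (G.prime t W v).2.1) m, ?_, hm⟩
  have hvn : v ∉ W ∆ (W0 ∆ {v}) := by
    simp only [Finset.mem_symmDiff, Finset.mem_singleton] at hv ⊢
    tauto
  refine G.not_dvd (c := 1) one_ne_zero
    ((Ev.prod _ fun x _ => ev_pi t W v 1 x).pow m) ?_
  refine pow_ne_zero _ (Finset.prod_ne_zero_iff.2 fun x hx => ?_)
  rw [if_neg]
  · norm_num
  · rintro rfl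
    exact hvn hx

/-- The subring of elements whose values at the two test points agree. -/
def R0 (A B : V → V → ℕ) (Y X : ℕ → V → K) (t : ℕ) (W : Finset V) (u : V) : Subalgebra ℚ K where
  carrier := {f | f ∈ LR Y X t W ∧ ∃ r : ℚ, Ev (Hch A B Y X t W) (pt u 1) f r ∧
    Ev (Hch A B Y X t W) (pt u 2) f r}
  mul_mem' := by
    rintro a b ⟨h1, r, h2, h3⟩ ⟨k1, s, k2, k3⟩
    exact ⟨mul_mem h1 k1, r * s, h2.mul k2, h3.mul k3⟩
  add_mem' := by
    rintro a b ⟨h1, r, h2, h3⟩ ⟨k1, s, k2, k3⟩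
    exact ⟨add_mem h1 k1, r + s, h2.add k2, h3.add k3⟩
  algebraMap_mem' := fun r => ⟨Subalgebra.algebraMap_mem _ r, r, Ev.C r, Ev.C r⟩

theorem R0_mon (G : GenSys A B β Y X) {t : ℕ} {W : Finset V} {u : V} {f : K} {r : ℚ} (hr : r ≠ 0)
    (h0 : Mon (LR Y X t W) f) (h1 : Ev (Hch A B Y X t W) (pt u 1) f r)
    (h2 : Ev (Hch A B Y X t W) (pt u 2) f r) : Mon (R0 A B Y X t W u) f :=
  ⟨⟨h0.1, r, h1, h2⟩, ⟨h0.2, r⁻¹, h1.inv (G.H_ai t W) hr, h2.inv (G.H_ai t W) hr⟩⟩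

/-- Congruence modulo `z` in a subring. -/
def Cong (R : Subalgebra ℚ K) (z f a : K) : Prop := a ∈ R ∧ ∃ c ∈ R, f = a + z * c

namespace Cong
variable {R : Subalgebra ℚ K} {z f a f' a' : K}
theorem refl (h : a ∈ R) : Cong R z a a := ⟨h, 0, zero_mem _, by simp⟩
theorem mul (hz : z ∈ R) (h : Cong R z f a) (h' : Cong R z f' a') : Cong R z (f * f') (a * a') := by
  obtain ⟨ha, c, hc, rfl⟩ := h
  obtain ⟨ha', c', hc', rfl⟩ := h'
  exact ⟨mul_mem ha ha', a * c' + c * a' + z * c * c', add_mem (add_mem (mul_mem ha hc')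
    (mul_mem hc ha')) (mul_mem (mul_mem hz hc) hc'), by ring⟩
theorem add (h : Cong R z f a) (h' : Cong R z f' a') : Cong R z (f + f') (a + a') := by
  obtain ⟨ha, c, hc, rfl⟩ := h
  obtain ⟨ha', c', hc', rfl⟩ := h'
  exact ⟨add_mem ha ha', c + c', add_mem hc hc', by ring⟩
theorem pow (hz : z ∈ R) (h : Cong R z f a) (n : ℕ) : Cong R z (f ^ n) (a ^ n) := by
  induction n with
  | zero => simpa using refl (one_mem R)
  | succ n ih => simpa [pow_succ] using ih.mul hz h
theorem prod {κ : Type} (hz : z ∈ R) (s : Finset κ) {f a : κ → K}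
    (h : ∀ k ∈ s, Cong R z (f k) (a k)) :
    Cong R z (∏ k ∈ s, f k) (∏ k ∈ s, a k) := by
  classical
  induction s using Finset.induction_on with
  | empty => simpa using refl (one_mem R)
  | insert b s hb ih =>
    rw [Finset.prod_insert hb, Finset.prod_insert hb]
    exact (h b (by simp)).mul hz (ih fun k hk => h k (by simp [hk]))
end Cong

end GenSys
end

/-! ### The variables near an omitted exchange -/

section
variable {V K : Type} [Fintype V] [Field K] [Algebra ℚ K] [DecidableEq V]
  {A B : V → V → ℕ} {β : ℕ → Bool} {Y X : ℕ → V → K}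

namespace GenSys

/-- The set of all vertices but one. -/
abbrev Wu (u : V) : Finset V := Finset.univ.erase u

theorem xm_Wu_self (t : ℕ) (u : V) : xm X t (Wu u) u = X t u := by simp [xm]
theorem xm_Wu_ne (t : ℕ) {u v : V} (h : v ≠ u) : xm X t (Wu u) v = X (t + 2) v := by simp [xm, h]

/-- The subring `R0` for the seed in which only the exchange at `u` has been left out. -/
abbrev RR (A B : V → V → ℕ) (Y X : ℕ → V → K) (t : ℕ) (u : V) : Subalgebra ℚ K :=
  R0 A B Y X t (Wu u) u

theorem z_eq (G : GenSys A B β Y X) (t : ℕ) (u : V) :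
    X (t + 2) u = mu B β Y X t u * (1 + yhat A B Y X t u) / xm X t (Wu u) u := by
  rw [xm_Wu_self, ← G.sys.exch G.Y0 G.X0]
  have := G.X0 t u
  field_simp

theorem z_mem (G : GenSys A B β Y X) (t : ℕ) (u : V) : X (t + 2) u ∈ LR Y X t (Wu u) := by
  rw [G.z_eq, div_eq_mul_inv]
  exact mul_mem (mul_mem (mu_mon (LR.monY _ _ _ _) (LR.monX t _)).1 (G.prime t _ u).2.1)
    (LR.monxm _ _ _).2

theorem z_ev (G : GenSys A B β Y X) (t : ℕ) (u : V) {c : ℚ} (hc : c ≠ 0) :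
    Ev (Hch A B Y X t (Wu u)) (pt u c) (X (t + 2) u) 0 := by
  have h : mu B β Y X t u / xm X t (Wu u) u ∈ Lau (Hch A B Y X t (Wu u)) := by
    rw [← G.LR_H]
    exact ((mu_mon (LR.monY _ _ _ _) (LR.monX t _)).div (LR.monxm _ _ _)).1
  obtain ⟨r, hr⟩ := Lau.ev (ξ := pt u c) (fun i => (G.H_ai t (Wu u)).ne_zero i) (pt_ne u hc) h
  have := hr.mul (ev_pi_self t (Wu u) u c)
  rw [mul_zero] at this
  rw [G.z_eq]
  convert this using 1
  ring

theorem z_RR (G : GenSys A B β Y X) (t : ℕ) (u : V) : X (t + 2) u ∈ RR A B Y X t u :=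
  ⟨G.z_mem t u, 0, G.z_ev t u one_ne_zero, G.z_ev t u two_ne_zero⟩

theorem X1_ev (t : ℕ) (u : V) (c : ℚ) (v : V) :
    Ev (Hch A B Y X t (Wu u)) (pt u c) (X (t + 1) v) 1 := Ev.X (Sum.inr (Sum.inr v))

theorem X1_RR (G : GenSys A B β Y X) (t : ℕ) (u v : V) : Mon (RR A B Y X t u) (X (t + 1) v) :=
  G.R0_mon one_ne_zero (LR.monX _ _ _) (X1_ev t u _ v) (X1_ev t u _ v)

theorem X2_ev (t : ℕ) {u v : V} (h : v ≠ u) (c : ℚ) :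
    Ev (Hch A B Y X t (Wu u)) (pt u c) (X (t + 2) v) 1 := by
  have := Ev.X (g := Hch A B Y X t (Wu u)) (ξ := pt u c) (Sum.inr (Sum.inl v))
  have e1 : Hch A B Y X t (Wu u) (Sum.inr (Sum.inl v)) = X (t + 2) v := xm_Wu_ne t h
  have e2 : pt u c (Sum.inr (Sum.inl v)) = 1 := by
    change (if v = u then c else 1) = 1
    rw [if_neg h]
  rwa [e1, e2] at this

theorem X2_LR (t : ℕ) {u v : V} (h : v ≠ u) : Mon (LR Y X t (Wu u)) (X (t + 2) v) := by
  rw [← xm_Wu_ne (X := X) t h]; exact LR.monxm _ _ _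

theorem X2_RR (G : GenSys A B β Y X) (t : ℕ) {u v : V} (h : v ≠ u) :
    Mon (RR A B Y X t u) (X (t + 2) v) :=
  G.R0_mon one_ne_zero (X2_LR t h) (X2_ev t h _) (X2_ev t h _)

theorem Y2_ev (t : ℕ) (u : V) (c : ℚ) (v : V) :
    Ev (Hch A B Y X t (Wu u)) (pt u c) (Y (t + 2) v) 1 := Ev.X (Sum.inl (Sum.inr v))

theorem yhat_RR (G : GenSys A B β Y X) (t : ℕ) (u v : V) :
    Mon (RR A B Y X t u) (yhat A B Y X t v) := by
  have h : ∀ c, Ev (Hch A B Y X t (Wu u)) (pt u c) (yhat A B Y X t v) (if v = u then -1 else 1) :=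
    fun c => Ev.X (Sum.inl (Sum.inl v))
  refine G.R0_mon ?_ (yhat_mon (LR.monY _ _ _ _) (LR.monX t _)) (h 1) (h 2)
  split <;> norm_num

theorem Y_RR (G : GenSys A B β Y X) (t : ℕ) (u : V) (s : ℕ) (v : V) :
    Mon (RR A B Y X t u) (Y s v) := by
  refine G.sys.Y_mon G.Y0 (s := t + 1) ?_ ?_ s v
  · intro v
    rw [Y_eq_yhat (Y := Y) (A := A) (B := B) G.X0]
    exact ((G.yhat_RR t u v).mul (Mon.prod _ fun x _ => (G.X1_RR t u x).pow _)).div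
      (Mon.prod _ fun x _ => (G.X1_RR t u x).pow _)
  · exact fun v => G.R0_mon one_ne_zero (LR.monY _ _ _ _) (Y2_ev t u _ v) (Y2_ev t u _ v)

/-- The products `X (t+3) v * X (t+1) v` do not vanish at the test point. -/
theorem P_ev (G : GenSys A B β Y X) (hAB : GoodPair A B) (t : ℕ) (u v : V) :
    ∃ r : ℚ, r ≠ 0 ∧ Ev (Hch A B Y X t (Wu u)) (pt u 1) (X (t + 3) v * X (t + 1) v) r := by
  have hx : ∀ x, Ev (Hch A B Y X t (Wu u)) (pt u 1) (X (t + 2) x) (if x = u then 0 else 1) := by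
    intro x
    split
    · next h => subst h; exact G.z_ev t x one_ne_zero
    · next h => exact X2_ev t h _
  have hm : ∀ M : V → V → ℕ, Ev (Hch A B Y X t (Wu u)) (pt u 1) (∏ x, X (t + 2) x ^ M v x)
      (∏ x, (if x = u then 0 else 1) ^ M v x) := fun M => Ev.prod _ fun x _ => (hx x).pow _
  have hp : Ev (Hch A B Y X t (Wu u)) (pt u 1) (pc β Y (t + 2) v) 1 := by
    unfold pc; split
    exacts [Y2_ev t u 1 v, Ev.one]
  have hq : Ev (Hch A B Y X t (Wu u)) (pt u 1) (qc β Y (t + 2) v) 1 := by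
    unfold qc; split
    · exact Ev.one
    · have := (Y2_ev (A := A) (B := B) (X := X) (Y := Y) t u 1 v).inv (G.H_ai t (Wu u)) one_ne_zero
      rwa [inv_one] at this
  have h := (hp.mul (hm A)).add (hq.mul (hm B))
  rw [← G.sys.hX (t + 1) v] at h
  refine ⟨_, ?_, h⟩
  have nn : ∀ A : V → V → ℕ, 0 ≤ ∏ x, (if x = u then (0 : ℚ) else 1) ^ A v x :=
    fun A => Finset.prod_nonneg fun x _ => pow_nonneg (by split <;> norm_num) _
  have one : ∀ A : V → V → ℕ, A v u = 0 → ∏ x, (if x = u then (0 : ℚ) else 1) ^ A v x = 1 := by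
    intro A h
    refine Finset.prod_eq_one fun x _ => ?_
    split
    · next hx => subst hx; rw [h, pow_zero]
    · exact one_pow _
  have hA := nn A
  have hB := nn B
  rcases hAB.disj v u with h | h
  · rw [one A h]; linarith
  · rw [one B h]; linarith

theorem pc_ne (G : GenSys A B β Y X) (t : ℕ) (v : V) : pc β Y t v ≠ 0 := by
  unfold pc; split
  exacts [G.Y0 _ _, one_ne_zero]

/-- A monomial in which `z = X (t+2) u` occurs is divisible by `z`. -/
theorem cong_zero (G : GenSys A B β Y X) (t : ℕ) (u v : V) (M : V → V → ℕ) (h : M v u ≠ 0) {c : K}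
    (hc : c ∈ RR A B Y X t u) :
    Cong (RR A B Y X t u) (X (t + 2) u) (c * ∏ x, X (t + 2) x ^ M v x) 0 := by
  have hm : ∀ x, X (t + 2) x ∈ RR A B Y X t u := by
    intro x
    by_cases hx : x = u
    · subst hx; exact G.z_RR t x
    · exact (G.X2_RR t hx).1
  refine ⟨zero_mem _, c * (X (t + 2) u ^ (M v u - 1) *
    ∏ x ∈ Finset.univ.erase u, X (t + 2) x ^ M v x), ?_, ?_⟩
  · exact mul_mem hc (mul_mem (pow_mem (hm u) _) (prod_mem fun x _ => pow_mem (hm x) _))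
  · rw [← Finset.mul_prod_erase _ _ (Finset.mem_univ u)]
    obtain ⟨k, hk⟩ := Nat.exists_eq_succ_of_ne_zero h
    rw [hk]
    simp only [Nat.succ_sub_one, pow_succ, Nat.succ_eq_add_one]
    ring

/-- Two steps after the omitted exchange, the numerator of the variable at `u` is congruent to its
value for `z = 0`, both for the `A`- and for the `B`-monomial. -/
theorem cong_monomial (G : GenSys A B β Y X) (t : ℕ) (u : V)
    (M M' : V → V → ℕ) (hsym : ∀ u v, M u v = M v u)
    (c c' : V → K) (hc : ∀ v, c v ∈ RR A B Y X t u) (hc' : ∀ v, c' v ∈ RR A B Y X t u)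
    (hx : ∀ v, X (t + 3) v * X (t + 1) v =
      c v * ∏ x, X (t + 2) x ^ M v x + c' v * ∏ x, X (t + 2) x ^ M' v x) :
    Cong (RR A B Y X t u) (X (t + 2) u) (∏ v, X (t + 3) v ^ M u v)
      (∏ v, (c' v * (∏ x, X (t + 2) x ^ M' v x) / X (t + 1) v) ^ M u v) := by
  have hm : ∀ x, X (t + 2) x ∈ RR A B Y X t u := by
    intro x
    by_cases hx : x = u
    · subst hx; exact G.z_RR t x
    · exact (G.X2_RR t hx).1
  refine Cong.prod (G.z_RR t u) _ fun v _ => ?_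
  by_cases h0 : M u v = 0
  · rw [h0, pow_zero, pow_zero]; exact Cong.refl (one_mem _)
  · refine Cong.pow (G.z_RR t u) ?_ _
    have e : X (t + 3) v = (c v * ∏ x, X (t + 2) x ^ M v x + c' v * ∏ x, X (t + 2) x ^ M' v x)
        * (X (t + 1) v)⁻¹ := by
      rw [← hx]
      have := G.X0 (t + 1) v
      field_simp
    rw [e, div_eq_mul_inv]
    refine Cong.mul (G.z_RR t u) ?_ (Cong.refl (G.X1_RR t u v).2)
    have h2 : c' v * ∏ x, X (t + 2) x ^ M' v x ∈ RR A B Y X t u :=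
      mul_mem (hc' v) (prod_mem fun x _ => pow_mem (hm x) (M' v x))
    have := (G.cong_zero t u v M (by rw [hsym]; exact h0) (hc v)).add
      (Cong.refl (z := X (t + 2) u) h2)
    rwa [zero_add] at this

end GenSys
end

/-! ### The variable two exchanges later -/

section
variable {V K : Type} [Fintype V] [Field K] [Algebra ℚ K] [DecidableEq V]
  {A B : V → V → ℕ} {β : ℕ → Bool} {Y X : ℕ → V → K}

theorem prod_prod_pow {M N : V → V → ℕ} (x : V → K) (u : V) :
    ∏ v, (∏ w, x w ^ N v w) ^ M u v = ∏ w, x w ^ (∑ v, M u v * N v w) := by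
  simp only [← Finset.prod_pow, ← pow_mul]
  rw [Finset.prod_comm]
  refine Finset.prod_congr rfl fun w _ => ?_
  rw [Finset.prod_pow_eq_pow_sum]
  exact congrArg _ (Finset.sum_congr rfl fun v _ => mul_comm _ _)

namespace GenSys

/-- The value of `X (t+4) u * X (t+2) u` modulo `z = X (t+2) u`. This is where the commutation of
`A` and `B` enters: both monomials have the same content in the variables at time `t + 2`. -/
theorem leading (G : GenSys A B β Y X) (hAB : GoodPair A B) (t : ℕ) (u : V) :
    pc β Y (t + 3) u *
      (∏ v, (qc β Y (t + 2) v * (∏ x, X (t + 2) x ^ B v x) / X (t + 1) v) ^ A u v) +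
    qc β Y (t + 3) u *
      (∏ v, (pc β Y (t + 2) v * (∏ x, X (t + 2) x ^ A v x) / X (t + 1) v) ^ B u v) =
    (qc β Y (t + 3) u * (∏ v, pc β Y (t + 2) v ^ B u v) *
      (∏ x, X (t + 2) x ^ (∑ v, A u v * B v x)) / (∏ v, X (t + 1) v ^ B u v) /
        yhat A B Y X t u / mu B β Y X t u) * (X (t + 2) u * X t u) := by
  simp only [div_pow, mul_pow, Finset.prod_mul_distrib, Finset.prod_div_distrib, prod_prod_pow]
  rw [show (∏ w, X (t + 2) w ^ ∑ v, B u v * A v w) = ∏ w, X (t + 2) w ^ ∑ v, A u v * B v w from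
    Finset.prod_congr rfl fun w _ => by rw [hAB.comm]]
  rw [G.sys.exch G.Y0 G.X0]
  have hc := G.sys.consistent G.Y0 (t + 1) u
  rw [pc_eq G.Y0 (t + 3) u]
  simp only [show t + 1 + 2 = t + 3 from rfl, show t + 1 + 1 = t + 2 from rfl] at hc
  rw [← hc]
  have hp : ∀ A : V → V → ℕ, (∏ x, X (t + 1) x ^ A u x) ≠ 0 :=
    fun A => Finset.prod_ne_zero_iff.2 fun x _ => pow_ne_zero _ (G.X0 _ _)
  have hA := hp A
  have hB := hp B
  have hY := G.Y0 (t + 1) u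
  have hq := qc_ne (β := β) G.Y0 (t + 1) u
  unfold yhat mu
  generalize (∏ w, X (t + 2) w ^ ∑ v, A u v * B v w) = M
  generalize (∏ x, qc β Y (t + 2) x ^ A u x) = Q
  generalize qc β Y (t + 3) u = q3
  generalize Y (t + 3) u = y3
  field_simp

/-- The variable `X (t+4) u` is affine-linear in the variable `X t u`, modulo the vanishing of
`1 + yhat t u`. -/
theorem affine (G : GenSys A B β Y X) (hAB : GoodPair A B) (t : ℕ) (u : V) :
    ∃ e n : K, e ≠ 0 ∧ Mon (RR A B Y X t u) e ∧ n ∈ RR A B Y X t u ∧ X (t + 4) u = e * X t u + n := by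
  have hpm : ∀ s v, Mon (RR A B Y X t u) (pc β Y s v) := fun s v => pc_mon (G.Y_RR t u s v)
  have hqm : ∀ s v, Mon (RR A B Y X t u) (qc β Y s v) := fun s v => qc_mon (G.Y_RR t u s v)
  have h1 := G.cong_monomial t u A B hAB.symA (fun v => pc β Y (t + 2) v)
    (fun v => qc β Y (t + 2) v) (fun v => (hpm _ v).1) (fun v => (hqm _ v).1)
    (fun v => G.sys.hX (t + 1) v)
  have h2 := G.cong_monomial t u B A hAB.symB (fun v => qc β Y (t + 2) v)
    (fun v => pc β Y (t + 2) v) (fun v => (hqm _ v).1) (fun v => (hpm _ v).1)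
    (fun v => (G.sys.hX (t + 1) v).trans (add_comm _ _))
  obtain ⟨-, n, hn, h⟩ := ((Cong.refl (hpm (t + 3) u).1).mul (G.z_RR t u) h1).add
    ((Cong.refl (hqm (t + 3) u).1).mul (G.z_RR t u) h2)
  have hx : X (t + 4) u * X (t + 2) u = _ := G.sys.hX (t + 2) u
  simp only [show t + 2 + 1 = t + 3 from rfl] at hx
  rw [h, G.leading hAB] at hx
  refine ⟨qc β Y (t + 3) u * (∏ v, pc β Y (t + 2) v ^ B u v) *
    (∏ x, X (t + 2) x ^ (∑ v, A u v * B v x)) / (∏ v, X (t + 1) v ^ B u v) /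
      yhat A B Y X t u / mu B β Y X t u, n, ?_, ?_, hn, ?_⟩
  rotate_left 2
  · apply mul_right_cancel₀ (G.X0 (t + 2) u)
    rw [hx]
    ring
  · have hpr : ∀ A : V → V → ℕ, (∏ x, X (t + 1) x ^ A u x) ≠ 0 :=
      fun A => Finset.prod_ne_zero_iff.2 fun x _ => pow_ne_zero _ (G.X0 _ _)
    refine div_ne_zero (div_ne_zero (div_ne_zero (mul_ne_zero (mul_ne_zero (qc_ne G.Y0 _ _)
      ?_) ?_) (hpr B)) ?_) ?_
    · exact Finset.prod_ne_zero_iff.2 fun x _ => pow_ne_zero _ (G.pc_ne _ _)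
    · exact Finset.prod_ne_zero_iff.2 fun x _ => pow_ne_zero _ (G.X0 _ _)
    · exact div_ne_zero (mul_ne_zero (G.Y0 _ _) (hpr A)) (hpr B)
    · exact mul_ne_zero (qc_ne G.Y0 _ _) (hpr B)
  · refine ((((((hqm _ _).mul (Mon.prod _ fun v _ => (hpm _ v).pow _)).mul
      (Mon.prod _ fun x _ => ?_)).div
      (Mon.prod _ fun v _ => (G.X1_RR t u v).pow _)).div (G.yhat_RR t u u))).div ?_
    · by_cases hxu : x = u
      · -- the exponent of `z` itself is zero
        have : ∑ v, A u v * B v x = 0 := by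
          refine Finset.sum_eq_zero fun v _ => ?_
          rw [hxu, hAB.symB v u]
          rcases hAB.disj u v with h | h <;> simp [h]
        rw [this, pow_zero]
        exact Mon.one
      · exact (G.X2_RR t hxu).pow _
    · exact mu_mon (G.Y_RR t u _ _) (G.X1_RR t u)

/-- The variable `X (t+4) u` is not divisible by `1 + yhat t u` in the seed at time `t` where
only the exchange at `u` has been left out. -/
theorem w_mem (G : GenSys A B β Y X) (hAB : GoodPair A B) (t : ℕ) (u : V) :
    X (t + 4) u ∈ LR Y X t (Wu u) ∧
      ¬ DvdIn (LR Y X t (Wu u)) (1 + yhat A B Y X t u) (X (t + 4) u) := by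
  obtain ⟨e, n, hne, he, hn, h⟩ := G.affine hAB t u
  have hw : X t u ∈ LR Y X t (Wu u) := by
    have := (LR.monxm (Y := Y) (X := X) t (Wu u) u).1
    rwa [xm_Wu_self] at this
  have hwe : ∀ c, Ev (Hch A B Y X t (Wu u)) (pt u c) (X t u) c := by
    intro c
    have := Ev.X (g := Hch A B Y X t (Wu u)) (ξ := pt u c) (Sum.inr (Sum.inl u))
    have e1 : Hch A B Y X t (Wu u) (Sum.inr (Sum.inl u)) = X t u := xm_Wu_self t u
    have e2 : pt u c (Sum.inr (Sum.inl u)) = c := by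
      change (if u = u then c else 1) = c
      rw [if_pos rfl]
    rwa [e1, e2] at this
  refine ⟨by rw [h]; exact add_mem (mul_mem he.1.1 hw) hn.1, ?_⟩
  rintro hdvd
  obtain ⟨⟨-, ε, he1, he2⟩, ⟨-, ε', he1', -⟩⟩ := he
  obtain ⟨-, ν, hn1, hn2⟩ := hn
  have k1 := (he1.mul (hwe 1)).add hn1
  have k2 := (he2.mul (hwe 2)).add hn2
  rw [← h] at k1 k2
  have z1 : ε * 1 + ν = 0 := by
    by_contra h0
    exact G.not_dvd one_ne_zero k1 h0 hdvd
  have z2 : ε * 2 + ν = 0 := by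
    by_contra h0
    exact G.not_dvd two_ne_zero k2 h0 hdvd
  have e0 : ε = 0 := by linarith
  have := (he1.mul he1').unique (G.H_ai t (Wu u)) (by rw [mul_inv_cancel₀ hne]; exact Ev.one)
  rw [e0, zero_mul] at this
  exact zero_ne_one this

end GenSys
end

/-! ### Propagation of Laurentness between seeds -/

section
variable {V K : Type} [Fintype V] [Field K] [Algebra ℚ K] [DecidableEq V]
  {A B : V → V → ℕ} {β : ℕ → Bool} {Y X : ℕ → V → K}

theorem PrimeIn.not_dvd_mul {L : Subalgebra ℚ K} {p : K} (hp : PrimeIn L p) {a b : K} (ha : a ∈ L)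
    (hb : b ∈ L) (hpa : ¬ DvdIn L p a) (hpb : ¬ DvdIn L p b) : ¬ DvdIn L p (a * b) :=
  fun h => (hp.2.2 a ha b hb h).elim hpa hpb

namespace GenSys

/-- An element which is Laurent in the full seed at time `t + 1` and in the seed at time `t + 2`
with `u` exchanged is Laurent in the seed at time `t` where only the exchange at `u` is left out:
the first membership confines the denominator to powers of `1 + yhat t u`, the second to elements
prime to it. -/
theorem back_step (G : GenSys A B β Y X) (hAB : GoodPair A B) (t : ℕ) (u : V) {f : K}
    (h1 : f ∈ LR Y X (t + 1) ∅) (h2 : f ∈ LR Y X (t + 2) {u}) : f ∈ LR Y X t (Wu u) := by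
  set L := LR Y X t (Wu u) with hL
  set p := 1 + yhat A B Y X t u with hp
  have hprime : PrimeIn L p := G.prime t (Wu u) u
  have hYL : ∀ s v, Mon L (Y s v) := LR.monY t _
  have hX1 : ∀ v, Mon L (X (t + 1) v) := LR.monX t _
  have hX2m : ∀ v, v ≠ u → Mon L (X (t + 2) v) := fun v hv => X2_LR t hv
  have hX2 : ∀ v, X (t + 2) v ∈ L := by
    intro v
    by_cases hv : v = u
    · subst hv; exact G.z_mem t v
    · exact (hX2m v hv).1
  obtain ⟨n, hn⟩ : ∃ n : ℕ, p ^ n * f ∈ L := by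
    refine LR.clear hprime.2.1 hYL ?_ ?_ h1
    · intro v
      rw [show xm X (t + 1) ∅ v = X (t + 1) v by simp [xm]]
      exact ⟨(hX1 v).1, mul_mem hprime.2.1 (hX1 v).2⟩
    · intro v
      refine ⟨hX2 v, ?_⟩
      by_cases hv : v = u
      · subst hv
        have h0 := hprime.1
        have : p * (X (t + 1 + 1) v)⁻¹ = (mu B β Y X t v)⁻¹ * xm X t (Wu v) v := by
          have hz := G.z_eq t v
          rw [← hp] at hz
          rw [show t + 1 + 1 = t + 2 from rfl, hz, inv_div, div_eq_mul_inv, mul_inv]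
          field_simp
        rw [this]
        exact mul_mem (mu_mon (hYL _ _) hX1).2 (LR.monxm _ _ _).1
      · exact mul_mem hprime.2.1 (hX2m v hv).2
  have hP : ∀ v, X (t + 3) v * X (t + 1) v ∈ L := by
    intro v
    rw [show t + 3 = t + 1 + 2 from rfl, G.sys.hX (t + 1) v]
    exact add_mem (mul_mem (pc_mon (hYL _ _)).1 (prod_mem fun x _ => pow_mem (hX2 x) _))
      (mul_mem (qc_mon (hYL _ _)).1 (prod_mem fun x _ => pow_mem (hX2 x) _))
  have hX3 : ∀ v, X (t + 3) v ∈ L := by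
    intro v
    have : X (t + 3) v = X (t + 3) v * X (t + 1) v * (X (t + 1) v)⁻¹ := by
      have := G.X0 (t + 1) v
      field_simp
    rw [this]
    exact mul_mem (hP v) (hX1 v).2
  obtain ⟨hw, hwd⟩ := G.w_mem hAB t u
  have hprod : ∏ v, (X (t + 3) v * X (t + 1) v) ∈ L := prod_mem fun v _ => hP v
  have hd : (∏ v, (X (t + 3) v * X (t + 1) v)) * X (t + 4) u ∈ L := mul_mem hprod hw
  obtain ⟨m, hm⟩ : ∃ m : ℕ, ((∏ v, (X (t + 3) v * X (t + 1) v)) * X (t + 4) u) ^ m * f ∈ L := by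
    refine LR.clear hd hYL ?_ ?_ h2
    · intro v
      by_cases hv : v = u
      · subst hv
        rw [show xm X (t + 2) {v} v = X (t + 4) v by simp [xm]]
        refine ⟨hw, ?_⟩
        rwa [mul_inv_cancel_right₀ (G.X0 _ _)]
      · rw [show xm X (t + 2) {u} v = X (t + 2) v by simp [xm, hv]]
        exact ⟨hX2 v, mul_mem hd (hX2m v hv).2⟩
    · intro v
      refine ⟨hX3 v, ?_⟩
      have : (∏ v, (X (t + 3) v * X (t + 1) v)) * X (t + 4) u * (X (t + 2 + 1) v)⁻¹ =
          X (t + 1) v * (∏ x ∈ Finset.univ.erase v, (X (t + 3) x * X (t + 1) x)) *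
            X (t + 4) u := by
        rw [← Finset.mul_prod_erase _ _ (Finset.mem_univ v)]
        have h3 : X (t + 3) v ≠ 0 := G.X0 _ _
        rw [show t + 2 + 1 = t + 3 from rfl]
        field_simp
      rw [this]
      exact mul_mem (mul_mem (hX1 v).1 (prod_mem fun x _ => hP x)) hw
  refine hprime.descend (pow_mem hd m) ?_ hm n hn
  have h1' : ¬ DvdIn L p 1 := G.not_dvd (c := 1) one_ne_zero Ev.one one_ne_zero
  refine hprime.not_dvd_pow h1' hd (hprime.not_dvd_mul hprod hw ?_ hwd) m
  choose r hr0 hr using fun v => G.P_ev hAB t u v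
  exact G.not_dvd (c := 1) one_ne_zero (Ev.prod _ fun v _ => hr v)
    (Finset.prod_ne_zero_iff.2 fun v _ => hr0 v)

/-- Membership in all Laurent rings at two consecutive times passes to the preceding time. -/
theorem down_step (G : GenSys A B β Y X) (hAB : GoodPair A B) (t : ℕ) {f : K}
    (h1 : ∀ W, f ∈ LR Y X (t + 1) W) (h2 : ∀ W, f ∈ LR Y X (t + 2) W) (W : Finset V) :
    f ∈ LR Y X t W := by
  refine G.spread t Finset.univ ?_ (fun v => ?_) W
  · refine LR.le (LR.monY t _) (fun v => ?_) (fun v => ?_) (h1 ∅)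
    · rw [show xm X (t + 1) ∅ v = X (t + 1) v by simp [xm]]
      exact LR.monX _ _ _
    · have := LR.monxm (Y := Y) (X := X) t Finset.univ v
      rwa [show xm X t Finset.univ v = X (t + 2) v by simp [xm]] at this
  · have := G.back_step hAB t v (h1 ∅) (h2 {v})
    convert this using 2
    ext x
    simp [Finset.mem_symmDiff]

/-- The Laurent phenomenon: all variables are Laurent polynomials in the initial data. -/
theorem laurent (G : GenSys A B β Y X) (hAB : GoodPair A B) (t : ℕ) (v : V) :
    X t v ∈ Lau (ch (Y 0) (Y 1) (X 0) (X 1)) := by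
  have key : ∀ s, (∀ W, X (s + 1) v ∈ LR Y X s W) ∧ ∀ W, X (s + 1) v ∈ LR Y X (s + 1) W := by
    intro s
    refine ⟨fun W => (LR.monX _ _ _).1, fun W => ?_⟩
    by_cases hv : v ∈ W
    · have hx : X (s + 1) v = mu B β Y X (s + 1) v * (1 + yhat A B Y X (s + 1) v) *
          (xm X (s + 1) W v)⁻¹ := by
        rw [← G.sys.exch G.Y0 G.X0]
        have := G.X0 (s + 1 + 2) v
        simp only [xm, hv, if_true]
        field_simp
      rw [hx]
      exact mul_mem (mul_mem (mu_mon (LR.monY _ _ _ _) (LR.monX _ W)).1 (G.prime _ W _).2.1)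
        (LR.monxm _ _ _).2
    · have := (LR.monxm (Y := Y) (X := X) (s + 1) W v).1
      rwa [show xm X (s + 1) W v = X (s + 1) v by simp [xm, hv]] at this
  have down : ∀ s f, (∀ W, f ∈ LR Y X s W) → (∀ W, f ∈ LR Y X (s + 1) W) → f ∈ LR Y X 0 ∅ := by
    intro s
    induction s with
    | zero => exact fun f h _ => h ∅
    | succ s ih => exact fun f h1 h2 => ih f (G.down_step hAB s h1 h2) h1
  have hle : LR Y X 0 ∅ ≤ Lau (ch (Y 0) (Y 1) (X 0) (X 1)) := by
    refine LR.le (G.sys.Y_mon G.Y0 (s := 0) ?_ ?_) ?_ ?_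
    · exact fun v => Lau.mon (ch (Y 0) (Y 1) (X 0) (X 1)) (Sum.inl (Sum.inl v))
    · exact fun v => Lau.mon (ch (Y 0) (Y 1) (X 0) (X 1)) (Sum.inl (Sum.inr v))
    · intro v
      rw [show xm X 0 ∅ v = X 0 v by simp [xm]]
      exact Lau.mon (ch (Y 0) (Y 1) (X 0) (X 1)) (Sum.inr (Sum.inl v))
    · exact fun v => Lau.mon (ch (Y 0) (Y 1) (X 0) (X 1)) (Sum.inr (Sum.inr v))
  rcases t with _ | s
  · exact (Lau.mon (ch (Y 0) (Y 1) (X 0) (X 1)) (Sum.inr (Sum.inl v))).1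
  · exact hle (down s _ (key s).1 (key s).2)

end GenSys
end

/-! ### Solutions with prescribed initial data -/

section
variable {V : Type} [Fintype V]

/-- The solution `(Y t, X t)` of the system with coefficients, from its initial data
`Y 0, Y 1, X 0, X 1`. -/
def sol {F : Type} [Field F] (A B : V → V → ℕ) (β : ℕ → Bool) (ξ : (V ⊕ V) ⊕ (V ⊕ V) → F) :
    ℕ → (V → F) × (V → F)
  | 0 => (fun v => ξ (Sum.inl (Sum.inl v)), fun v => ξ (Sum.inr (Sum.inl v)))
  | 1 => (fun v => ξ (Sum.inl (Sum.inr v)), fun v => ξ (Sum.inr (Sum.inr v)))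
  | t + 2 =>
    (fun v => (if β (t + 1) then ∏ u, (sol A B β ξ (t + 1)).1 u ^ B v u
        else ∏ u, (sol A B β ξ (t + 1)).1 u ^ A v u) / (sol A B β ξ t).1 v,
      fun v => ((if β (t + 1) then (sol A B β ξ (t + 1)).1 v else 1) *
          ∏ u, (sol A B β ξ (t + 1)).2 u ^ A v u +
        (if β (t + 1) then 1 else ((sol A B β ξ (t + 1)).1 v)⁻¹) *
          ∏ u, (sol A B β ξ (t + 1)).2 u ^ B v u) / (sol A B β ξ t).2 v)

variable {A B : V → V → ℕ} {β : ℕ → Bool}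

theorem sol_pos {ξ : (V ⊕ V) ⊕ (V ⊕ V) → ℝ} (hξ : ∀ i, 0 < ξ i) (t : ℕ) :
    (∀ v, 0 < (sol A B β ξ t).1 v) ∧ ∀ v, 0 < (sol A B β ξ t).2 v := by
  induction t using Nat.strong_induction_on with
  | _ t ih =>
    match t, ih with
    | 0, _ => exact ⟨fun v => hξ _, fun v => hξ _⟩
    | 1, _ => exact ⟨fun v => hξ _, fun v => hξ _⟩
    | t + 2, ih =>
      obtain ⟨y0, x0⟩ := ih t (by omega)
      obtain ⟨y1, x1⟩ := ih (t + 1) (by omega)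
      have hy : ∀ (M : V → V → ℕ) v, 0 < ∏ u, (sol A B β ξ (t + 1)).1 u ^ M v u :=
        fun M v => Finset.prod_pos fun u _ => pow_pos (y1 u) _
      have hx : ∀ (M : V → V → ℕ) v, 0 < ∏ u, (sol A B β ξ (t + 1)).2 u ^ M v u :=
        fun M v => Finset.prod_pos fun u _ => pow_pos (x1 u) _
      constructor <;> intro v <;> rw [sol]
      · refine div_pos ?_ (y0 v)
        split
        exacts [hy B v, hy A v]
      · refine div_pos ?_ (x0 v)
        have h1 := y1 v
        have h2 := inv_pos.2 (y1 v)
        split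
        · have := mul_pos h1 (hx A v); have := hx B v; positivity
        · have := mul_pos h2 (hx B v); have := hx A v; positivity

theorem sol_sys {F : Type} [Field F] {ξ : (V ⊕ V) ⊕ (V ⊕ V) → F}
    (h : ∀ t v, (sol A B β ξ t).1 v ≠ 0 ∧ (sol A B β ξ t).2 v ≠ 0) :
    CoefSys A B β (fun t => (sol A B β ξ t).1) (fun t => (sol A B β ξ t).2) := by
  constructor
  · intro t v
    rw [sol]
    exact div_mul_cancel₀ _ (h t v).1
  · intro t v
    rw [sol]
    exact div_mul_cancel₀ _ (h t v).2

theorem sol_sys_real {ξ : (V ⊕ V) ⊕ (V ⊕ V) → ℝ} (hξ : ∀ i, 0 < ξ i) :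
    CoefSys A B β (fun t => (sol A B β ξ t).1) (fun t => (sol A B β ξ t).2) :=
  sol_sys fun t v => ⟨((sol_pos hξ t).1 v).ne', ((sol_pos hξ t).2 v).ne'⟩

theorem CoefSys.eq_sol {F : Type} [Field F] {Y X : ℕ → V → F} (h : CoefSys A B β Y X)
    (hY0 : ∀ t v, Y t v ≠ 0) (hX0 : ∀ t v, X t v ≠ 0) (t : ℕ) :
    Y t = (sol A B β (ch (Y 0) (Y 1) (X 0) (X 1)) t).1 ∧
      X t = (sol A B β (ch (Y 0) (Y 1) (X 0) (X 1)) t).2 := by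
  induction t using Nat.strong_induction_on with
  | _ t ih =>
    match t, ih with
    | 0, _ => exact ⟨rfl, rfl⟩
    | 1, _ => exact ⟨rfl, rfl⟩
    | t + 2, ih =>
      obtain ⟨y0, x0⟩ := ih t (by omega)
      obtain ⟨y1, x1⟩ := ih (t + 1) (by omega)
      constructor <;> ext v <;> rw [sol, ← y1, ← y0] <;> try rw [← x1, ← x0]
      · exact eq_div_of_mul_eq (hY0 t v) (h.hY t v)
      · exact eq_div_of_mul_eq (hX0 t v) (h.hX t v)

theorem sol_ev {K : Type} [Field K] [Algebra ℚ K] {g : (V ⊕ V) ⊕ (V ⊕ V) → K}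
    (hg : AlgebraicIndependent ℚ g) {ξ : (V ⊕ V) ⊕ (V ⊕ V) → ℝ} (hξ : ∀ i, 0 < ξ i) (t : ℕ) :
    (∀ v, Ev g ξ ((sol A B β g t).1 v) ((sol A B β ξ t).1 v)) ∧
      ∀ v, Ev g ξ ((sol A B β g t).2 v) ((sol A B β ξ t).2 v) := by
  induction t using Nat.strong_induction_on with
  | _ t ih =>
    match t, ih with
    | 0, _ => exact ⟨fun v => Ev.X _, fun v => Ev.X _⟩
    | 1, _ => exact ⟨fun v => Ev.X _, fun v => Ev.X _⟩
    | t + 2, ih =>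
      obtain ⟨y0, x0⟩ := ih t (by omega)
      obtain ⟨y1, x1⟩ := ih (t + 1) (by omega)
      constructor <;> intro v <;> rw [sol, sol]
      · refine Ev.div hg ?_ (y0 v) ((sol_pos hξ t).1 v).ne'
        split
        exacts [Ev.prod _ fun u _ => (y1 u).pow _, Ev.prod _ fun u _ => (y1 u).pow _]
      · refine Ev.div hg ?_ (x0 v) ((sol_pos hξ t).2 v).ne'
        refine Ev.add (Ev.mul ?_ (Ev.prod _ fun u _ => (x1 u).pow _))
          (Ev.mul ?_ (Ev.prod _ fun u _ => (x1 u).pow _))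
        · split
          exacts [y1 v, Ev.one]
        · split
          exacts [Ev.one, (y1 v).inv hg ((sol_pos hξ _).1 v).ne']

/-- The Laurent phenomenon for positive real data. -/
theorem laurent_real [DecidableEq V] (hAB : GoodPair A B) (β : ℕ → Bool) (t : ℕ) (v : V) :
    ∃ (N : MvPolynomial ((V ⊕ V) ⊕ (V ⊕ V)) ℚ) (n : ℕ), ∀ ξ : (V ⊕ V) ⊕ (V ⊕ V) → ℝ,
      (∀ i, 0 < ξ i) → (∏ i, ξ i) ^ n * (sol A B β ξ t).2 v = MvPolynomial.aeval ξ N := by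
  let K := FractionRing (MvPolynomial ((V ⊕ V) ⊕ (V ⊕ V)) ℚ)
  let g : (V ⊕ V) ⊕ (V ⊕ V) → K := fun i => algebraMap (MvPolynomial ((V ⊕ V) ⊕ (V ⊕ V)) ℚ) K (MvPolynomial.X i)
  have hg : AlgebraicIndependent ℚ g := by
    have h0 := MvPolynomial.algebraicIndependent_X ((V ⊕ V) ⊕ (V ⊕ V)) ℚ
    have := h0.map' (f := IsScalarTower.toAlgHom ℚ (MvPolynomial ((V ⊕ V) ⊕ (V ⊕ V)) ℚ) K)
      (IsFractionRing.injective _ _)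
    exact this
  have hgen : IntermediateField.adjoin ℚ (Set.range g) = ⊤ := by
    rw [eq_top_iff]
    rintro x -
    obtain ⟨a, b, hb, rfl⟩ := IsFractionRing.div_surjective (A := MvPolynomial ((V ⊕ V) ⊕ (V ⊕ V)) ℚ) x
    have hm : ∀ a : MvPolynomial ((V ⊕ V) ⊕ (V ⊕ V)) ℚ, algebraMap _ K a ∈
        IntermediateField.adjoin ℚ (Set.range g) := by
      intro a
      induction a using MvPolynomial.induction_on with
      | C a =>
        rw [← MvPolynomial.algebraMap_eq, ← IsScalarTower.algebraMap_apply]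
        exact IntermediateField.algebraMap_mem _ _
      | add p q hp hq => rw [map_add]; exact add_mem hp hq
      | mul_X p i hp => rw [map_mul]; exact mul_mem hp (IntermediateField.subset_adjoin _ _ ⟨i, rfl⟩)
    exact div_mem (hm a) (hm b)
  have hone : ∀ i, 0 < (fun _ => 1 : (V ⊕ V) ⊕ (V ⊕ V) → ℝ) i := fun _ => one_pos
  have hne : ∀ t v, (sol A B β g t).1 v ≠ 0 ∧ (sol A B β g t).2 v ≠ 0 := by
    intro t v
    constructor
    · intro h0
      have := (sol_ev (A := A) (B := B) (β := β) hg hone t).1 v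
      rw [h0] at this
      exact ((sol_pos hone t).1 v).ne' (this.unique hg Ev.zero)
    · intro h0
      have := (sol_ev (A := A) (B := B) (β := β) hg hone t).2 v
      rw [h0] at this
      exact ((sol_pos hone t).2 v).ne' (this.unique hg Ev.zero)
  have hch : ch (sol A B β g 0).1 (sol A B β g 1).1 (sol A B β g 0).2 (sol A B β g 1).2 = g := by
    ext ((v | v) | (v | v)) <;> rfl
  have G : GenSys A B β (fun t => (sol A B β g t).1) (fun t => (sol A B β g t).2) :=
    ⟨sol_sys hne, by rw [hch]; exact hg, by rw [hch]; exact hgen⟩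
  have hL := G.laurent hAB t v
  rw [hch] at hL
  obtain ⟨N, n, hN⟩ := Lau.num_den (fun i => hg.ne_zero i) hL
  refine ⟨N, n, fun ξ hξ => ?_⟩
  have h1 := Ev.poly (g := g) (ξ := ξ) N
  rw [← hN] at h1
  exact ((((Ev.prod _ fun i _ => Ev.X i).pow n).mul ((sol_ev hg hξ t).2 v)).unique hg h1)

end

/-! ### Degeneration of the coefficients and periodicity over the positive reals -/

section
variable {V : Type} [Fintype V]

/-- The matrix which governs the linear recursion in a given phase. -/
def ph (A B : V → V → ℕ) (b : Bool) : V → V → ℕ := if b then B else A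

/-- The solution of the linear recursion `ρ (t+2) + ρ t = M ρ (t+1)`, where `M` is `B` or `A`
according to the phase. -/
def lin {R : Type} [AddCommGroup R] (A B : V → V → ℕ) (β : ℕ → Bool) (a0 a1 : V → R) : ℕ → V → R
  | 0 => a0
  | 1 => a1
  | t + 2 => fun v => ∑ u, ph A B (β (t + 1)) v u • lin A B β a0 a1 (t + 1) u - lin A B β a0 a1 t v

/-- Being a solution of the phased linear recursion. -/
def IsLin {R : Type} [AddCommGroup R] (A B : V → V → ℕ) (β : ℕ → Bool) (ρ : ℕ → V → R) : Prop :=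
  ∀ t v, ρ (t + 2) v + ρ t v = ∑ u, ph A B (β (t + 1)) v u • ρ (t + 1) u

theorem lin_isLin {R : Type} [AddCommGroup R] (A B : V → V → ℕ) (β : ℕ → Bool) (a0 a1 : V → R) :
    IsLin A B β (lin A B β a0 a1) := by
  intro t v
  rw [lin, sub_add_cancel]

/-- Exponents `r` of the coefficients `s ^ r` which have the sign prescribed by the phase, together
with a common period `P` of the phased linear recursion. -/
structure Phased (A B : V → V → ℕ) (β : ℕ → Bool) (r : ℕ → V → ℤ) (P : ℕ) : Prop where
  lin : IsLin A B β r
  pos : ∀ t v, β t = true → 0 < r t v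
  neg : ∀ t v, β t = false → r t v < 0
  hP : 0 < P
  perβ : ∀ t, β (t + P) = β t
  perr : ∀ t v, r (t + P) v = r t v
  per : ∀ ρ : ℕ → V → ℝ, IsLin A B β ρ → ρ P = ρ 0 ∧ ρ (P + 1) = ρ 1

variable {A B : V → V → ℕ} {β : ℕ → Bool} {r : ℕ → V → ℤ} {P : ℕ}

/-- Initial data: coefficients `s ^ r`, variables `x`. -/
noncomputable def dat (r : ℕ → V → ℤ) (x : V ⊕ V → ℝ) (s : ℝ) : (V ⊕ V) ⊕ (V ⊕ V) → ℝ :=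
  ch (fun v => s ^ r 0 v) (fun v => s ^ r 1 v) (fun v => x (Sum.inl v)) fun v => x (Sum.inr v)

/-- The solution with coefficients `s ^ r` and initial variables `x`. -/
noncomputable def val (A B : V → V → ℕ) (β : ℕ → Bool) (r : ℕ → V → ℤ) (x : V ⊕ V → ℝ) (s : ℝ) (t : ℕ) (v : V) :
    ℝ := (sol A B β (dat r x s) t).2 v

theorem dat_pos {x : V ⊕ V → ℝ} (hx : ∀ i, 0 < x i) {s : ℝ} (hs : 0 < s) (i) : 0 < dat r x s i := by
  rcases i with ((v | v) | (v | v))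
  exacts [zpow_pos hs _, zpow_pos hs _, hx _, hx _]

theorem val_pos {x : V ⊕ V → ℝ} (hx : ∀ i, 0 < x i) {s : ℝ} (hs : 0 < s) (t : ℕ) (v : V) :
    0 < val A B β r x s t v := (sol_pos (dat_pos hx hs) t).2 v

theorem prod_zpow_pow {s : ℝ} (hs : 0 < s) (f : V → ℤ) (M : V → ℕ) :
    ∏ u, (s ^ f u) ^ M u = s ^ ∑ u, M u • f u := by
  have h : ∀ T : Finset V, ∏ u ∈ T, (s ^ f u) ^ M u = s ^ ∑ u ∈ T, M u • f u := by
    classical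
    intro T
    induction T using Finset.induction_on with
    | empty => simp
    | insert a T ha ih =>
      rw [Finset.prod_insert ha, Finset.sum_insert ha, zpow_add₀ hs.ne', ih, ← zpow_natCast,
        ← zpow_mul, nsmul_eq_mul, mul_comm (f a)]
  exact h _

theorem zpow_coef (hr : IsLin A B β r) {s : ℝ} (hs : 0 < s) (t : ℕ) (v : V) :
    s ^ r (t + 2) v * s ^ r t v =
      if β (t + 1) then ∏ u, (s ^ r (t + 1) u) ^ B v u else ∏ u, (s ^ r (t + 1) u) ^ A v u := by
  rw [← zpow_add₀ hs.ne', hr t v, prod_zpow_pow hs, prod_zpow_pow hs]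
  unfold ph
  split <;> rfl

theorem sol_coef (hr : IsLin A B β r) {x : V ⊕ V → ℝ} (hx : ∀ i, 0 < x i) {s : ℝ} (hs : 0 < s)
    (t : ℕ) : ∀ v, (sol A B β (dat r x s) t).1 v = s ^ r t v := by
  induction t using Nat.strong_induction_on with
  | _ t ih =>
    match t, ih with
    | 0, _ => exact fun v => rfl
    | 1, _ => exact fun v => rfl
    | t + 2, ih =>
      intro v
      apply mul_right_cancel₀ ((sol_pos (dat_pos hx hs) t).1 v).ne' (a := (sol A B β (dat r x s) (t + 2)).1 v)
      rw [(sol_sys_real (dat_pos hx hs)).hY t v, ih t (by omega), zpow_coef hr hs]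
      simp only [ih (t + 1) (by omega)]

theorem val_rec (hr : IsLin A B β r) {x : V ⊕ V → ℝ} (hx : ∀ i, 0 < x i) {s : ℝ} (hs : 0 < s)
    (t : ℕ) (v : V) : val A B β r x s (t + 2) v * val A B β r x s t v =
      (if β (t + 1) then s ^ r (t + 1) v else 1) * ∏ u, val A B β r x s (t + 1) u ^ A v u +
      (if β (t + 1) then 1 else s ^ (-r (t + 1) v)) * ∏ u, val A B β r x s (t + 1) u ^ B v u := by
  have := (sol_sys_real (A := A) (B := B) (β := β) (dat_pos (r := r) hx hs)).hX t v
  unfold val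
  rw [this]
  simp only [pc, qc, sol_coef hr hx hs, zpow_neg]

/-- A positive solution is determined by its initial values. -/
theorem val_unique (hr : IsLin A B β r) {X : ℕ → V → ℝ} {s : ℝ} (hs : 0 < s) (T : ℕ)
    (hX0 : ∀ t v, 0 < X t v)
    (hX : ∀ t, t + 2 ≤ T → ∀ v, X (t + 2) v * X t v =
      (if β (t + 1) then s ^ r (t + 1) v else 1) * ∏ u, X (t + 1) u ^ A v u +
      (if β (t + 1) then 1 else s ^ (-r (t + 1) v)) * ∏ u, X (t + 1) u ^ B v u) (t : ℕ) (ht : t ≤ T) :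
    ∀ v, X t v = val A B β r (Sum.elim (X 0) (X 1)) s t v := by
  have hx : ∀ i, 0 < Sum.elim (X 0) (X 1) i := by rintro (v | v) <;> exact hX0 _ _
  induction t using Nat.strong_induction_on with
  | _ t ih =>
    match t, ih with
    | 0, _ => exact fun v => rfl
    | 1, _ => exact fun v => rfl
    | t + 2, ih =>
      intro v
      apply mul_right_cancel₀ (hX0 t v).ne'
      rw [hX t ht, ih t (by omega) (by omega), val_rec hr hx hs]
      simp only [ih (t + 1) (by omega) (by omega)]

end

/-! ### Polynomials and Laurent polynomials in one parameter -/

section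
open Polynomial Filter Topology

/-- Polynomials of degree less than `m` do not converge pointwise to `s ^ m`. -/
theorem not_tendsto_pow {m : ℕ} {p : ℝ → ℝ[X]} (hp : ∀ c, 0 < c → (p c).natDegree < m)
    (h : ∀ s : ℝ, 0 < s → Tendsto (fun c => (p c).eval s) (𝓝[>] 0) (𝓝 (s ^ m))) : False := by
  have h1 : ∀ q : ℝ → ℝ, (fwdDiff 1)^[m] q 1 =
      ∑ k ∈ Finset.range (m + 1), ((-1 : ℤ) ^ (m - k) * m.choose k) • q (1 + k • 1) :=
    fun q => fwdDiff_iter_eq_sum_shift 1 q m 1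
  have h2 : Tendsto (fun c => (fwdDiff 1)^[m] (p c).eval 1) (𝓝[>] 0)
      (𝓝 ((fwdDiff 1)^[m] (fun s : ℝ => s ^ m) 1)) := by
    simp only [h1]
    refine tendsto_finsetSum _ fun k _ => ?_
    simp only [zsmul_eq_mul]
    exact (h _ (by positivity)).const_mul _
  rw [fwdDiff_iter_eq_factorial] at h2
  have h3 : Tendsto (fun c => (fwdDiff 1)^[m] (p c).eval 1) (𝓝[>] 0) (𝓝 0) := by
    refine (tendsto_congr' ?_).2 tendsto_const_nhds
    filter_upwards [self_mem_nhdsWithin] with c hc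
    rw [Polynomial.fwdDiff_iter_eq_zero_of_degree_lt (hp c hc)]
    rfl
  have := tendsto_nhds_unique h2 h3
  simp [Nat.factorial_ne_zero] at this

/-- A polynomial which is bounded by a multiple of `s ^ d` for large `s` has degree at most `d`. -/
theorem natDegree_le_of_bound {p : ℝ[X]} {d : ℕ} {C : ℝ} (h : ∀ s : ℝ, 1 ≤ s → p.eval s ≤ C * s ^ d)
    (h0 : ∀ s : ℝ, 1 ≤ s → 0 ≤ p.eval s) : p.natDegree ≤ d := by
  by_contra hlt
  have hdeg : (X ^ d : ℝ[X]).degree < p.degree := by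
    rw [degree_X_pow]
    rw [natDegree_le_iff_degree_le, not_le] at hlt
    exact hlt
  have h1 := Polynomial.abs_div_tendsto_atTop_atTop_of_degree_gt p (X ^ d) hdeg
    (pow_ne_zero _ X_ne_zero)
  obtain ⟨s, hs1, hs⟩ := ((h1.eventually_gt_atTop C).and (eventually_ge_atTop 1)).exists
  have hsd : 0 < s ^ d := pow_pos (by linarith) d
  rw [eval_pow, eval_X, abs_of_nonneg (div_nonneg (h0 s hs) hsd.le), lt_div_iff₀ hsd] at hs1
  exact absurd (h s hs) (not_le.2 hs1)

/-- A polynomial of degree at most `d` which is `o(s ^ d)` at zero vanishes. -/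
theorem eq_zero_of_tendsto {q : ℝ[X]} {d : ℕ} (hq : q.natDegree ≤ d)
    (h : Tendsto (fun s => q.eval s / s ^ d) (𝓝[>] 0) (𝓝 0)) : q = 0 := by
  by_contra h0
  obtain ⟨q1, hq1, hnd⟩ := Polynomial.exists_eq_pow_rootMultiplicity_mul_and_not_dvd q h0 0
  set k := rootMultiplicity 0 q with hk
  have hkd : k ≤ d := by
    have : k ≤ q.natDegree := by
      have h2 : (X - C 0 : ℝ[X]) ^ k ∣ q := ⟨q1, hq1⟩
      have := natDegree_le_of_dvd h2 h0
      simpa using this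
    omega
  obtain ⟨j, rfl⟩ := Nat.exists_eq_add_of_le hkd
  have hj : Tendsto (fun s : ℝ => s ^ j) (𝓝[>] 0) (𝓝 (0 ^ j)) :=
    ((continuous_pow j).tendsto 0).mono_left nhdsWithin_le_nhds
  have h1 : Tendsto (fun s => q1.eval s) (𝓝[>] 0) (𝓝 (0 * 0 ^ j)) := by
    refine (tendsto_congr' ?_).1 (h.mul hj)
    filter_upwards [self_mem_nhdsWithin] with s (hs : 0 < s)
    rw [hq1, pow_add]
    simp only [map_zero, sub_zero, eval_mul, eval_pow, eval_X]
    field_simp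
  have h2 : Tendsto (fun s => q1.eval s) (𝓝[>] 0) (𝓝 (q1.eval 0)) :=
    (q1.continuous.tendsto 0).mono_left nhdsWithin_le_nhds
  have h3 := tendsto_nhds_unique h1 h2
  rw [zero_mul] at h3
  exact hnd (dvd_iff_isRoot.2 h3.symm)

/-- Laurent polynomials in one variable `s`: `s ^ E * f s` is polynomial for `s > 0`. -/
def LP (E : ℕ) (f : ℝ → ℝ) : Prop := ∃ p : ℝ[X], ∀ s, 0 < s → s ^ E * f s = p.eval s

theorem LP.mul {E E' : ℕ} {f f' : ℝ → ℝ} (h : LP E f) (h' : LP E' f') :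
    LP (E + E') fun s => f s * f' s := by
  obtain ⟨p, hp⟩ := h
  obtain ⟨q, hq⟩ := h'
  refine ⟨p * q, fun s hs => ?_⟩
  rw [eval_mul, ← hp s hs, ← hq s hs]
  ring

theorem LP.mono {E E' : ℕ} {f : ℝ → ℝ} (h : LP E f) (hE : E ≤ E') : LP E' f := by
  obtain ⟨p, hp⟩ := h
  refine ⟨X ^ (E' - E) * p, fun s hs => ?_⟩
  rw [eval_mul, ← hp s hs, eval_pow, eval_X, ← mul_assoc, ← pow_add, Nat.sub_add_cancel hE]

theorem LP.add {E E' : ℕ} {f f' : ℝ → ℝ} (h : LP E f) (h' : LP E' f') :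
    LP (E + E') fun s => f s + f' s := by
  obtain ⟨p, hp⟩ := h.mono (Nat.le_add_right E E')
  obtain ⟨q, hq⟩ := h'.mono (Nat.le_add_left E' E)
  refine ⟨p + q, fun s hs => ?_⟩
  rw [eval_add, ← hp s hs, ← hq s hs]
  ring

theorem LP.zpow (c : ℝ) (a : ℤ) : LP a.natAbs fun s => c * s ^ a := by
  refine ⟨C c * X ^ (a.natAbs + a).toNat, fun s hs => ?_⟩
  rw [eval_mul, eval_C, eval_pow, eval_X]
  have h : ((a.natAbs + a).toNat : ℤ) = a.natAbs + a := by omega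
  rw [← zpow_natCast s (a.natAbs + a).toNat, h, zpow_add₀ hs.ne', zpow_natCast]
  ring

theorem LP.pow {E : ℕ} {f : ℝ → ℝ} (h : LP E f) (n : ℕ) : LP (n * E) fun s => f s ^ n := by
  obtain ⟨p, hp⟩ := h
  refine ⟨p ^ n, fun s hs => ?_⟩
  rw [eval_pow, ← hp s hs, mul_pow, ← pow_mul, mul_comm n]

variable {V : Type} [Fintype V]

theorem LP.aeval {ι : Type} (N : MvPolynomial ι ℚ) (a : ι → ℤ) :
    ∃ E : ℕ, ∀ c : ι → ℝ, LP E fun s => MvPolynomial.aeval (fun i => c i * s ^ a i) N := by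
  induction N using MvPolynomial.induction_on with
  | C q => exact ⟨0, fun c => ⟨Polynomial.C (q : ℝ), fun s hs => by simp⟩⟩
  | add p q hp hq =>
    obtain ⟨E, hE⟩ := hp
    obtain ⟨E', hE'⟩ := hq
    refine ⟨E + E', fun c => ?_⟩
    simp only [map_add]
    exact (hE c).add (hE' c)
  | mul_X p i hp =>
    obtain ⟨E, hE⟩ := hp
    refine ⟨E + (a i).natAbs, fun c => ?_⟩
    simp only [map_mul, MvPolynomial.aeval_X]
    exact (hE c).mul (LP.zpow _ _)

theorem LP.prod {ι : Type} [Fintype ι] (a : ι → ℤ) :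
    ∃ E : ℕ, ∀ c : ι → ℝ, LP E fun s => ∏ i, (c i * s ^ a i) := by
  obtain ⟨E, hE⟩ := LP.aeval (∏ i, MvPolynomial.X i) a
  exact ⟨E, fun c => by simpa using hE c⟩

/-- Along one-parameter families `c * s ^ a` of initial data all variables are Laurent polynomials
in `s`, with a denominator which depends on the exponents `a` only. -/
theorem laurent_dir [DecidableEq V] {A B : V → V → ℕ} (hAB : GoodPair A B) (β : ℕ → Bool) (t : ℕ)
    (v : V) (a : (V ⊕ V) ⊕ (V ⊕ V) → ℤ) : ∃ E : ℕ, ∀ c : (V ⊕ V) ⊕ (V ⊕ V) → ℝ, (∀ i, 0 < c i) →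
      LP E fun s => (sol A B β (fun i => c i * s ^ a i) t).2 v := by
  obtain ⟨N, n, hN⟩ := laurent_real hAB β t v
  obtain ⟨E1, h1⟩ := LP.aeval N a
  obtain ⟨E2, h2⟩ := LP.prod fun i => -a i
  refine ⟨E1 + n * E2, fun c hc => ?_⟩
  obtain ⟨p, hp⟩ := (h1 c).mul ((h2 fun i => (c i)⁻¹).pow n)
  refine ⟨p, fun s hs => ?_⟩
  rw [← hp s hs]
  simp only
  rw [← hN _ fun i => mul_pos (hc i) (zpow_pos hs _)]
  have : (∏ i, (c i)⁻¹ * s ^ (-a i)) = (∏ i, c i * s ^ a i)⁻¹ := by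
    rw [← Finset.prod_inv_distrib]
    refine Finset.prod_congr rfl fun i _ => ?_
    rw [mul_inv, zpow_neg]
  have h0 : (∏ i, c i * s ^ a i) ≠ 0 :=
    Finset.prod_ne_zero_iff.2 fun i _ => (mul_pos (hc i) (zpow_pos hs _)).ne'
  simp only [this, inv_pow]
  field_simp

theorem laurent_val [DecidableEq V] {A B : V → V → ℕ} (hAB : GoodPair A B) (β : ℕ → Bool)
    (r : ℕ → V → ℤ) (t : ℕ) (v : V) (a : V ⊕ V → ℤ) :
    ∃ E : ℕ, ∀ x : V ⊕ V → ℝ, (∀ i, 0 < x i) → ∀ c : ℝ, 0 < c →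
      LP E fun s => val A B β r (fun i => x i * s ^ a i) (c * s) t v := by
  obtain ⟨E, hE⟩ := laurent_dir hAB β t v
    (ch (r 0) (r 1) (fun v => a (Sum.inl v)) fun v => a (Sum.inr v))
  refine ⟨E, fun x hx c hc => ?_⟩
  obtain ⟨p, hp⟩ := hE (dat r x c) (dat_pos hx hc)
  refine ⟨p, fun s hs => ?_⟩
  rw [← hp s hs]
  have : dat r (fun i => x i * s ^ a i) (c * s) = fun i => dat r x c i *
      s ^ (ch (r 0) (r 1) (fun v => a (Sum.inl v)) (fun v => a (Sum.inr v)) i) := by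
    ext ((v | v) | (v | v))
    · exact mul_zpow _ _ _
    · exact mul_zpow _ _ _
    · rfl
    · rfl
  simp only [val, this]

end

/-! ### Degeneration limits and growth exponents -/

section
open Polynomial Filter Topology
variable {V : Type} [Fintype V] {A B : V → V → ℕ} {β : ℕ → Bool} {r : ℕ → V → ℤ} {P : ℕ}

theorem tendsto_zpow_pos {k : ℤ} (hk : 0 < k) :
    Tendsto (fun c : ℝ => c ^ k) (𝓝[>] 0) (𝓝 0) := by
  obtain ⟨n, rfl⟩ := Int.eq_ofNat_of_zero_le hk.le
  have hn : n ≠ 0 := by rintro rfl; simp at hk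
  have : Tendsto (fun c : ℝ => c ^ n) (𝓝[>] 0) (𝓝 (0 ^ n)) :=
    ((continuous_pow n).tendsto 0).mono_left nhdsWithin_le_nhds
  rw [zero_pow hn] at this
  simpa using this

/-- When the coefficients degenerate, only the monomial prescribed by the phase survives in the
exchange relations, and the logarithms of the variables follow the phased linear recursion. -/
theorem val_tendsto (h : Phased A B β r P) {x : V ⊕ V → ℝ} (hx : ∀ i, 0 < x i) (t : ℕ) :
    ∀ v, Tendsto (fun c => val A B β r x c t v) (𝓝[>] 0)
      (𝓝 (Real.exp (lin A B β (fun v => Real.log (x (Sum.inl v)))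
        (fun v => Real.log (x (Sum.inr v))) t v))) := by
  induction t using Nat.strong_induction_on with
  | _ t ih =>
    match t, ih with
    | 0, _ =>
      intro v
      simp only [lin, Real.exp_log (hx _)]
      exact tendsto_const_nhds
    | 1, _ =>
      intro v
      simp only [lin, Real.exp_log (hx _)]
      exact tendsto_const_nhds
    | t + 2, ih =>
      intro v
      set ρ := lin A B β (fun v => Real.log (x (Sum.inl v))) (fun v => Real.log (x (Sum.inr v)))
        with hρ
      have h0 := ih t (by omega) v
      have h1 := ih (t + 1) (by omega)
      have hp : ∀ M : V → V → ℕ, Tendsto (fun c => ∏ u, val A B β r x c (t + 1) u ^ M v u)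
          (𝓝[>] 0) (𝓝 (∏ u, Real.exp (ρ (t + 1) u) ^ M v u)) :=
        fun M => tendsto_finsetProd _ fun u _ => (h1 u).pow _
      have he : ∀ M : V → V → ℕ, (∏ u, Real.exp (ρ (t + 1) u) ^ M v u) =
          Real.exp (∑ u, M v u • ρ (t + 1) u) := by
        intro M
        rw [Real.exp_sum]
        refine Finset.prod_congr rfl fun u _ => ?_
        rw [nsmul_eq_mul, Real.exp_nat_mul]
      have hmain : Tendsto (fun c =>
          ((if β (t + 1) then c ^ r (t + 1) v else 1) * ∏ u, val A B β r x c (t + 1) u ^ A v u +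
          (if β (t + 1) then 1 else c ^ (-r (t + 1) v)) * ∏ u, val A B β r x c (t + 1) u ^ B v u) /
            val A B β r x c t v) (𝓝[>] 0) (𝓝 (Real.exp (ρ (t + 2) v))) := by
        have hl : ρ (t + 2) v = (∑ u, ph A B (β (t + 1)) v u • ρ (t + 1) u) - ρ t v := by
          rw [hρ, lin]
        rw [hl, Real.exp_sub]
        refine Tendsto.div ?_ h0 (Real.exp_pos _).ne'
        by_cases hb : β (t + 1) = true
        · simp only [hb, ph, if_true]
          have := ((tendsto_zpow_pos (h.pos (t + 1) v hb)).mul (hp A)).add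
            ((hp B).const_mul 1)
          rw [he B, zero_mul, zero_add, one_mul] at this
          exact this
        · have hb' : β (t + 1) = false := by simpa using hb
          simp only [hb', ph, if_false, Bool.false_eq_true]
          have hn : 0 < -r (t + 1) v := by have := h.neg (t + 1) v hb'; omega
          have := ((hp A).const_mul 1).add ((tendsto_zpow_pos hn).mul (hp B))
          rw [he A, zero_mul, add_zero, one_mul] at this
          exact this
      refine (tendsto_congr' ?_).1 hmain
      filter_upwards [self_mem_nhdsWithin] with c (hc : 0 < c)
      rw [← val_rec h.lin hx hc, mul_div_cancel_right₀ _ (val_pos hx hc t v).ne']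

/-- `f s` has the order of magnitude of `s ^ k` for `s ≥ 1`. -/
def IsPow (f : ℝ → ℝ) (k : ℤ) : Prop :=
  ∃ C : ℝ, 0 < C ∧ ∀ s : ℝ, 1 ≤ s → s ^ k ≤ C * f s ∧ f s ≤ C * s ^ k

namespace IsPow
variable {f g : ℝ → ℝ} {k l : ℤ}

theorem congr (h : IsPow f k) (hfg : ∀ s, 1 ≤ s → f s = g s) : IsPow g k := by
  obtain ⟨C, hC, h⟩ := h
  exact ⟨C, hC, fun s hs => by rw [← hfg s hs]; exact h s hs⟩

theorem const {c : ℝ} (hc : 0 < c) : IsPow (fun _ => c) 0 := by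
  refine ⟨c + c⁻¹, by positivity, fun s _ => ?_⟩
  have : c⁻¹ * c = 1 := inv_mul_cancel₀ hc.ne'
  have h2 : 0 < c⁻¹ := by positivity
  rw [zpow_zero, add_mul]
  constructor
  · nlinarith
  · linarith

theorem pos (h : IsPow f k) {s : ℝ} (hs : 1 ≤ s) : 0 < f s := by
  obtain ⟨C, hC, h⟩ := h
  have h1 := (h s hs).1
  have h2 : 0 < s ^ k := zpow_pos (by linarith) k
  exact pos_of_mul_pos_right (h2.trans_le h1) hC.le

theorem mul (hf : IsPow f k) (hg : IsPow g l) : IsPow (fun s => f s * g s) (k + l) := by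
  have hf0 := fun s hs => hf.pos (s := s) hs
  have hg0 := fun s hs => hg.pos (s := s) hs
  obtain ⟨C, hC, h⟩ := hf
  obtain ⟨D, hD, k⟩ := hg
  refine ⟨C * D, by positivity, fun s hs => ?_⟩
  have hs0 : 0 < s := by linarith
  have p1 := zpow_pos hs0
  rw [zpow_add₀ hs0.ne']
  have a := h s hs
  have b := k s hs
  constructor
  · calc _ ≤ (C * f s) * (D * g s) := mul_le_mul a.1 b.1 (p1 _).le (by have := hf0 s hs; positivity)
      _ = _ := by ring
  · calc _ ≤ (C * s ^ _) * (D * s ^ _) := mul_le_mul a.2 b.2 (hg0 s hs).le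
          (by have := p1; positivity)
      _ = _ := by ring

theorem inv (hf : IsPow f k) : IsPow (fun s => (f s)⁻¹) (-k) := by
  have hf0 := fun s hs => hf.pos (s := s) hs
  obtain ⟨C, hC, h⟩ := hf
  refine ⟨C, hC, fun s hs => ?_⟩
  have hs0 : 0 < s := by linarith
  have p1 := zpow_pos hs0 k
  have a := h s hs
  have b := hf0 s hs
  rw [zpow_neg]
  constructor
  · rw [inv_le_iff_one_le_mul₀ p1, mul_assoc, ← div_eq_inv_mul, ← mul_div_assoc, le_div_iff₀ b]
    linarith [a.2]
  · rw [inv_le_iff_one_le_mul₀ b, mul_assoc, ← div_eq_inv_mul, ← mul_div_assoc, le_div_iff₀ p1]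
    linarith [a.1]

theorem id : IsPow (fun s => s) 1 := ⟨1, one_pos, fun s _ => by simp⟩

theorem pow (hf : IsPow f k) (n : ℕ) : IsPow (fun s => f s ^ n) (n * k) := by
  induction n with
  | zero => simpa using const one_pos
  | succ n ih =>
    have := ih.mul hf
    simp only [← pow_succ] at this
    convert this using 1
    push_cast
    ring

theorem zpow (hf : IsPow f k) (n : ℤ) : IsPow (fun s => f s ^ n) (n * k) := by
  obtain ⟨m, rfl | rfl⟩ := n.eq_nat_or_neg
  · simpa using hf.pow m
  · have := (hf.pow m).inv
    simp only [zpow_neg, zpow_natCast]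
    convert this using 1
    ring

theorem prod {κ : Type} (S : Finset κ) {f : κ → ℝ → ℝ} {k : κ → ℤ} (h : ∀ i, IsPow (f i) (k i)) :
    IsPow (fun s => ∏ i ∈ S, f i s) (∑ i ∈ S, k i) := by
  classical
  induction S using Finset.induction_on with
  | empty => simpa using const one_pos
  | insert a S ha ih =>
    simp only [Finset.prod_insert ha, Finset.sum_insert ha]
    exact (h a).mul ih

theorem add (hf : IsPow f k) (hg : IsPow g l) : IsPow (fun s => f s + g s) (max k l) := by
  have hf0 := fun s hs => hf.pos (s := s) hs
  have hg0 := fun s hs => hg.pos (s := s) hs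
  obtain ⟨C, hC, h⟩ := hf
  obtain ⟨D, hD, h'⟩ := hg
  refine ⟨C + D, by positivity, fun s hs => ?_⟩
  have a := h s hs
  have b := h' s hs
  have c := hf0 s hs
  have d := hg0 s hs
  have m1 : s ^ k ≤ s ^ max k l := zpow_le_zpow_right₀ hs (le_max_left _ _)
  have m2 : s ^ l ≤ s ^ max k l := zpow_le_zpow_right₀ hs (le_max_right _ _)
  constructor
  · rcases max_choice k l with h | h <;> rw [h]
    · nlinarith [mul_pos hD c, mul_pos hD d, mul_pos hC d]
    · nlinarith [mul_pos hD c, mul_pos hC c, mul_pos hC d]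
  · nlinarith [mul_le_mul_of_nonneg_left m1 hC.le, mul_le_mul_of_nonneg_left m2 hD.le]

theorem le_of_le (hf : IsPow f k) (hg : IsPow f l) : k ≤ l := by
  obtain ⟨C, hC, h⟩ := hf
  obtain ⟨D, hD, h'⟩ := hg
  by_contra! hlt
  -- at a large `s`, the power `s ^ (l + 1)` exceeds `C * D * s ^ l`
  set s := C * D + 1 with hs
  have hs1 : 1 ≤ s := by have := mul_pos hC hD; linarith
  have hs0 : 0 < s := by linarith
  have a := (h s hs1).1
  have b := (h' s hs1).2
  have c : s ^ (l + 1) ≤ s ^ k := zpow_le_zpow_right₀ hs1 (by omega)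
  rw [zpow_add_one₀ hs0.ne'] at c
  have p := zpow_pos hs0 l
  have e : C * f s ≤ C * (D * s ^ l) := mul_le_mul_of_nonneg_left b hC.le
  nlinarith

theorem unique (hf : IsPow f k) (hg : IsPow f l) : k = l := le_antisymm (hf.le_of_le hg) (hg.le_of_le hf)

end IsPow

/-- The growth exponents of the variables, for initial variables with growth exponents `a`. -/
def trop (A B : V → V → ℕ) (β : ℕ → Bool) (r : ℕ → V → ℤ) (a : V ⊕ V → ℤ) : ℕ → V → ℤ
  | 0 => fun v => a (Sum.inl v)
  | 1 => fun v => a (Sum.inr v)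
  | t + 2 => fun v =>
    max ((if β (t + 1) then r (t + 1) v else 0) + ∑ u, A v u * trop A B β r a (t + 1) u)
      ((if β (t + 1) then 0 else -r (t + 1) v) + ∑ u, B v u * trop A B β r a (t + 1) u) -
    trop A B β r a t v

theorem val_isPow (hr : IsLin A B β r) {a : V ⊕ V → ℤ} {x : ℝ → V ⊕ V → ℝ}
    (hx : ∀ i, IsPow (fun s => x s i) (a i)) {c : ℝ} (hc : 0 < c) (t : ℕ) :
    ∀ v, IsPow (fun s => val A B β r (x s) (c * s) t v) (trop A B β r a t v) := by
  induction t using Nat.strong_induction_on with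
  | _ t ih =>
    match t, ih with
    | 0, _ => exact fun v => hx _
    | 1, _ => exact fun v => hx _
    | t + 2, ih =>
      intro v
      have h0 := ih t (by omega) v
      have h1 := ih (t + 1) (by omega)
      have hp : ∀ M : V → V → ℕ, IsPow (fun s => ∏ u, val A B β r (x s) (c * s) (t + 1) u ^ M v u)
          (∑ u, M v u * trop A B β r a (t + 1) u) :=
        fun M => IsPow.prod _ fun u => (h1 u).pow _
      have hz : ∀ n : ℤ, IsPow (fun s => (c * s) ^ n) n := by
        intro n
        have := ((IsPow.const hc).mul IsPow.id).zpow n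
        simpa using this
      have hmain := (((show IsPow (fun s => if β (t + 1) then (c * s) ^ r (t + 1) v else 1)
          (if β (t + 1) then r (t + 1) v else 0) by
            split
            exacts [hz _, IsPow.const one_pos]).mul (hp A)).add
        ((show IsPow (fun s => if β (t + 1) then 1 else (c * s) ^ (-r (t + 1) v))
          (if β (t + 1) then 0 else -r (t + 1) v) by
            split
            exacts [IsPow.const one_pos, hz _]).mul (hp B))).mul h0.inv
      simp only [trop]
      rw [sub_eq_add_neg]
      refine hmain.congr fun s hs => ?_
      have hs0 : 0 < c * s := by have : 0 < s := by linarith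
                                 positivity
      have hxs : ∀ i, 0 < x s i := fun i => (hx i).pos hs
      rw [← val_rec hr hxs hs0, mul_inv_cancel_right₀ (val_pos hxs hs0 t v).ne']

end

/-! ### Periodicity of phased systems -/

section
open Polynomial Filter Topology
variable {V : Type} [Fintype V] {A B : V → V → ℕ} {β : ℕ → Bool} {r : ℕ → V → ℤ} {P : ℕ}

/-- If a variable degenerates to the `i`-th initial variable, then its growth exponent is at least
that of the `i`-th initial variable: otherwise the Laurent phenomenon would exhibit a monomial
`s ^ m` as a pointwise limit of polynomials of smaller degree. -/
theorem trop_ge [DecidableEq V] (hAB : GoodPair A B) (h : Phased A B β r P) {t : ℕ} {v : V} {i : V ⊕ V}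
    (hlim : ∀ x : V ⊕ V → ℝ, (∀ i, 0 < x i) →
      Tendsto (fun c => val A B β r x c t v) (𝓝[>] 0) (𝓝 (x i))) (a : V ⊕ V → ℤ) :
    a i ≤ trop A B β r a t v := by
  by_contra! hlt
  set τ := trop A B β r a t v with hτ
  obtain ⟨E, hE⟩ := laurent_val hAB β r t v a
  set E' := E + (a i).natAbs + τ.natAbs with hE'
  have hE1 : ∀ c : ℝ, ∃ p : ℝ[X], 0 < c → ∀ s : ℝ, 0 < s →
      s ^ E' * val A B β r (fun j => 1 * s ^ a j) (c * s) t v = p.eval s := by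
    intro c
    by_cases hc : 0 < c
    · obtain ⟨p, hp⟩ := (hE (fun _ => 1) (fun _ => one_pos) c hc).mono (show E ≤ E' by omega)
      exact ⟨p, fun _ => hp⟩
    · exact ⟨0, fun h => absurd h hc⟩
  choose p hp using hE1
  obtain ⟨m, hm⟩ : ∃ m : ℕ, (m : ℤ) = E' + a i := ⟨(E' + a i).toNat, by omega⟩
  obtain ⟨d, hd⟩ : ∃ d : ℕ, (d : ℤ) = E' + τ := ⟨(E' + τ).toNat, by omega⟩
  have hpos : ∀ s : ℝ, 0 < s → ∀ j, 0 < 1 * s ^ a j := fun s hs j => by positivity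
  refine not_tendsto_pow (m := m) (p := p) (fun c hc => ?_) fun s hs => ?_
  · have hI : IsPow (fun s => val A B β r (fun j => 1 * s ^ a j) (c * s) t v) τ := by
      refine val_isPow (x := fun s j => 1 * s ^ a j) h.lin (fun j => ?_) hc t v
      simpa using IsPow.id.zpow (a j)
    obtain ⟨C, hC, hI⟩ := hI
    have : (p c).natDegree ≤ d := by
      refine natDegree_le_of_bound (C := C) (fun s hs => ?_) fun s hs => ?_
      · have hs0 : 0 < s := by linarith
        rw [← hp c hc s hs0, ← zpow_natCast s d, hd, zpow_add₀ hs0.ne', zpow_natCast]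
        have := mul_le_mul_of_nonneg_left (hI s hs).2 (pow_pos hs0 E').le
        linarith
      · have hs0 : 0 < s := by linarith
        rw [← hp c hc s hs0]
        exact mul_nonneg (pow_pos hs0 _).le (val_pos (hpos s hs0) (mul_pos hc hs0) t v).le
    omega
  · have h1 : Tendsto (fun c : ℝ => c * s) (𝓝[>] 0) (𝓝[>] 0) := by
      refine tendsto_nhdsWithin_iff.2 ⟨?_, ?_⟩
      · have : Tendsto (fun c : ℝ => c * s) (𝓝 0) (𝓝 (0 * s)) := tendsto_id.mul_const s
        rw [zero_mul] at this
        exact this.mono_left nhdsWithin_le_nhds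
      · filter_upwards [self_mem_nhdsWithin] with c hc
        exact mul_pos hc hs
    have h2 := ((hlim _ (hpos s hs)).comp h1).const_mul (s ^ E')
    have h3 : s ^ E' * (1 * s ^ a i) = s ^ m := by
      rw [← zpow_natCast s m, hm, zpow_add₀ hs.ne', zpow_natCast, one_mul]
    rw [h3] at h2
    refine (tendsto_congr' ?_).1 h2
    filter_upwards [self_mem_nhdsWithin] with c hc
    exact hp c hc s hs

theorem Phased.tendsto (h : Phased A B β r P) {x : V ⊕ V → ℝ} (hx : ∀ i, 0 < x i) (v : V) :
    Tendsto (fun c => val A B β r x c P v) (𝓝[>] 0) (𝓝 (x (Sum.inl v))) ∧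
    Tendsto (fun c => val A B β r x c (P + 1) v) (𝓝[>] 0) (𝓝 (x (Sum.inr v))) := by
  have h0 := val_tendsto h hx P v
  have h1 := val_tendsto h hx (P + 1) v
  obtain ⟨p0, p1⟩ := h.per _ (lin_isLin A B β (fun v => Real.log (x (Sum.inl v)))
    fun v => Real.log (x (Sum.inr v)))
  rw [p0] at h0
  rw [p1] at h1
  simp only [_root_.lin, Real.exp_log (hx _)] at h0 h1
  exact ⟨h0, h1⟩

theorem Phased.trop_ge [DecidableEq V] (hAB : GoodPair A B) (h : Phased A B β r P) (a : V ⊕ V → ℤ) (v : V) :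
    a (Sum.inl v) ≤ trop A B β r a P v ∧ a (Sum.inr v) ≤ trop A B β r a (P + 1) v :=
  ⟨_root_.trop_ge hAB h (i := Sum.inl v) (fun _ hx => (h.tendsto hx v).1) a,
    _root_.trop_ge hAB h (i := Sum.inr v) (fun _ hx => (h.tendsto hx v).2) a⟩

/-- The time reversal `t ↦ P + 1 - t`, continued periodically modulo `P` so as to stay
nonnegative. -/
def rev (P t : ℕ) : ℕ := P + 1 + (P - 1) * t

theorem rev_succ (hP : 0 < P) (t : ℕ) : rev P (t + 1) + 1 = rev P t + P := by
  obtain ⟨p, rfl⟩ : ∃ p, P = p + 1 := ⟨P - 1, by omega⟩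
  simp only [rev, Nat.add_sub_cancel]
  ring

theorem rev_eq (hP : 0 < P) {t : ℕ} (ht : t ≤ P + 1) : rev P t = (P + 1 - t) + t * P := by
  obtain ⟨p, rfl⟩ : ∃ p, P = p + 1 := ⟨P - 1, by omega⟩
  obtain ⟨q, hq⟩ := Nat.exists_eq_add_of_le ht
  rw [hq, Nat.add_sub_cancel_left]
  simp only [rev, Nat.add_sub_cancel]
  rw [hq]
  ring

theorem per_mul {α : Type} {f : ℕ → α} (hf : ∀ t, f (t + P) = f t) (t n : ℕ) :
    f (t + n * P) = f t := by
  induction n with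
  | zero => simp
  | succ n ih => rw [Nat.succ_mul, ← add_assoc, hf, ih]

theorem per_rev {α : Type} {f : ℕ → α} (hP : 0 < P) (hf : ∀ t, f (t + P) = f t) {t : ℕ}
    (ht : t ≤ P + 1) : f (rev P t) = f (P + 1 - t) := by
  rw [rev_eq hP ht, per_mul hf]

theorem Phased.rev (h : Phased A B β r P) :
    Phased A B (fun t => β (rev P t)) (fun t => r (rev P t)) P where
  lin t v := by
    have h0 := rev_succ h.hP t
    have h1 := rev_succ h.hP (t + 1)
    -- times `rev P (t + 2) + 2P`, `rev P (t + 1) + P`, `rev P t` are consecutive up to order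
    have h2 := h.lin (_root_.rev P (t + 2)) v
    have hr := fun t => funext (h.perr t)
    have e0 : r (_root_.rev P (t + 2) + 2) = r (_root_.rev P t) := by
      rw [show _root_.rev P (t + 2) + 2 = _root_.rev P t + P + P by
        rw [show t + 2 = t + 1 + 1 from rfl]; omega, hr, hr]
    have e1 : r (_root_.rev P (t + 2) + 1) = r (_root_.rev P (t + 1)) := by
      rw [show _root_.rev P (t + 2) + 1 = _root_.rev P (t + 1) + P by
        rw [show t + 2 = t + 1 + 1 from rfl]; omega, hr]
    have e2 : β (_root_.rev P (t + 2) + 1) = β (_root_.rev P (t + 1)) := by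
      rw [show _root_.rev P (t + 2) + 1 = _root_.rev P (t + 1) + P by
        rw [show t + 2 = t + 1 + 1 from rfl]; omega, h.perβ]
    rw [e0, e1, e2] at h2
    rw [← h2, add_comm]
  pos t v := h.pos _ v
  neg t v := h.neg _ v
  hP := h.hP
  perβ t := by
    show β (_root_.rev P (t + P)) = β (_root_.rev P t)
    rw [show _root_.rev P (t + P) = _root_.rev P t + (P - 1) * P by simp only [_root_.rev]; ring,
      per_mul h.perβ]
  perr t v := by
    show r (_root_.rev P (t + P)) v = r (_root_.rev P t) v
    rw [show _root_.rev P (t + P) = _root_.rev P t + (P - 1) * P by simp only [_root_.rev]; ring]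
    exact congrFun (per_mul (fun t => funext (h.perr t)) _ _) v
  per ρ hρ := by
    set σ := _root_.lin A B β (ρ (P + 1)) (ρ P) with hσ
    have hσl : IsLin A B β σ := lin_isLin A B β _ _
    have key : ∀ t, t ≤ P + 1 → σ t = ρ (P + 1 - t) := by
      intro t
      induction t using Nat.strong_induction_on with
      | _ t ih =>
        match t, ih with
        | 0, _ => exact fun _ => rfl
        | 1, _ => exact fun _ => rfl
        | t + 2, ih =>
          intro ht
          obtain ⟨k, hk⟩ : ∃ k, P + 1 = t + 2 + k := Nat.exists_eq_add_of_le ht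
          ext v
          have a0 := ih t (by omega) (by omega)
          have a1 := ih (t + 1) (by omega) (by omega)
          have b := hσl t v
          have c := hρ k v
          beta_reduce at c
          rw [show P + 1 - t = k + 2 by omega] at a0
          rw [show P + 1 - (t + 1) = k + 1 by omega] at a1
          rw [per_rev h.hP h.perβ (show k + 1 ≤ P + 1 by omega),
            show P + 1 - (k + 1) = t + 1 by omega] at c
          rw [show P + 1 - (t + 2) = k by omega]
          rw [a0, a1, ← c] at b
          linarith
    have := h.per σ hσl
    rw [key P (by omega), key (P + 1) (by omega), key 0 (by omega)] at this
    obtain ⟨h1, h2⟩ := this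
    rw [show P + 1 - P = 1 by omega, show P + 1 - 0 = P + 1 by omega] at h1
    rw [show P + 1 - (P + 1) = 0 by omega] at h2
    have h3 : σ 1 = ρ P := rfl
    exact ⟨(h2.trans h3).symm, h1.symm⟩

/-- A positive solution read backwards is a positive solution for the reversed phases. -/
theorem val_rev (h : Phased A B β r P) {x : V ⊕ V → ℝ} (hx : ∀ i, 0 < x i) {s : ℝ} (hs : 0 < s) {t : ℕ}
    (ht : t ≤ P + 1) (v : V) : val A B β r x s (P + 1 - t) v =
      val A B (fun t => β (rev P t)) (fun t => r (rev P t))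
        (Sum.elim (val A B β r x s (P + 1)) (val A B β r x s P)) s t v := by
  have := val_unique (X := fun t => val A B β r x s (P + 1 - t)) h.rev.lin hs (P + 1)
    (fun t v => val_pos hx hs _ v) (fun t ht v => ?_) t ht v
  · exact this
  · obtain ⟨k, hk⟩ : ∃ k, P + 1 = t + 2 + k := Nat.exists_eq_add_of_le ht
    have h1 := val_rec h.lin hx hs k v
    have hr : r (rev P (t + 1)) = r (k + 1) := by
      rw [per_rev h.hP (fun t => funext (h.perr t)) (show t + 1 ≤ P + 1 by omega),
        show P + 1 - (t + 1) = k + 1 by omega]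
    have hb : β (rev P (t + 1)) = β (k + 1) := by
      rw [per_rev h.hP h.perβ (show t + 1 ≤ P + 1 by omega),
        show P + 1 - (t + 1) = k + 1 by omega]
    simp only [hr, hb, show P + 1 - (t + 2) = k by omega, show P + 1 - (t + 1) = k + 1 by omega,
      show P + 1 - t = k + 2 by omega]
    rw [← h1, mul_comm]

/-- For initial variables independent of `s`, the variables after one period stay bounded as `s`
grows: the lower bound on growth exponents, applied to the reversed solution. -/
theorem Phased.trop_le [DecidableEq V] (hAB : GoodPair A B) (h : Phased A B β r P) (v : V) :
    trop A B β r 0 P v ≤ 0 ∧ trop A B β r 0 (P + 1) v ≤ 0 := by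
  have h1 := fun t v => val_isPow (x := fun _ _ => (1 : ℝ)) (a := 0) h.lin
    (fun _ => IsPow.const one_pos) one_pos t v
  set a' : V ⊕ V → ℤ := Sum.elim (trop A B β r 0 (P + 1)) (trop A B β r 0 P) with ha'
  have h2 := fun t v => val_isPow (a := a') (x := fun s => Sum.elim
    (val A B β r (fun _ => 1) (1 * s) (P + 1)) (val A B β r (fun _ => 1) (1 * s) P)) h.rev.lin
    (by rintro (v | v); exacts [h1 _ v, h1 _ v]) one_pos t v
  have h3 : ∀ t ≤ P + 1, trop A B (fun t => β (_root_.rev P t)) (fun t => r (_root_.rev P t)) a' t v =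
      trop A B β r 0 (P + 1 - t) v := by
    intro t ht
    refine ((h2 t v).congr fun s hs => ?_).unique (h1 (P + 1 - t) v)
    exact (val_rev h (fun _ => one_pos) (by linarith) ht v).symm
  have h4 := h.rev.trop_ge hAB a' v
  rw [h3 _ (by omega), h3 _ (by omega), show P + 1 - P = 1 by omega,
    show P + 1 - (P + 1) = 0 by omega] at h4
  exact ⟨h4.2, h4.1⟩

/-- Where the growth exponent is nonpositive, the variable is a polynomial in `s⁻¹`; having a limit
for `s → 0`, it is constant in `s`. -/
theorem val_const [DecidableEq V] (hAB : GoodPair A B) (h : Phased A B β r P) {t : ℕ} {v : V} {i : V ⊕ V}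
    (hlim : ∀ x : V ⊕ V → ℝ, (∀ i, 0 < x i) →
      Tendsto (fun c => val A B β r x c t v) (𝓝[>] 0) (𝓝 (x i)))
    (hle : trop A B β r 0 t v ≤ 0) {x : V ⊕ V → ℝ} (hx : ∀ i, 0 < x i) {s : ℝ} (hs : 0 < s) :
    val A B β r x s t v = x i := by
  obtain ⟨E, hE⟩ := laurent_val hAB β r t v 0
  obtain ⟨p, hp⟩ := hE x hx 1 one_pos
  simp only [Pi.zero_apply, zpow_zero, mul_one, one_mul] at hp
  obtain ⟨K, hK, hI⟩ := val_isPow (x := fun _ => x) (a := 0) h.lin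
    (fun i => IsPow.const (hx i)) one_pos t v
  have hdeg : p.natDegree ≤ E := by
    refine natDegree_le_of_bound (C := K) (fun s hs => ?_) fun s hs => ?_
    · have hs0 : 0 < s := by linarith
      rw [← hp s hs0]
      have h1 := (hI s hs).2
      simp only [one_mul] at h1
      have h2 : s ^ trop A B β r 0 t v ≤ 1 := zpow_le_one_of_nonpos₀ hs hle
      have h3 := pow_pos hs0 E
      have : val A B β r x s t v ≤ K := by nlinarith
      have h4 : val A B β r (fun i => x i) s t v = val A B β r x s t v := rfl
      rw [h4]
      nlinarith
    · have hs0 : 0 < s := by linarith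
      rw [← hp s hs0]
      exact mul_nonneg (pow_pos hs0 _).le (val_pos hx hs0 t v).le
  have hq : p - C (x i) * X ^ E = 0 := by
    refine eq_zero_of_tendsto (d := E) ?_ ?_
    · refine (natDegree_sub_le _ _).trans (max_le hdeg (natDegree_C_mul_X_pow_le _ _))
    · have := (hlim x hx).sub_const (x i)
      rw [sub_self] at this
      refine (tendsto_congr' ?_).1 this
      filter_upwards [self_mem_nhdsWithin] with s (hs : 0 < s)
      rw [eval_sub, ← hp s hs]
      simp only [eval_mul, eval_C, eval_pow, eval_X]
      have := pow_pos hs E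
      field_simp
  have h1 := hp s hs
  rw [sub_eq_zero.1 hq] at h1
  simp only [eval_mul, eval_C, eval_pow, eval_X] at h1
  rw [mul_comm] at h1
  exact mul_right_cancel₀ (pow_pos hs E).ne' h1

/-- A phased pair of matrices has periodic positive `T`-systems. -/
theorem Phased.periodic [DecidableEq V] (hAB : GoodPair A B) (h : Phased A B β r P) {X : ℕ → V → ℝ}
    (hX0 : ∀ t v, 0 < X t v) (hX : ∀ t v, X (t + 2) v * X t v =
      ∏ u, X (t + 1) u ^ A v u + ∏ u, X (t + 1) u ^ B v u) : X P = X 0 ∧ X (P + 1) = X 1 := by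
  have hx : ∀ i, 0 < Sum.elim (X 0) (X 1) i := by rintro (v | v) <;> exact hX0 _ _
  have hu := fun t => val_unique (A := A) (B := B) (β := β) (s := 1) h.lin one_pos t hX0
    (fun t _ v => by simpa using hX t v) t le_rfl
  constructor
  · ext v
    rw [hu P v, val_const hAB h (i := Sum.inl v) (fun _ hx => (h.tendsto hx v).1)
      (h.trop_le hAB v).1 hx one_pos]
    rfl
  · ext v
    rw [hu (P + 1) v, val_const hAB h (i := Sum.inr v) (fun _ hx => (h.tendsto hx v).2)
      (h.trop_le hAB v).2 hx one_pos]
    rfl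

end

/-! ### Chebyshev matrices of a Dynkin diagram and the construction of the phases -/

section
variable {V : Type} [Fintype V] [DecidableEq V]

/-- Chebyshev polynomials of the second kind, shifted by one and evaluated at a matrix. -/
def cheb (M : Matrix V V ℤ) : ℕ → Matrix V V ℤ
  | 0 => 0
  | 1 => 1
  | k + 2 => M * cheb M (k + 1) - cheb M k

variable {M : Matrix V V ℤ}

theorem cheb_succ_succ (k : ℕ) : cheb M (k + 2) = M * cheb M (k + 1) - cheb M k := by rw [cheb]

theorem cheb_commute {N : Matrix V V ℤ} (h : Commute N M) (k : ℕ) : Commute N (cheb M k) := by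
  induction k using Nat.strong_induction_on with
  | _ k ih =>
    match k, ih with
    | 0, _ => exact Commute.zero_right _
    | 1, _ => exact Commute.one_right _
    | k + 2, ih =>
      rw [cheb_succ_succ]
      exact (h.mul_right (ih (k + 1) (by omega))).sub_right (ih k (by omega))

theorem cheb_transpose (h : M.transpose = M) (k : ℕ) : (cheb M k).transpose = cheb M k := by
  induction k using Nat.strong_induction_on with
  | _ k ih =>
    match k, ih with
    | 0, _ => exact Matrix.transpose_zero
    | 1, _ => exact Matrix.transpose_one
    | k + 2, ih =>
      rw [cheb_succ_succ, Matrix.transpose_sub, Matrix.transpose_mul, ih (k + 1) (by omega),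
        ih k (by omega), h, (cheb_commute (Commute.refl M) (k + 1)).eq]

/-- The conserved quantity of the Chebyshev recursion. -/
theorem cheb_inv (k : ℕ) : cheb M (k + 1) * cheb M (k + 1) + cheb M k * cheb M k -
    M * cheb M (k + 1) * cheb M k = 1 := by
  induction k with
  | zero => simp [cheb]
  | succ k ih =>
    rw [← ih, cheb_succ_succ k]
    have h0 := (cheb_commute (Commute.refl M) k).eq
    have h1 := (cheb_commute (Commute.refl M) (k + 1)).eq
    have h2 := (cheb_commute (cheb_commute (Commute.refl M) k).symm (k + 1)).eq
    generalize cheb M (k + 1) = x at *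
    generalize cheb M k = y at *
    simp only [mul_sub, sub_mul]
    rw [show y * (M * x) = M * x * y by rw [← mul_assoc, ← h0, mul_assoc, h2, mul_assoc],
      show M * (M * x) * x = M * x * (M * x) by
        rw [mul_assoc M (M * x) x, mul_assoc M x (M * x), ← mul_assoc x M x, ← h1],
      show M * y * x = M * x * y by rw [mul_assoc, h2, mul_assoc]]
    abel

variable {e : V → ℤ}

/-- A matrix is even or odd with respect to a two-colouring of its index set. -/
def Par (e : V → ℤ) (b : Prop) (N : Matrix V V ℤ) : Prop := ∀ u v, N u v ≠ 0 → (e u = e v ↔ b)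

theorem Par.mul {N N' : Matrix V V ℤ} {b b' : Prop} (he : ∀ v, e v = 0 ∨ e v = 1) (h : Par e b N)
    (h' : Par e b' N') : Par e (b ↔ b') (N * N') := by
  intro u v huv
  rw [Matrix.mul_apply] at huv
  obtain ⟨w, -, hw⟩ := Finset.exists_ne_zero_of_sum_ne_zero huv
  rw [← h u w (left_ne_zero_of_mul hw), ← h' w v (right_ne_zero_of_mul hw)]
  rcases he u with a | a <;> rcases he v with b | b <;> rcases he w with c | c <;>
    simp [a, b, c]

theorem Par.sub {N N' : Matrix V V ℤ} {b : Prop} (h : Par e b N)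
    (h' : Par e b N') : Par e b (N - N') := by
  intro u v huv
  by_cases h0 : N u v = 0
  · refine h' u v fun h1 => huv ?_
    simp [h0, h1]
  · exact h u v h0

theorem Par.congr {N : Matrix V V ℤ} {b b' : Prop} (h : Par e b N) (hb : b ↔ b') : Par e b' N := by
  rwa [propext hb] at h

theorem cheb_par (he : ∀ v, e v = 0 ∨ e v = 1) (hM : Par e False M) (k : ℕ) :
    Par e (Odd k) (cheb M k) := by
  induction k using Nat.strong_induction_on with
  | _ k ih =>
    match k, ih with
    | 0, _ => exact fun u v h => absurd rfl h
    | 1, _ =>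
      intro u v h
      have : u = v := by
        by_contra hne
        exact h (Matrix.one_apply_ne hne)
      simp [this]
    | k + 2, ih =>
      rw [cheb_succ_succ]
      have e1 : Odd (k + 2) ↔ Odd k := by
        simp only [Nat.odd_iff]; omega
      have e2 : (False ↔ Odd (k + 1)) ↔ Odd (k + 2) := by
        rw [false_iff, Nat.odd_iff, Nat.odd_iff]; omega
      exact ((hM.mul he (ih (k + 1) (by omega))).congr e2).sub
        ((ih k (by omega)).congr e1.symm)

/-- The quadratic form of `2 - M`. -/
def qf (M : Matrix V V ℤ) (x : V → ℤ) : ℤ := 2 * ∑ u, x u * x u - ∑ u, ∑ v, M u v * (x u * x v)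

theorem qf_even (he : ∀ v, e v = 0 ∨ e v = 1) (hM : Par e False M) (hs : M.transpose = M)
    (x : V → ℤ) : Even (qf M x) := by
  have hs' : ∀ u v, M u v = M v u := fun u v => by
    conv_lhs => rw [← hs]
    rfl
  have h1 : ∑ u, ∑ v, M u v * (x u * x v) = 2 * ∑ u, ∑ v, e u * (M u v * (x u * x v)) := by
    have h2 : ∑ u, ∑ v, e u * (M u v * (x u * x v)) = ∑ u, ∑ v, e v * (M u v * (x u * x v)) := by
      rw [Finset.sum_comm]
      refine Finset.sum_congr rfl fun u _ => Finset.sum_congr rfl fun v _ => ?_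
      rw [hs' v u, mul_comm (x v)]
    rw [two_mul]
    nth_rewrite 2 [h2]
    simp only [← Finset.sum_add_distrib]
    refine Finset.sum_congr rfl fun u _ => Finset.sum_congr rfl fun v _ => ?_
    by_cases h : M u v = 0
    · simp [h]
    · have := (hM u v h).1
      have : e u + e v = 1 := by
        rcases he u with a | a <;> rcases he v with b | b <;> simp_all
      linear_combination -(M u v * (x u * x v)) * this
  rw [qf, h1, ← mul_sub]
  exact even_two_mul _

/-- If a positive eigenvector has eigenvalue `μ`, then `∑ M u v x_u x_v ≤ μ ∑ x_u ^ 2`. -/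
theorem quad_le {W : Type} [Fintype W] {N : W → W → ℝ} (hs : ∀ u v, N u v = N v u) (hN : ∀ u v, 0 ≤ N u v) {p : W → ℝ}
    (hp : ∀ v, 0 < p v) {μ : ℝ} (hμ : ∀ u, ∑ v, N u v * p v = μ * p u) (x : W → ℝ) :
    ∑ u, ∑ v, N u v * (x u * x v) ≤ μ * ∑ u, x u * x u := by
  have h1 : μ * ∑ u, x u * x u = ∑ u, ∑ v, N u v * (p v * (x u * x u) / p u) := by
    rw [Finset.mul_sum]
    refine Finset.sum_congr rfl fun u _ => ?_
    have := hp u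
    have h2 : ∑ v, N u v * (p v * (x u * x u) / p u) = (∑ v, N u v * p v) * ((x u * x u) / p u) := by
      rw [Finset.sum_mul]
      refine Finset.sum_congr rfl fun v _ => ?_
      ring
    rw [h2, hμ]
    field_simp
  have h2 : ∑ u, ∑ v, N u v * (p v * (x u * x u) / p u) =
      ∑ u, ∑ v, N u v * (p u * (x v * x v) / p v) := by
    rw [Finset.sum_comm]
    refine Finset.sum_congr rfl fun u _ => Finset.sum_congr rfl fun v _ => ?_
    rw [hs]
  have h3 : 2 * ∑ u, ∑ v, N u v * (x u * x v) ≤ ∑ u, ∑ v, N u v * (p v * (x u * x u) / p u) +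
      ∑ u, ∑ v, N u v * (p u * (x v * x v) / p v) := by
    simp only [Finset.mul_sum, ← Finset.sum_add_distrib]
    refine Finset.sum_le_sum fun u _ => Finset.sum_le_sum fun v _ => ?_
    have h4 : 2 * (x u * x v) ≤ p v * (x u * x u) / p u + p u * (x v * x v) / p v := by
      have hu := hp u
      have hv := hp v
      rw [div_add_div _ _ hu.ne' hv.ne', le_div_iff₀ (by positivity)]
      nlinarith [sq_nonneg (p v * x u - p u * x v)]
    nlinarith [mul_le_mul_of_nonneg_left h4 (hN u v)]
  rw [← h2, ← h1] at h3
  linarith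

/-- A symmetric matrix of natural numbers on a two-coloured set with a positive eigenvector of
eigenvalue less than `2`; these are the adjacency matrices of disjoint unions of Dynkin diagrams. -/
structure Dynkin (e : V → ℤ) (N : V → V → ℕ) (p : V → ℝ) (μ : ℝ) : Prop where
  col : ∀ v, e v = 0 ∨ e v = 1
  bip : ∀ u v, e u = e v → N u v = 0
  sym : ∀ u v, N u v = N v u
  pos : ∀ v, 0 < p v
  eig : ∀ u, ∑ v, (N u v : ℝ) * p v = μ * p u
  lt : μ < 2

/-- The matrix with integer entries attached to `N`. -/
def toM (N : V → V → ℕ) : Matrix V V ℤ := Matrix.of fun u v => (N u v : ℤ)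

namespace Dynkin
variable {N : V → V → ℕ} {p : V → ℝ} {μ : ℝ}

theorem par (h : Dynkin e N p μ) : Par e False (toM N) := by
  intro u v huv
  rw [iff_false]
  intro he
  exact huv (by simp [toM, h.bip u v he])

theorem tr (h : Dynkin e N p μ) : (toM N).transpose = toM N := by
  ext u v
  simp [toM, h.sym u v]

theorem qf_pos (h : Dynkin e N p μ) {x : V → ℤ} (hx : x ≠ 0) : 2 ≤ qf (toM N) x := by
  obtain ⟨w, hw⟩ := Function.ne_iff.1 hx
  have h1 := quad_le (N := fun u v => (N u v : ℝ)) (fun u v => by rw [h.sym]) (fun u v => Nat.cast_nonneg _) h.pos h.eig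
    (fun v => (x v : ℝ))
  have h2 : (0 : ℝ) < ∑ u, (x u : ℝ) * x u :=
    Finset.sum_pos' (fun u _ => mul_self_nonneg _)
      ⟨w, Finset.mem_univ _, mul_self_pos.2 (Int.cast_ne_zero.2 hw)⟩
  have h3 : (0 : ℝ) < (qf (toM N) x : ℤ) := by
    simp only [qf, toM, Matrix.of_apply]
    push_cast
    nlinarith [h.lt]
  have h4 : 0 < qf (toM N) x := by exact_mod_cast h3
  obtain ⟨k, hk⟩ := qf_even h.col h.par h.tr x
  omega

theorem qf_nonneg (h : Dynkin e N p μ) (x : V → ℤ) : 0 ≤ qf (toM N) x := by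
  by_cases hx : x = 0
  · simp [hx, qf]
  · have := h.qf_pos hx
    omega

/-- A root, that is an integer vector at which the form takes the value `2`, has all its
coefficients of the same sign. -/
theorem coherent (h : Dynkin e N p μ) {c : V → ℤ} (hc : qf (toM N) c = 2) : 0 ≤ c ∨ c ≤ 0 := by
  by_contra! hcon
  have hP : c⁺ ≠ 0 := fun h0 => hcon.2 (by rwa [posPart_eq_zero] at h0)
  have hQ : c⁻ ≠ 0 := fun h0 => hcon.1 (by rwa [negPart_eq_zero] at h0)
  have h1 := h.qf_pos hP
  have h2 := h.qf_pos hQ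
  have h3 : ∀ v, c v = c⁺ v - c⁻ v := fun v => (congrFun (posPart_sub_negPart c) v).symm
  have h4 : ∀ v, c⁺ v * c⁻ v = 0 := by
    intro v
    rw [Pi.posPart_apply, Pi.negPart_apply]
    rcases le_total 0 (c v) with h0 | h0
    · rw [negPart_eq_zero.2 h0, mul_zero]
    · rw [posPart_eq_zero.2 h0, zero_mul]
  have p0 : ∀ v, 0 ≤ c⁺ v := posPart_nonneg c
  have q0 : ∀ v, 0 ≤ c⁻ v := negPart_nonneg c
  have h5 : qf (toM N) c = qf (toM N) c⁺ + qf (toM N) c⁻ +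
      ∑ u, ∑ v, toM N u v * (c⁺ u * c⁻ v + c⁻ u * c⁺ v) := by
    have a1 : ∑ u, c u * c u = ∑ u, c⁺ u * c⁺ u + ∑ u, c⁻ u * c⁻ u := by
      rw [← Finset.sum_add_distrib]
      refine Finset.sum_congr rfl fun u _ => ?_
      rw [h3 u]
      linear_combination -2 * h4 u
    have a2 : ∑ u, ∑ v, toM N u v * (c u * c v) = ∑ u, ∑ v, toM N u v * (c⁺ u * c⁺ v) +
        ∑ u, ∑ v, toM N u v * (c⁻ u * c⁻ v) -
        ∑ u, ∑ v, toM N u v * (c⁺ u * c⁻ v + c⁻ u * c⁺ v) := by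
      simp only [← Finset.sum_add_distrib, ← Finset.sum_sub_distrib]
      refine Finset.sum_congr rfl fun u _ => Finset.sum_congr rfl fun v _ => ?_
      rw [h3 u, h3 v]
      ring
    simp only [qf, a1, a2]
    ring
  have h6 : 0 ≤ ∑ u, ∑ v, toM N u v * (c⁺ u * c⁻ v + c⁻ u * c⁺ v) := by
    refine Finset.sum_nonneg fun u _ => Finset.sum_nonneg fun v _ => mul_nonneg ?_ ?_
    · simp [toM]
    · exact add_nonneg (mul_nonneg (p0 _) (q0 _)) (mul_nonneg (q0 _) (p0 _))
  omega

/-- The rows of the sum of two consecutive Chebyshev matrices are roots. -/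
theorem row_root (h : Dynkin e N p μ) (k : ℕ) (u : V) :
    qf (toM N) (fun v => (cheb (toM N) (k + 1) + cheb (toM N) k) u v) = 2 := by
  set M := toM N
  set x := cheb M (k + 1) with hx
  set y := cheb M k with hy
  have hxy : (x + y).transpose = x + y := by
    rw [Matrix.transpose_add, cheb_transpose h.tr, cheb_transpose h.tr]
  have h0 : M * y = y * M := (cheb_commute (Commute.refl M) k).eq
  have h1 : M * x = x * M := (cheb_commute (Commute.refl M) (k + 1)).eq
  have h2 : y * x = x * y := (cheb_commute (cheb_commute (Commute.refl M) k).symm (k + 1)).eq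
  have hinv : x * x + y * y - M * x * y = 1 := cheb_inv k
  have hq : qf M (fun v => (x + y) u v) = ((x + y) * (2 - M) * (x + y)) u u := by
    have hsym : ∀ v, (x + y) v u = (x + y) u v := fun v => by
      conv_rhs => rw [← hxy]
      rfl
    have e1 : ((x + y) * (2 - M) * (x + y)) = 2 * ((x + y) * (x + y)) - (x + y) * (M * (x + y)) := by
      noncomm_ring
    rw [e1, Matrix.sub_apply, two_mul, Matrix.add_apply, ← two_mul, Matrix.mul_apply,
      Matrix.mul_apply]
    simp only [hsym, qf]
    congr 1
    refine Finset.sum_congr rfl fun v _ => ?_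
    rw [Matrix.mul_apply, Finset.mul_sum]
    refine Finset.sum_congr rfl fun w _ => ?_
    rw [hsym]
    ring
  have e2 : (x + y) * (2 - M) * (x + y) = 2 - M + 2 * (x * y) + 2 * (x * y) - M * (M * (x * y)) := by
    have a1 : (x + y) * (2 - M) * (x + y) = 2 * (x * x + y * y) + 2 * (x * y) + 2 * (y * x) -
        (x * M * x + y * M * y + x * M * y + y * M * x) := by noncomm_ring
    rw [a1, ← h0, ← h1, h2, mul_assoc M y x, h2]
    have a2 : x * x + y * y = 1 + M * x * y := by rw [← hinv]; abel
    have a3 : M * x * x + M * y * y + M * x * y + M * (x * y) = M * (x * x + y * y) + 2 * (M * (x * y)) := by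
      noncomm_ring
    rw [a3, a2]
    simp only [mul_add, mul_one]
    noncomm_ring
  have d1 : (x * y) u u = 0 := by
    by_contra hne
    have := ((cheb_par h.col h.par (k + 1)).mul h.col (cheb_par h.col h.par k)) u u hne
    have := this.1 rfl
    rw [Nat.odd_iff, Nat.odd_iff] at this
    omega
  have d2 : (M * (M * (x * y))) u u = 0 := by
    by_contra hne
    have := (h.par.mul h.col (h.par.mul h.col
      ((cheb_par h.col h.par (k + 1)).mul h.col (cheb_par h.col h.par k)))) u u hne
    have := this.1 rfl
    rw [false_iff, false_iff, not_not, Nat.odd_iff, Nat.odd_iff] at this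
    omega
  have d3 : M u u = 0 := by
    by_contra hne
    have := h.par u u hne
    simp at this
  rw [hq, e2, Matrix.sub_apply, Matrix.add_apply, Matrix.add_apply, Matrix.sub_apply, two_mul,
    Matrix.add_apply, d1, d2, d3]
  have : (2 : Matrix V V ℤ) u u = 2 := by
    rw [show (2 : Matrix V V ℤ) = 1 + 1 by norm_num, Matrix.add_apply, Matrix.one_apply_eq]
    rfl
  rw [this]
  rfl

end Dynkin
end

/-! ### Half periods of the linear recursion -/

section
variable {V : Type} [Fintype V] [DecidableEq V] {R : Type} [AddCommGroup R]

/-- The action of an integer matrix on families of elements of an abelian group. -/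
def act (M : Matrix V V ℤ) (f : V → R) : V → R := fun v => ∑ u, M v u • f u

theorem act_mul (M N : Matrix V V ℤ) (f : V → R) : act (M * N) f = act M (act N f) := by
  ext v
  simp only [act, Matrix.mul_apply, Finset.sum_smul, Finset.smul_sum, mul_smul]
  exact Finset.sum_comm

theorem act_sub (M N : Matrix V V ℤ) (f : V → R) : act (M - N) f = act M f - act N f := by
  ext v
  simp only [act, Matrix.sub_apply, Pi.sub_apply, sub_smul, Finset.sum_sub_distrib]

theorem act_one (f : V → R) : act (1 : Matrix V V ℤ) f = f := by
  ext v
  simp [act, Matrix.one_apply]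

theorem act_zero (f : V → R) : act (0 : Matrix V V ℤ) f = 0 := by
  ext v
  simp [act]

theorem act_neg (M : Matrix V V ℤ) (f : V → R) : act M (-f) = - act M f := by
  ext v
  simp [act]

theorem toM_act (N : V → V → ℕ) (f : V → R) (v : V) : act (toM N) f v = ∑ u, N v u • f u := by
  simp [act, toM]

/-- Solutions of the linear recursion are expressed by the Chebyshev matrices. -/
theorem rec_cheb (M : Matrix V V ℤ) {ρ : ℕ → V → R} {t0 n : ℕ}
    (h : ∀ k < n, ρ (t0 + k + 2) + ρ (t0 + k) = act M (ρ (t0 + k + 1))) (k : ℕ) (hk : k ≤ n) :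
    ρ (t0 + k + 1) = act (cheb M (k + 1)) (ρ (t0 + 1)) - act (cheb M k) (ρ t0) := by
  induction k using Nat.strong_induction_on with
  | _ k ih =>
    match k, ih with
    | 0, _ => simp [cheb, act_one, act_zero]
    | 1, _ =>
      have := h 0 hk
      rw [cheb_succ_succ]
      simp only [cheb, act_sub, act_zero, mul_one, act_one]
      simp only [add_zero] at this
      rw [← this, sub_zero, add_sub_cancel_right]
    | k + 2, ih =>
      have h1 := h (k + 1) (by omega)
      rw [ih (k + 1) (by omega) (by omega)] at h1
      have h0 := ih k (by omega) (by omega)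
      rw [show t0 + (k + 1) = t0 + k + 1 by omega, h0, ← eq_sub_iff_add_eq] at h1
      rw [show t0 + (k + 2) + 1 = t0 + k + 1 + 2 by omega, h1, cheb_succ_succ (k + 1),
        cheb_succ_succ k]
      simp only [act_sub, act_mul]
      have : ∀ f g : V → R, act M (f - g) = act M f - act M g := by
        intro f g
        ext v
        simp [act, smul_sub]
      simp only [this]
      abel

/-- The Chebyshev recursion for a number less than `2` reaches negative values. -/
theorem exists_neg {μ : ℝ} (hμ : μ < 2) {s : ℕ → ℝ} (h0 : 0 < s 0)
    (h : ∀ k, s (k + 2) = μ * s (k + 1) - s k) : ∃ k, s k < 0 := by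
  by_contra! hs
  -- the increments decrease
  have hd : ∀ k, s (k + 2) - s (k + 1) = s (k + 1) - s k - (2 - μ) * s (k + 1) := fun k => by
    rw [h]; ring
  have hanti : Antitone fun k => s (k + 1) - s k := by
    refine antitone_nat_of_succ_le fun k => ?_
    have h2 := hd k
    have := mul_nonneg (sub_nonneg.2 hμ.le) (hs (k + 1))
    show s (k + 2) - s (k + 1) ≤ _
    linarith
  by_cases hneg : ∃ K, s (K + 1) - s K < 0
  · obtain ⟨K, hK⟩ := hneg
    set δ := s (K + 1) - s K with hδ
    have h3 : ∀ n : ℕ, s (K + n) ≤ s K + n * δ := by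
      intro n
      induction n with
      | zero => simp
      | succ n ih =>
        have := hanti (Nat.le_add_right K n)
        simp only at this
        rw [← add_assoc]
        push_cast
        linarith
    obtain ⟨n, hn⟩ := exists_nat_gt (s K / -δ)
    rw [div_lt_iff₀ (by linarith)] at hn
    have := h3 n
    have := hs (K + n)
    nlinarith
  · push Not at hneg
    have hmono : Monotone s := monotone_nat_of_le_succ fun k => by linarith [hneg k]
    have h3 : ∀ n : ℕ, s (n + 1) - s n ≤ s 1 - s 0 - n * ((2 - μ) * s 0) := by
      intro n
      induction n with
      | zero => simp
      | succ n ih =>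
        have h4 := hd n
        have := mul_le_mul_of_nonneg_left (hmono (Nat.zero_le (n + 1))) (sub_nonneg.2 hμ.le)
        push_cast
        linarith
    have hpos : 0 < (2 - μ) * s 0 := mul_pos (by linarith) h0
    obtain ⟨n, hn⟩ := exists_nat_gt ((s 1 - s 0) / ((2 - μ) * s 0))
    rw [div_lt_iff₀ hpos] at hn
    linarith [h3 n, hneg n]

namespace Dynkin
variable {e : V → ℤ} {N : V → V → ℕ} {p : V → ℝ} {μ : ℝ}

/-- Half a period of the linear recursion of a Dynkin diagram: `n + 1` is the Coxeter number. -/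
structure HalfPeriod (N : V → V → ℕ) (n : ℕ) : Prop where
  zero : cheb (toM N) (n + 1) = 0
  sq : cheb (toM N) n * cheb (toM N) n = 1
  pos : ∀ k ≤ n, ∀ u, 0 < ∑ v, (cheb (toM N) (k + 1) + cheb (toM N) k) u v
  one : ∀ u, ∑ v, cheb (toM N) n u v = 1

theorem coxeter (h : Dynkin e N p μ) : ∃ n, HalfPeriod N n := by
  set M := toM N with hM
  -- the eigenvalues of the Chebyshev matrices at `p`
  obtain ⟨c, c0, c1, hc⟩ : ∃ c : ℕ → ℝ, c 0 = 0 ∧ c 1 = 1 ∧ ∀ k, c (k + 2) = μ * c (k + 1) - c k := by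
    let F : ℕ → ℝ × ℝ := fun n => Nat.rec (0, 1) (fun _ q => (q.2, μ * q.2 - q.1)) n
    exact ⟨fun n => (F n).1, rfl, rfl, fun k => rfl⟩
  have hMp : act M p = μ • p := by
    ext u
    rw [toM_act]
    simpa [nsmul_eq_mul] using h.eig u
  have hcp : ∀ k, act (cheb M k) p = c k • p := by
    intro k
    induction k using Nat.strong_induction_on with
    | _ k ih =>
      match k, ih with
      | 0, _ => simp [cheb, act_zero, c0]
      | 1, _ => simp [cheb, act_one, c1]
      | k + 2, ih =>
        rw [cheb_succ_succ, (cheb_commute (Commute.refl M) (k + 1)).eq, act_sub, act_mul,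
          ih k (by omega), hMp, hc]
        have h1 : act (cheb M (k + 1)) (μ • p) = μ • act (cheb M (k + 1)) p := by
          ext v
          simp only [act, Pi.smul_apply, Finset.smul_sum]
          exact Finset.sum_congr rfl fun u _ => smul_comm _ _ _
        rw [h1, ih (k + 1) (by omega)]
        ext v
        simp
        ring
  set s : ℕ → ℝ := fun k => c (k + 1) + c k with hs
  have hrow : ∀ k u, ∑ v, ((cheb M (k + 1) + cheb M k) u v : ℝ) * p v = s k * p u := by
    intro k u
    have h1 := congrFun (hcp (k + 1)) u
    have h0 := congrFun (hcp k) u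
    simp only [act, zsmul_eq_mul, Pi.smul_apply, smul_eq_mul] at h0 h1
    simp only [Matrix.add_apply, Int.cast_add, add_mul, Finset.sum_add_distrib, h0, h1, hs]
  have hne : ∀ k u, ∃ v, (cheb M (k + 1) + cheb M k) u v ≠ 0 := by
    intro k u
    by_contra! hz
    have := h.row_root k u
    rw [show (fun v => (cheb (toM N) (k + 1) + cheb (toM N) k) u v) = 0 from funext hz] at this
    simp [qf] at this
  have hge : ∀ k u, 0 ≤ s k → ∀ v, 0 ≤ (cheb M (k + 1) + cheb M k) u v := by
    intro k u hk
    rcases h.coherent (h.row_root k u) with hco | hco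
    · exact hco
    · exfalso
      obtain ⟨w, hw⟩ := hne k u
      have h1 : ∑ v, ((cheb M (k + 1) + cheb M k) u v : ℝ) * p v < ∑ v : V, 0 := by
        refine Finset.sum_lt_sum (fun v _ => ?_) ⟨w, Finset.mem_univ _, ?_⟩
        · have h2 : ((cheb M (k + 1) + cheb M k) u v : ℝ) ≤ 0 := by exact_mod_cast hco v
          exact mul_nonpos_of_nonpos_of_nonneg h2 (h.pos v).le
        · have h2 : ((cheb M (k + 1) + cheb M k) u w : ℝ) < 0 := by
            exact_mod_cast lt_of_le_of_ne (hco w) hw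
          exact mul_neg_of_neg_of_pos h2 (h.pos w)
      rw [hrow, Finset.sum_const_zero] at h1
      exact absurd (mul_nonneg hk (h.pos u).le) (not_le.2 h1)
  have hle : ∀ k u, s k < 0 → ∀ v, (cheb M (k + 1) + cheb M k) u v ≤ 0 := by
    intro k u hk
    rcases h.coherent (h.row_root k u) with hco | hco
    · exfalso
      have h1 : 0 ≤ ∑ v, ((cheb M (k + 1) + cheb M k) u v : ℝ) * p v := by
        refine Finset.sum_nonneg fun v _ => mul_nonneg ?_ (h.pos v).le
        exact_mod_cast hco v
      rw [hrow] at h1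
      exact absurd (mul_neg_of_neg_of_pos hk (h.pos u)) (not_lt.2 h1)
    · exact hco
  have hex : ∃ k, s k < 0 := exists_neg h.lt (by simp [hs, c0, c1])
    (fun k => by simp only [hs, hc]; ring)
  classical
  obtain ⟨n, hn⟩ : ∃ n, Nat.find hex = n + 1 := by
    refine ⟨Nat.find hex - 1, ?_⟩
    have : Nat.find hex ≠ 0 := by
      intro h0
      have h1 := Nat.find_spec hex
      rw [h0] at h1
      simp only [hs, c0, c1] at h1
      norm_num at h1
    omega
  have hn1 : s (n + 1) < 0 := hn ▸ Nat.find_spec hex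
  have hn0 : ∀ k ≤ n, 0 ≤ s k := fun k hk => not_lt.1 (Nat.find_min hex (by omega))
  -- consecutive Chebyshev matrices have disjoint supports
  have hdisj : ∀ k u v, cheb M (k + 1) u v = 0 ∨ cheb M k u v = 0 := by
    intro k u v
    by_contra! hcon
    have h1 := cheb_par h.col h.par (k + 1) u v hcon.1
    have h0 := cheb_par h.col h.par k u v hcon.2
    rw [h1, Nat.odd_iff, Nat.odd_iff] at h0
    omega
  have hz : cheb M (n + 1) = 0 := by
    ext u v
    have a1 := hle (n + 1) u hn1 v
    have a0 := hge n u (hn0 n le_rfl) v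
    have b1 := hdisj (n + 1) u v
    have b0 := hdisj n u v
    rw [Matrix.add_apply] at a1 a0
    rw [Matrix.zero_apply]
    rcases b1 with b1 | b1 <;> rcases b0 with b0 | b0 <;> omega
  have hsq : cheb M n * cheb M n = 1 := by
    have := cheb_inv (M := M) n
    simpa [hz] using this
  have hnn : ∀ u v, 0 ≤ cheb M n u v := by
    intro u v
    have := hge n u (hn0 n le_rfl) v
    rwa [hz, zero_add] at this
  have hpos : ∀ k ≤ n, ∀ u, 0 < ∑ v, (cheb M (k + 1) + cheb M k) u v := by
    intro k hk u
    obtain ⟨w, hw⟩ := hne k u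
    exact Finset.sum_pos' (fun v _ => hge k u (hn0 k hk) v)
      ⟨w, Finset.mem_univ _, lt_of_le_of_ne (hge k u (hn0 k hk) w) hw.symm⟩
  have hone : ∀ u, 1 ≤ ∑ v, cheb M n u v := by
    intro u
    have := hpos n le_rfl u
    rw [hz, zero_add] at this
    omega
  refine ⟨n, hz, hsq, hpos, fun u => le_antisymm ?_ (hone u)⟩
  -- row sums are at least one, and the square of the matrix has row sums one
  have h1 : ∑ v, (cheb M n * cheb M n) u v = 1 := by
    rw [hsq]
    simp [Matrix.one_apply]
  rw [← h1]
  simp only [Matrix.mul_apply]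
  rw [Finset.sum_comm]
  refine Finset.sum_le_sum fun w _ => ?_
  rw [← Finset.mul_sum]
  nlinarith [hnn u w, hone w]

end Dynkin
end

/-! ### Phases for two commuting Dynkin diagrams -/

section
variable {V : Type} [Fintype V] [DecidableEq V] {R : Type} [AddCommGroup R] {A B : V → V → ℕ}
  {β : ℕ → Bool}

theorem IsLin.act {ρ : ℕ → V → R} (h : IsLin A B β ρ) (t : ℕ) :
    ρ (t + 2) + ρ t = act (toM (if β (t + 1) then B else A)) (ρ (t + 1)) := by
  ext v
  rw [toM_act, Pi.add_apply, h t v]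
  rfl

theorem IsLin.unique {ρ σ : ℕ → V → R} (h : IsLin A B β ρ) (h' : IsLin A B β σ) (h0 : ρ 0 = σ 0)
    (h1 : ρ 1 = σ 1) (t : ℕ) : ρ t = σ t := by
  induction t using Nat.strong_induction_on with
  | _ t ih =>
    match t, ih with
    | 0, _ => exact h0
    | 1, _ => exact h1
    | t + 2, ih =>
      have a := h.act t
      have b := h'.act t
      rw [ih t (by omega), ih (t + 1) (by omega), ← b] at a
      exact add_right_cancel a

theorem IsLin.shift {ρ : ℕ → V → R} (h : IsLin A B β ρ) {H : ℕ} (hβ : ∀ t, β (t + H) = β t) :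
    IsLin A B β fun t => ρ (t + H) := by
  intro t v
  have := h (t + H) v
  rw [show t + H + 1 = t + 1 + H by omega, hβ] at this
  beta_reduce
  rw [show t + 2 + H = t + H + 2 by omega]
  exact this

open Dynkin

/-- After half a period, a solution is negated up to the involution `cheb (toM N) n`. -/
theorem Dynkin.HalfPeriod.step {N : V → V → ℕ} {n : ℕ} (hN : HalfPeriod N n) {ρ : ℕ → V → R} {t0 : ℕ}
    (h : ∀ k < n + 1, ρ (t0 + k + 2) + ρ (t0 + k) = act (toM N) (ρ (t0 + k + 1))) :
    ρ (t0 + n + 1) = -act (cheb (toM N) n) (ρ t0) ∧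
    ρ (t0 + n + 2) = -act (cheb (toM N) n) (ρ (t0 + 1)) := by
  have h0 := rec_cheb (toM N) h n (by omega)
  have h1 := rec_cheb (toM N) h (n + 1) le_rfl
  rw [hN.zero, act_zero, zero_sub] at h0
  rw [cheb_succ_succ, hN.zero, mul_zero, act_zero, act_sub, act_zero, sub_zero, zero_sub] at h1
  exact ⟨h0, h1⟩

theorem Dynkin.HalfPeriod.act_const {N : V → V → ℕ} {n : ℕ} (hN : HalfPeriod N n) (c : ℤ) :
    _root_.act (cheb (toM N) n) (fun _ => c) = fun _ => c := by
  ext v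
  simp only [_root_.act, smul_eq_mul, ← Finset.sum_mul, hN.one v, one_mul]

/-- Two commuting Dynkin diagrams give rise to a phased pair: the phases alternate after one Coxeter
number of each of the two diagrams. -/
theorem exists_phased {n m : ℕ} (hB : HalfPeriod B n) (hA : HalfPeriod A m)
    (hcomm : Commute (toM A) (toM B)) : ∃ β r P, Phased A B β r P := by
  set H := n + 1 + (m + 1) with hH
  let β : ℕ → Bool := fun t => decide (1 ≤ t % H ∧ t % H ≤ n + 1)
  have hβt : ∀ t, β t = true ↔ 1 ≤ t % H ∧ t % H ≤ n + 1 := fun t => by simp [β]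
  have hβf : ∀ t, β t = false ↔ ¬ (1 ≤ t % H ∧ t % H ≤ n + 1) := fun t => by
    rw [← hβt]; simp
  have hβH : ∀ t, β (t + H) = β t := fun t => by simp only [β, Nat.add_mod_right]
  have b1 : ∀ k < n + 1, β (0 + k + 1) = true := fun k hk => by
    rw [hβt, Nat.mod_eq_of_lt (by omega)]; omega
  have b2 : ∀ k < m + 1, β (n + 1 + k + 1) = false := fun k hk => by
    rw [hβf]
    by_cases hkm : k = m
    · rw [hkm, show n + 1 + m + 1 = H by omega, Nat.mod_self]
      omega
    · rw [Nat.mod_eq_of_lt (by omega)]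
      omega
  have s1 : ∀ {R : Type} [AddCommGroup R] {ρ : ℕ → V → R}, IsLin A B β ρ → ∀ k < n + 1,
      ρ (0 + k + 2) + ρ (0 + k) = act (toM B) (ρ (0 + k + 1)) := by
    intro R _ ρ h k hk
    have := h.act (0 + k)
    rwa [if_pos (b1 k hk)] at this
  have s2 : ∀ {R : Type} [AddCommGroup R] {ρ : ℕ → V → R}, IsLin A B β ρ → ∀ k < m + 1,
      ρ (n + 1 + k + 2) + ρ (n + 1 + k) = act (toM A) (ρ (n + 1 + k + 1)) := by
    intro R _ ρ h k hk
    have := h.act (n + 1 + k)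
    rwa [if_neg (by rw [b2 k hk]; simp)] at this
  have half : ∀ {R : Type} [AddCommGroup R] {ρ : ℕ → V → R}, IsLin A B β ρ →
      ρ (n + 1) = -act (cheb (toM B) n) (ρ 0) ∧ ρ (n + 1 + 1) = -act (cheb (toM B) n) (ρ 1) := by
    intro R _ ρ h
    have := hB.step (s1 h)
    simpa using this
  have full : ∀ {R : Type} [AddCommGroup R] {ρ : ℕ → V → R}, IsLin A B β ρ →
      ρ H = act (cheb (toM A) m) (act (cheb (toM B) n) (ρ 0)) ∧
      ρ (H + 1) = act (cheb (toM A) m) (act (cheb (toM B) n) (ρ 1)) := by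
    intro R _ ρ h
    have h1 := hA.step (s2 h)
    rw [(half h).1, (half h).2, act_neg, act_neg, neg_neg, neg_neg] at h1
    exact h1
  let r : ℕ → V → ℤ := lin A B β (fun _ => -1) fun _ => 1
  have hr : IsLin A B β r := lin_isLin _ _ _ _ _
  have hr0 : r 0 = fun _ => -1 := rfl
  have hr1 : r 1 = fun _ => 1 := rfl
  have hrb : r (n + 1) = fun _ => 1 := by
    rw [(half hr).1, hr0, hB.act_const]
    rfl
  have hrb1 : r (n + 1 + 1) = fun _ => -1 := by
    rw [(half hr).2, hr1, hB.act_const]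
    rfl
  have hrH : ∀ t, r (t + H) = r t := by
    refine (hr.shift hβH).unique hr ?_ ?_
    · simp only [zero_add]
      rw [(full hr).1, hr0, hB.act_const, hA.act_const]
    · rw [add_comm 1, (full hr).2, hr1, hB.act_const, hA.act_const]
  have hmod : ∀ t, r t = r (t % H) := fun t => by
    conv_lhs => rw [← Nat.mod_add_div' t H]
    exact per_mul hrH _ _
  have hsq : ∀ (R : Type) [AddCommGroup R] (f : V → R), act (cheb (toM A) m) (act (cheb (toM B) n)
      (act (cheb (toM A) m) (act (cheb (toM B) n) f))) = f := by
    intro R _ f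
    have hc : Commute (cheb (toM A) m) (cheb (toM B) n) :=
      cheb_commute (cheb_commute hcomm.symm m).symm n
    rw [← act_mul, ← act_mul, ← act_mul]
    rw [show cheb (toM A) m * cheb (toM B) n * cheb (toM A) m * cheb (toM B) n = 1 by
      rw [mul_assoc (cheb (toM A) m), ← hc.eq, ← mul_assoc, hA.sq, one_mul, hB.sq],
      act_one]
  refine ⟨β, r, 2 * H, hr, fun t v ht => ?_, fun t v ht => ?_, by omega, fun t => per_mul hβH t 2,
    fun t v => congrFun (per_mul hrH t 2) v, fun ρ hρ => ?_⟩
  · rw [hβt] at ht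
    rw [hmod]
    obtain ⟨k, hk⟩ : ∃ k, t % H = 0 + k + 1 := ⟨t % H - 1, by omega⟩
    rw [hk, rec_cheb _ (s1 hr) k (by omega), zero_add, hr0, hr1]
    have := hB.pos k (by omega) v
    simp only [Matrix.add_apply, Finset.sum_add_distrib] at this
    simp only [act, Pi.sub_apply, smul_eq_mul, mul_one, mul_neg, Finset.sum_neg_distrib]
    linarith
  · rw [hβf] at ht
    rw [hmod]
    have hlt : t % H < H := Nat.mod_lt _ (by omega)
    by_cases h0 : t % H = 0
    · rw [h0, hr0]
      norm_num
    · obtain ⟨k, hk⟩ : ∃ k, t % H = n + 1 + k + 1 := ⟨t % H - (n + 2), by omega⟩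
      rw [hk, rec_cheb _ (s2 hr) k (by omega), hrb, hrb1]
      have := hA.pos k (by omega) v
      simp only [Matrix.add_apply, Finset.sum_add_distrib] at this
      simp only [act, Pi.sub_apply, smul_eq_mul, mul_one, mul_neg, Finset.sum_neg_distrib]
      linarith
  · have h1 := full hρ
    have h2 := full (hρ.shift hβH)
    simp only [zero_add] at h2
    rw [h1.1, hsq, ← two_mul, show H + 1 + H = 2 * H + 1 by omega, add_comm 1 H, h1.2, hsq] at h2
    exact h2

/-- Over the positive reals, `T`-systems of two commuting Dynkin diagrams are periodic. -/
theorem Dynkin.periodic {e : V → ℤ} {p q : V → ℝ} {μ ν : ℝ} (hA : Dynkin e A p μ) (hB : Dynkin e B q ν)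
    (hAB : GoodPair A B) : ∃ P, 0 < P ∧ ∀ X : ℕ → V → ℝ, (∀ t v, 0 < X t v) →
      (∀ t v, X (t + 2) v * X t v = ∏ u, X (t + 1) u ^ A v u + ∏ u, X (t + 1) u ^ B v u) →
      X P = X 0 ∧ X (P + 1) = X 1 := by
  obtain ⟨n, hn⟩ := hB.coxeter
  obtain ⟨m, hm⟩ := hA.coxeter
  have hcomm : Commute (toM A) (toM B) := by
    ext u v
    simp only [Matrix.mul_apply, toM, Matrix.of_apply]
    exact_mod_cast hAB.comm u v
  obtain ⟨β, r, P, h⟩ := exists_phased hn hm hcomm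
  exact ⟨P, h.hP, fun X hX0 hX => h.periodic hAB hX0 hX⟩

end

/-! ### Joint Perron eigenvectors -/

section
variable {W : Type} [Fintype W] [DecidableEq W]

theorem zero_of_reach {C : W → W → ℝ} (hC : ∀ u v, 0 ≤ C u v)
    (hconn : ∀ u v, Relation.ReflTransGen (fun u v => C u v ≠ 0) u v) {y : W → ℝ} {ρ : ℝ}
    (hy : ∀ v, 0 ≤ y v) (he : ∀ u, ∑ v, C u v * y v = ρ * y u) {u : W} (hu : y u = 0) : y = 0 := by
  ext v
  induction hconn u v with
  | refl => exact hu
  | @tail b c _ hbc ih =>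
    have h1 := he b
    rw [show y b = 0 from ih, mul_zero] at h1
    have h2 := (Finset.sum_eq_zero_iff_of_nonneg
      (fun v _ => mul_nonneg (hC b v) (hy v))).1 h1 c (Finset.mem_univ _)
    exact (mul_eq_zero.1 h2).resolve_left hbc

/-- The absolute value of a maximizer of the quadratic form on the unit sphere is a positive
eigenvector. -/
theorem perron [Nonempty W] {C : W → W → ℝ} (hs : ∀ u v, C u v = C v u) (hC : ∀ u v, 0 ≤ C u v)
    (hconn : ∀ u v, Relation.ReflTransGen (fun u v => C u v ≠ 0) u v) :
    ∃ (p : W → ℝ) (ρ : ℝ), (∀ v, 0 < p v) ∧ ∀ u, ∑ v, C u v * p v = ρ * p u := by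
  let Q : (W → ℝ) → ℝ := fun x => ∑ u, ∑ v, C u v * (x u * x v)
  let S : Set (W → ℝ) := {x | ∑ u, x u * x u = 1}
  have hQc : Continuous Q := by
    show Continuous fun x : W → ℝ => ∑ u, ∑ v, C u v * (x u * x v)
    fun_prop
  have hSc : IsCompact S := by
    refine (isCompact_closedBall (0 : W → ℝ) 1).of_isClosed_subset ?_ fun x hx => ?_
    · exact isClosed_eq (by fun_prop) continuous_const
    · rw [mem_closedBall_zero_iff, pi_norm_le_iff_of_nonneg zero_le_one]
      intro i
      have : x i * x i ≤ 1 := by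
        rw [← show ∑ u, x u * x u = 1 from hx]
        exact Finset.single_le_sum (f := fun u => x u * x u) (fun u _ => mul_self_nonneg _)
          (Finset.mem_univ i)
      rw [Real.norm_eq_abs, abs_le]
      constructor <;> nlinarith
  have hSn : S.Nonempty := by
    obtain ⟨w⟩ := ‹Nonempty W›
    exact ⟨Pi.single w 1, by simp [S, Pi.single_apply]⟩
  obtain ⟨x, hx, hmax⟩ := hSc.exists_isMaxOn hSn hQc.continuousOn
  set ρ := Q x with hρ
  have hnonneg : ∀ y : W → ℝ, 0 ≤ ρ * ∑ u, y u * y u - Q y := by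
    intro y
    by_cases h0 : ∑ u, y u * y u = 0
    · have h1 : ∀ u, y u = 0 := fun u => by
        have := (Finset.sum_eq_zero_iff_of_nonneg (fun u _ => mul_self_nonneg (y u))).1 h0 u
          (Finset.mem_univ _)
        exact mul_self_eq_zero.1 this
      simp [Q, h1]
    · have hpos : 0 < ∑ u, y u * y u :=
        lt_of_le_of_ne (Finset.sum_nonneg fun u _ => mul_self_nonneg _) (Ne.symm h0)
      set n := ∑ u, y u * y u with hn
      set c := (Real.sqrt n)⁻¹ with hc
      have hcn : c * c * n = 1 := by
        rw [hc, ← mul_inv, Real.mul_self_sqrt hpos.le, inv_mul_cancel₀ hpos.ne']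
      have hmem : (fun u => c * y u) ∈ S := by
        show ∑ u, c * y u * (c * y u) = 1
        rw [← hcn, hn, Finset.mul_sum]
        exact Finset.sum_congr rfl fun u _ => by ring
      have h1 : Q (fun u => c * y u) ≤ ρ := hmax hmem
      have h2 : Q (fun u => c * y u) = c * c * Q y := by
        simp only [Q, Finset.mul_sum]
        exact Finset.sum_congr rfl fun u _ => Finset.sum_congr rfl fun v _ => by ring
      rw [h2] at h1
      have h3 : n * (c * c * Q y) ≤ n * ρ := mul_le_mul_of_nonneg_left h1 hpos.le
      have h4 : n * (c * c * Q y) = Q y := by linear_combination Q y * hcn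
      linarith
  set p : W → ℝ := fun v => |x v| with hp
  have hpn : ∀ v, 0 ≤ p v := fun v => abs_nonneg _
  have hpS : ∑ u, p u * p u = 1 := by
    rw [← show ∑ u, x u * x u = 1 from hx]
    exact Finset.sum_congr rfl fun u _ => abs_mul_abs_self _
  have hQp : ρ ≤ Q p := by
    refine Finset.sum_le_sum fun u _ => Finset.sum_le_sum fun v _ => ?_
    refine mul_le_mul_of_nonneg_left ?_ (hC u v)
    rw [hp, ← abs_mul]
    exact le_abs_self _
  have hQp' : ρ * ∑ u, p u * p u - Q p = 0 := by
    have := hnonneg p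
    rw [hpS] at this ⊢
    linarith
  have heig : ∀ u, ∑ v, C u v * p v = ρ * p u := by
    intro w
    -- the form vanishes at `p`, hence so does its derivative in the direction of `w`
    set b := ρ * p w - ∑ v, C w v * p v with hb
    have hexp : ∀ t : ℝ, ρ * ∑ u, (p + t • Pi.single w 1 : W → ℝ) u * (p + t • Pi.single w 1 : W → ℝ) u -
        Q (p + t • Pi.single w 1) = 2 * t * b + t * t * (ρ - C w w) := by
      intro t
      have e1 : ∑ u, (p + t • Pi.single w 1 : W → ℝ) u * (p + t • Pi.single w 1 : W → ℝ) u =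
          ∑ u, p u * p u + 2 * t * p w + t * t := by
        have : ∀ u, (p + t • Pi.single w 1 : W → ℝ) u * (p + t • Pi.single w 1 : W → ℝ) u =
            p u * p u + (if u = w then 2 * t * p u + t * t else 0) := by
          intro u
          by_cases huw : u = w
          · subst huw; simp; ring
          · simp [huw]
        simp only [this, Finset.sum_add_distrib]
        simp
        ring
      have e2 : Q (p + t • Pi.single w 1) = Q p + 2 * t * ∑ v, C w v * p v + t * t * C w w := by
        have : ∀ u v, C u v * ((p + t • Pi.single w 1 : W → ℝ) u * (p + t • Pi.single w 1 : W → ℝ) v) =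
            C u v * (p u * p v) + (if u = w then t * (C u v * p v) else 0) +
            (if v = w then t * (C u v * p u) else 0) +
            (if u = w then (if v = w then t * t * C u v else 0) else 0) := by
          intro u v
          by_cases huw : u = w <;> by_cases hvw : v = w <;> simp [huw, hvw] <;> ring
        simp only [Q, this, Finset.sum_add_distrib]
        simp only [Finset.sum_ite_eq', Finset.mem_univ, if_true]
        have e3 : ∑ u, ∑ v, (if u = w then t * (C u v * p v) else 0) = t * ∑ v, C w v * p v := by
          rw [Finset.sum_comm, Finset.mul_sum]
          simp
        have e4 : ∑ u, t * (C u w * p u) = t * ∑ v, C w v * p v := by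
          rw [Finset.mul_sum]
          exact Finset.sum_congr rfl fun u _ => by rw [hs]
        have e5 : ∑ u, ∑ v, (if u = w then (if v = w then t * t * C u v else 0) else 0) =
            t * t * C w w := by
          rw [Finset.sum_comm]
          simp
        rw [e3, e4, e5]
        ring
      rw [e1, e2, hb]
      linear_combination hQp'
    have hall : ∀ t : ℝ, 0 ≤ 2 * t * b + t * t * (ρ - C w w) := fun t => by
      rw [← hexp]; exact hnonneg _
    have hb0 : b = 0 := by
      by_contra hne
      set d := ρ - C w w
      have hd : 0 < |d| + 1 := by positivity
      have := hall (-b / (|d| + 1))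
      have h2 : 2 * (-b / (|d| + 1)) * b + -b / (|d| + 1) * (-b / (|d| + 1)) * d =
          -(b * b / (|d| + 1)) * (2 - d / (|d| + 1)) := by field_simp; ring
      rw [h2] at this
      have h3 : d / (|d| + 1) < 2 := by
        rw [div_lt_iff₀ hd]; nlinarith [le_abs_self d, abs_nonneg d]
      have h4 : 0 < b * b / (|d| + 1) := div_pos (mul_self_pos.2 hne) hd
      nlinarith [mul_pos h4 (sub_pos.2 h3)]
    linarith
  refine ⟨p, ρ, fun v => ?_, heig⟩
  refine lt_of_le_of_ne (hpn v) fun h0 => ?_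
  have hz := zero_of_reach hC hconn hpn heig h0.symm
  rw [hz] at hpS
  simp at hpS

/-- The top eigenvalue is simple. -/
theorem perron_unique [Nonempty W] {C : W → W → ℝ} (hC : ∀ u v, 0 ≤ C u v)
    (hconn : ∀ u v, Relation.ReflTransGen (fun u v => C u v ≠ 0) u v) {p x : W → ℝ} {ρ : ℝ}
    (hp : ∀ v, 0 < p v) (he : ∀ u, ∑ v, C u v * p v = ρ * p u)
    (hx : ∀ u, ∑ v, C u v * x v = ρ * x u) : ∃ c, ∀ v, x v = c * p v := by
  obtain ⟨w, -, hw⟩ := Finset.exists_min_image Finset.univ (fun v => x v / p v) Finset.univ_nonempty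
  refine ⟨x w / p w, fun v => ?_⟩
  have := zero_of_reach hC hconn (y := fun v => x v - x w / p w * p v) (ρ := ρ) (fun v => ?_)
    (fun u => ?_) (u := w) (by simp [(hp w).ne'])
  · have := congrFun this v
    simp only [Pi.zero_apply] at this
    linarith
  · have := hw v (Finset.mem_univ _)
    rw [le_div_iff₀ (hp v)] at this
    linarith
  · simp only [mul_sub, Finset.sum_sub_distrib, hx]
    have h1 : ∑ v, C u v * (x w / p w * p v) = x w / p w * ∑ v, C u v * p v := by
      rw [Finset.mul_sum]
      exact Finset.sum_congr rfl fun v _ => by ring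
    rw [h1, he]
    ring

/-- Any two vertices are joined by a path of edges of the two graphs. -/
def Conn (A B : W → W → ℕ) : Prop :=
  ∀ u v, Relation.ReflTransGen (fun u v => A u v ≠ 0 ∨ B u v ≠ 0) u v

/-- Commuting matrices on a connected bigraph have a common positive eigenvector. -/
theorem joint_eigen [Nonempty W] {A B : W → W → ℕ} (hAB : GoodPair A B) (hconn : Conn A B) :
    ∃ (p : W → ℝ) (l m : ℝ), (∀ v, 0 < p v) ∧ (∀ u, ∑ v, (A u v : ℝ) * p v = l * p u) ∧
      ∀ u, ∑ v, (B u v : ℝ) * p v = m * p u := by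
  set C : W → W → ℝ := fun u v => (A u v : ℝ) + B u v with hCdef
  have hs : ∀ u v, C u v = C v u := fun u v => by
    simp only [C, hAB.symA u v, hAB.symB u v]
  have hC : ∀ u v, 0 ≤ C u v := fun u v => by positivity
  have hco : ∀ u v, Relation.ReflTransGen (fun u v => C u v ≠ 0) u v := by
    intro u v
    refine Relation.ReflTransGen.mono (r := fun u v => A u v ≠ 0 ∨ B u v ≠ 0) (fun a b hab => ?_)
      _ _ (hconn u v)
    have : A a b + B a b ≠ 0 := by omega
    simp only [C]
    exact_mod_cast this
  obtain ⟨p, ρ, hp, he⟩ := perron hs hC hco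
  have hcomm : ∀ u v, ∑ w, (A u w : ℝ) * B w v = ∑ w, (B u w : ℝ) * A w v := fun u v => by
    exact_mod_cast hAB.comm u v
  have hsplit : ∀ (x : W → ℝ) u, ∑ v, C u v * x v = ∑ v, (A u v : ℝ) * x v + ∑ v, (B u v : ℝ) * x v := by
    intro x u
    simp only [C, add_mul, Finset.sum_add_distrib]
  have hassoc : ∀ (M N : W → W → ℝ) (x : W → ℝ) u, ∑ v, M u v * ∑ w, N v w * x w =
      ∑ w, (∑ v, M u v * N v w) * x w := by
    intro M N x u
    simp only [Finset.mul_sum, Finset.sum_mul]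
    rw [Finset.sum_comm]
    simp only [mul_assoc]
  have hA : ∀ u, ∑ v, C u v * (∑ w, (A v w : ℝ) * p w) = ρ * ∑ w, (A u w : ℝ) * p w := by
    intro u
    rw [hsplit, hassoc (fun u v => (B u v : ℝ)) (fun u v => (A u v : ℝ)) p u]
    simp only [← hcomm]
    rw [← hassoc (fun u v => (A u v : ℝ)) (fun u v => (B u v : ℝ)), ← Finset.sum_add_distrib]
    rw [Finset.mul_sum]
    refine Finset.sum_congr rfl fun v _ => ?_
    rw [← mul_add, ← hsplit, he]
    ring
  obtain ⟨l, hl⟩ := perron_unique hC hco hp he hA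
  refine ⟨p, l, ρ - l, hp, hl, fun u => ?_⟩
  have := he u
  rw [hsplit, hl] at this
  linarith

end

/-! ### Evaluation of rational functions at positive points -/

section
variable {V : Type} [Fintype V] [DecidableEq V]

/-- The rational function `f` is defined at the real point `ξ` and takes the value `x` there. -/
def EvalsTo (ξ : V → ℝ) (f : FractionRing (MvPolynomial V ℚ)) (x : ℝ) : Prop :=
  ∃ P Q : MvPolynomial V ℚ, f * algebraMap _ _ Q = algebraMap _ _ P ∧
    MvPolynomial.aeval ξ Q ≠ 0 ∧ MvPolynomial.aeval ξ P = x * MvPolynomial.aeval ξ Q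

namespace EvalsTo
variable {ξ : V → ℝ} {f g : FractionRing (MvPolynomial V ℚ)} {x y : ℝ}

theorem of_X (v : V) : EvalsTo ξ (algebraMap (MvPolynomial V ℚ) _ (MvPolynomial.X v)) (ξ v) :=
  ⟨MvPolynomial.X v, 1, by simp, by simp, by simp⟩

theorem one : EvalsTo ξ 1 1 := ⟨1, 1, by simp, by simp, by simp⟩

theorem mul (hf : EvalsTo ξ f x) (hg : EvalsTo ξ g y) : EvalsTo ξ (f * g) (x * y) := by
  obtain ⟨P, Q, h1, h2, h3⟩ := hf
  obtain ⟨P', Q', h1', h2', h3'⟩ := hg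
  refine ⟨P * P', Q * Q', ?_, ?_, ?_⟩
  · rw [map_mul, map_mul, ← h1, ← h1']; ring
  · rw [map_mul]; exact mul_ne_zero h2 h2'
  · rw [map_mul, map_mul, h3, h3']; ring

theorem add (hf : EvalsTo ξ f x) (hg : EvalsTo ξ g y) : EvalsTo ξ (f + g) (x + y) := by
  obtain ⟨P, Q, h1, h2, h3⟩ := hf
  obtain ⟨P', Q', h1', h2', h3'⟩ := hg
  refine ⟨P * Q' + P' * Q, Q * Q', ?_, ?_, ?_⟩
  · simp only [map_mul, map_add, ← h1, ← h1']; ring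
  · rw [map_mul]; exact mul_ne_zero h2 h2'
  · simp only [map_mul, map_add, h3, h3']; ring

theorem ne_zero (hf : EvalsTo ξ f x) (hx : x ≠ 0) : f ≠ 0 := by
  rintro rfl
  obtain ⟨P, Q, h1, h2, h3⟩ := hf
  rw [zero_mul] at h1
  have : P = 0 := (IsFractionRing.injective (MvPolynomial V ℚ)
    (FractionRing (MvPolynomial V ℚ))) (by rw [← h1, map_zero])
  rw [this, map_zero] at h3
  exact mul_ne_zero hx h2 h3.symm

theorem inv (hf : EvalsTo ξ f x) (hx : x ≠ 0) : EvalsTo ξ f⁻¹ x⁻¹ := by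
  have h0 := hf.ne_zero hx
  obtain ⟨P, Q, h1, h2, h3⟩ := hf
  refine ⟨Q, P, ?_, ?_, ?_⟩
  · rw [← h1, inv_mul_cancel_left₀ h0]
  · rw [h3]; exact mul_ne_zero hx h2
  · rw [h3, inv_mul_cancel_left₀ hx]

theorem pow (hf : EvalsTo ξ f x) (n : ℕ) : EvalsTo ξ (f ^ n) (x ^ n) := by
  induction n with
  | zero => simpa using one
  | succ n ih => rw [pow_succ, pow_succ]; exact ih.mul hf

theorem prod_pow {F : V → FractionRing (MvPolynomial V ℚ)} {z : V → ℝ} {a : V → ℕ}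
    (h : ∀ u, a u ≠ 0 → EvalsTo ξ (F u) (z u)) :
    EvalsTo ξ (∏ u, F u ^ a u) (∏ u, z u ^ a u) := by
  have : ∀ s : Finset V, EvalsTo ξ (∏ u ∈ s, F u ^ a u) (∏ u ∈ s, z u ^ a u) := by
    intro s
    induction s using Finset.induction_on with
    | empty => simpa using one
    | insert u s hu ih =>
      rw [Finset.prod_insert hu, Finset.prod_insert hu]
      refine EvalsTo.mul ?_ ih
      by_cases h0 : a u = 0
      · simpa [h0] using one
      · exact (h u h0).pow _
  exact this _

theorem frac (hf : EvalsTo ξ f x) {P Q : MvPolynomial V ℚ}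
    (h : f * algebraMap _ _ Q = algebraMap _ _ P) :
    MvPolynomial.aeval ξ P = x * MvPolynomial.aeval ξ Q := by
  obtain ⟨P', Q', h1, h2, h3⟩ := hf
  have h4 : P * Q' = P' * Q := IsFractionRing.injective (MvPolynomial V ℚ)
    (FractionRing (MvPolynomial V ℚ)) (by rw [map_mul, map_mul, ← h, ← h1]; ring)
  have h5 := congrArg (MvPolynomial.aeval ξ) h4
  rw [map_mul, map_mul, h3] at h5
  refine mul_right_cancel₀ h2 ?_
  linear_combination h5

theorem unique (hf : EvalsTo ξ f x) (hf' : EvalsTo ξ f y) : x = y := by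
  obtain ⟨P, Q, h1, h2, h3⟩ := hf
  have := hf'.frac h1
  exact mul_right_cancel₀ h2 (h3.symm.trans this)

end EvalsTo

/-- Rational functions with the same values at all positive points are equal. -/
theorem eq_of_evalsTo {f g : FractionRing (MvPolynomial V ℚ)}
    (h : ∀ ξ : V → ℝ, (∀ v, 0 < ξ v) → ∃ x, EvalsTo ξ f x ∧ EvalsTo ξ g x) : f = g := by
  obtain ⟨P, Q, hQ, rfl⟩ := IsFractionRing.div_surjective (A := MvPolynomial V ℚ) f
  obtain ⟨P', Q', hQ', rfl⟩ := IsFractionRing.div_surjective (A := MvPolynomial V ℚ) g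
  have hq : algebraMap (MvPolynomial V ℚ) (FractionRing (MvPolynomial V ℚ)) Q ≠ 0 :=
    IsFractionRing.to_map_ne_zero_of_mem_nonZeroDivisors hQ
  have hq' : algebraMap (MvPolynomial V ℚ) (FractionRing (MvPolynomial V ℚ)) Q' ≠ 0 :=
    IsFractionRing.to_map_ne_zero_of_mem_nonZeroDivisors hQ'
  rw [div_eq_div_iff hq hq', ← map_mul, ← map_mul]
  congr 1
  refine MvPolynomial.funext_set (fun _ => Set.Ioi (0 : ℚ)) (fun _ => Set.Ioi_infinite 0) ?_
  intro r hr
  obtain ⟨x, hx, hx'⟩ := h (fun v => (r v : ℝ)) fun v => by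
    have : 0 < r v := hr v (Set.mem_univ v)
    exact_mod_cast this
  have e := hx.frac (div_mul_cancel₀ _ hq)
  have e' := hx'.frac (div_mul_cancel₀ _ hq')
  have key : MvPolynomial.aeval (fun v => (r v : ℝ)) (P * Q') =
      MvPolynomial.aeval (fun v => (r v : ℝ)) (P' * Q) := by
    rw [map_mul, map_mul, e, e']; ring
  have cast : ∀ R : MvPolynomial V ℚ, MvPolynomial.aeval (fun v => (r v : ℝ)) R =
      ((MvPolynomial.eval r R : ℚ) : ℝ) := by
    intro R
    have := MvPolynomial.aeval_algebraMap_apply ℝ r R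
    rw [show (fun v => (r v : ℝ)) = algebraMap ℚ ℝ ∘ r from rfl, this, MvPolynomial.aeval_eq_eval]
    rfl
  rw [cast, cast] at key
  exact_mod_cast key

/-- A full `T`-system in positive reals: all vertices carry a value at all times. -/
structure RealSol (A B : V → V → ℕ) (X : ℤ → V → ℝ) : Prop where
  pos : ∀ t v, 0 < X t v
  step : ∀ t v, X (t + 1) v * X (t - 1) v = ∏ u, X t u ^ A v u + ∏ u, X t u ^ B v u

/-- A `T`-system can be evaluated at any positive point. The values at the pairs `(t, v)` of the
wrong parity are filled in by delaying the system by one time step. -/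
theorem exists_realSol {eps : V → ℤ} {A B : V → V → ℕ} (hQ : BipartiteData eps A B)
    {T : ℤ → V → FractionRing (MvPolynomial V ℚ)} (hT : IsTSystem eps A B T) {ξ : V → ℝ}
    (hξ : ∀ v, 0 < ξ v) :
    ∃ X : ℤ → V → ℝ, RealSol A B X ∧ (∀ t v, Even (t + eps v) → EvalsTo ξ (T t v) (X t v)) ∧
      (∀ t v, Odd (t + eps v) → X t v = X (t + 1) v) ∧ ∀ v, X 0 v = ξ v := by
  obtain ⟨hcol, -, -, -, -, hbip, -⟩ := hQ
  obtain ⟨hinit, hstep⟩ := hT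
  have par : ∀ {t : ℤ} {u v}, eps u ≠ eps v → Odd (t + eps v) → Even (t + eps u) := by
    intro t u v hne ho
    rcases hcol u with h | h <;> rcases hcol v with h' | h' <;> rw [h] at hne ⊢ <;>
      rw [h'] at hne ho <;> grind
  have hex : ∀ t : ℤ, (∀ v, ∃ x, 0 < x ∧ (Even (t + eps v) → EvalsTo ξ (T t v) x)) ∧
      ∀ v, ∃ x, 0 < x ∧ (Even (t + 1 + eps v) → EvalsTo ξ (T (t + 1) v) x) := by
    have stepE : ∀ (t : ℤ) v, Odd (t + eps v) →
        (∀ v, ∃ x, 0 < x ∧ (Even (t + eps v) → EvalsTo ξ (T t v) x)) →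
        ∃ x, 0 < x ∧ EvalsTo ξ (∏ u, T t u ^ A v u + ∏ u, T t u ^ B v u) x := by
      intro t v ho h
      choose z hz hzE using h
      refine ⟨∏ u, z u ^ A v u + ∏ u, z u ^ B v u, add_pos
        (Finset.prod_pos fun u _ => pow_pos (hz u) _) (Finset.prod_pos fun u _ => pow_pos (hz u) _),
        EvalsTo.add (EvalsTo.prod_pow fun u hu => hzE u (par ?_ ho))
          (EvalsTo.prod_pow fun u hu => hzE u (par ?_ ho))⟩
      · exact fun h => hu (hbip v u h.symm).1
      · exact fun h => hu (hbip v u h.symm).2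
    intro t
    induction t using Int.induction_on with
    | zero =>
      refine ⟨fun v => ⟨ξ v, hξ v, fun he => ?_⟩, fun v => ⟨ξ v, hξ v, fun he => ?_⟩⟩
      · have : eps v = 0 := by rcases hcol v with h | h <;> rw [h] at he ⊢ <;> grind
        rw [← this, hinit]; exact EvalsTo.of_X v
      · have : eps v = 1 := by rcases hcol v with h | h <;> rw [h] at he ⊢ <;> grind
        rw [zero_add, ← this, hinit]; exact EvalsTo.of_X v
    | succ n ih =>
      refine ⟨ih.2, fun v => ?_⟩
      by_cases he : Even ((n : ℤ) + 1 + 1 + eps v)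
      · have ho : Odd ((n : ℤ) + 1 + eps v) := by grind
        obtain ⟨x, hx, hE⟩ := stepE _ v ho ih.2
        obtain ⟨y, hy, hyE⟩ := ih.1 v
        have hy' := hyE (by grind)
        refine ⟨x * y⁻¹, by positivity, fun _ => ?_⟩
        have := hstep _ v ho
        rw [add_sub_cancel_right] at this
        rw [(eq_mul_inv_iff_mul_eq₀ (hy'.ne_zero hy.ne')).2 this]
        exact hE.mul (hy'.inv hy.ne')
      · exact ⟨1, one_pos, fun h => absurd h he⟩
    | pred n ih =>
      have e : -(n : ℤ) - 1 + 1 = -n := by ring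
      rw [e]
      refine ⟨fun v => ?_, ih.1⟩
      by_cases he : Even (-(n : ℤ) - 1 + eps v)
      · have ho : Odd (-(n : ℤ) + eps v) := by grind
        obtain ⟨x, hx, hE⟩ := stepE _ v ho ih.1
        obtain ⟨y, hy, hyE⟩ := ih.2 v
        have hy' := hyE (by grind)
        refine ⟨x * y⁻¹, by positivity, fun _ => ?_⟩
        have := hstep _ v ho
        rw [mul_comm] at this
        rw [(eq_mul_inv_iff_mul_eq₀ (hy'.ne_zero hy.ne')).2 this]
        exact hE.mul (hy'.inv hy.ne')
      · exact ⟨1, one_pos, fun h => absurd h he⟩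
  choose Z hZ hZE using fun t => (hex t).1
  classical
  set X : ℤ → V → ℝ := fun t v => if Even (t + eps v) then Z t v else Z (t + 1) v with hX
  have hXe : ∀ {t v}, Even (t + eps v) → X t v = Z t v := fun h => if_pos h
  have hXo : ∀ {t v}, Odd (t + eps v) → X t v = Z (t + 1) v := fun h =>
    if_neg (Int.not_even_iff_odd.2 h)
  have hodd : ∀ t v, Odd (t + eps v) → X t v = X (t + 1) v := fun t v h => by
    rw [hXo h, hXe (by grind)]
  have hE : ∀ t v, Even (t + eps v) → EvalsTo ξ (T t v) (X t v) := fun t v h => by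
    rw [hXe h]; exact hZE t v h
  have hrel : ∀ t v, Odd (t + eps v) →
      X (t + 1) v * X (t - 1) v = ∏ u, X t u ^ A v u + ∏ u, X t u ^ B v u := by
    intro t v ho
    have h1 := (hE (t + 1) v (by grind)).mul (hE (t - 1) v (by grind))
    rw [hstep t v ho] at h1
    refine h1.unique (EvalsTo.add (EvalsTo.prod_pow fun u hu => hE t u (par ?_ ho))
          (EvalsTo.prod_pow fun u hu => hE t u (par ?_ ho)))
    · exact fun h => hu (hbip v u h.symm).1
    · exact fun h => hu (hbip v u h.symm).2
  have hprod : ∀ (t : ℤ) v (M : V → V → ℕ), (∀ u, eps v = eps u → M v u = 0) → Even (t + eps v) →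
      ∏ u, X (t + 1) u ^ M v u = ∏ u, X t u ^ M v u := by
    intro t v M hM he
    refine Finset.prod_congr rfl fun u _ => ?_
    by_cases hu : eps v = eps u
    · rw [hM u hu, pow_zero, pow_zero]
    · rw [hodd t u]
      rcases hcol u with h | h <;> rcases hcol v with h' | h' <;> rw [h] at hu ⊢ <;>
        rw [h'] at hu he <;> grind
  refine ⟨X, ⟨fun t v => ?_, fun t v => ?_⟩, hE, hodd, fun v => ?_⟩
  · simp only [hX]; split_ifs <;> exact hZ _ _
  · rcases Int.even_or_odd (t + eps v) with he | ho
    · rw [hodd (t + 1) v (by grind), hodd (t - 1) v (by grind),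
        ← hprod t v A (fun u h => (hbip v u h).1) he, ← hprod t v B (fun u h => (hbip v u h).2) he,
        ← hrel (t + 1) v (by grind)]
      congr 2 <;> ring
    · exact hrel t v ho
  · rcases hcol v with h | h
    · have := hE 0 v (by rw [h]; simp)
      have h2 := hinit v
      rw [h] at h2
      rw [h2] at this
      exact this.unique (EvalsTo.of_X v)
    · rw [hodd 0 v (by rw [h]; simp), zero_add]
      have := hE 1 v (by rw [h]; decide)
      have h2 := hinit v
      rw [h] at h2
      rw [h2] at this
      exact this.unique (EvalsTo.of_X v)

end

/-! ### Restriction to a connected component of the bigraph -/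

section
variable {V : Type} [Fintype V] [DecidableEq V]

/-- A common period of all positive real solutions is a period of the rational functions. -/
theorem tsystem_periodic_of_real {eps : V → ℤ} {A B : V → V → ℕ} (hQ : BipartiteData eps A B)
    {T : ℤ → V → FractionRing (MvPolynomial V ℚ)} (hT : IsTSystem eps A B T) {N : ℕ}
    (h : ∀ X, RealSol A B X → ∀ t v, X (t + 2 * N) v = X t v) (v : V) (t : ℤ)
    (he : Even (t + eps v)) : T (t + 2 * N) v = T t v := by
  refine eq_of_evalsTo fun ξ hξ => ?_
  obtain ⟨X, hX, hE, -, -⟩ := exists_realSol hQ hT hξ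
  refine ⟨X t v, ?_, hE t v he⟩
  rw [← h X hX t v]
  exact hE _ v (by grind)

theorem real_periodic_of_tsystem {eps : V → ℤ} {A B : V → V → ℕ} (hQ : BipartiteData eps A B)
    {T : ℤ → V → FractionRing (MvPolynomial V ℚ)} (hT : IsTSystem eps A B T) {N : ℕ}
    (h : ∀ v t, Even (t + eps v) → T (t + 2 * N) v = T t v) {ξ : V → ℝ} (hξ : ∀ v, 0 < ξ v) :
    ∃ X, RealSol A B X ∧ (∀ t v, X (t + 2 * N) v = X t v) ∧ ∀ v, X 0 v = ξ v := by
  obtain ⟨X, hX, hE, ho, h0⟩ := exists_realSol hQ hT hξ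
  have he : ∀ t v, Even (t + eps v) → X (t + 2 * N) v = X t v := by
    intro t v het
    have := hE (t + 2 * N) v (by grind)
    rw [h v t het] at this
    exact this.unique (hE t v het)
  refine ⟨X, hX, fun t v => ?_, h0⟩
  rcases Int.even_or_odd (t + eps v) with hp | hp
  · exact he t v hp
  · rw [ho t v hp, ho (t + 2 * N) v (by grind), ← he (t + 1) v (by grind)]
    congr 1; ring

variable {A B : V → V → ℕ} {S : V → Prop} [DecidablePred S]

/-- The set of vertices `S` is a union of components of the bigraph. -/
def Closed (A B : V → V → ℕ) (S : V → Prop) : Prop :=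
  ∀ u v, S u → (A u v ≠ 0 ∨ B u v ≠ 0) → S v

/-- The matrix `A` restricted to the vertices in `S`. -/
def rst (A : V → V → ℕ) (S : V → Prop) (u v : {v // S v}) : ℕ := A u v

theorem Closed.swap (h : Closed A B S) : Closed B A S := fun u v hu hv => h u v hu hv.symm

theorem Closed.sum {R : Type} [CommSemiring R] (h : Closed A B S) (u : {v // S v}) (f : V → R) :
    ∑ v : {v // S v}, (rst A S u v : R) * f v = ∑ v, (A u v : R) * f v := by
  refine Fintype.sum_of_injective Subtype.val Subtype.val_injective _ _ (fun v hv => ?_)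
    (fun v => rfl)
  by_cases h0 : A u v = 0
  · rw [h0, Nat.cast_zero, zero_mul]
  · exact absurd ⟨⟨v, h u v u.2 (Or.inl h0)⟩, rfl⟩ hv

theorem Closed.prod (h : Closed A B S) (u : {v // S v}) (f : V → ℝ) :
    ∏ v : {v // S v}, f v ^ rst A S u v = ∏ v, f v ^ A u v := by
  refine Fintype.prod_of_injective Subtype.val Subtype.val_injective _ _ (fun v hv => ?_)
    (fun v => rfl)
  by_cases h0 : A u v = 0
  · rw [h0, pow_zero]
  · exact absurd ⟨⟨v, h u v u.2 (Or.inl h0)⟩, rfl⟩ hv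

theorem Closed.goodPair (h : Closed A B S) (hAB : GoodPair A B) : GoodPair (rst A S) (rst B S) where
  symA u v := hAB.symA _ _
  symB u v := hAB.symB _ _
  disj u v := hAB.disj _ _
  comm u v := by
    have h1 := h.sum (R := ℕ) u (fun w => B w v)
    have h2 := h.swap.sum (R := ℕ) u (fun w => A w v)
    simp only [Nat.cast_id] at h1 h2
    exact h1.trans ((hAB.comm u v).trans h2.symm)

theorem Closed.realSol (h : Closed A B S) {X : ℤ → V → ℝ} (hX : RealSol A B X) :
    RealSol (rst A S) (rst B S) fun t v => X t v where
  pos t v := hX.pos t v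
  step t v := by rw [hX.step, h.prod v (X t), h.swap.prod v (X t)]

/-- The component of `v₀` in the bigraph. -/
def InComp (A B : V → V → ℕ) (v₀ : V) (v : V) : Prop :=
  Relation.ReflTransGen (fun u v => A u v ≠ 0 ∨ B u v ≠ 0) v₀ v

theorem closed_inComp (v₀ : V) : Closed A B (InComp A B v₀) := fun _ _ hu huv => hu.tail huv

theorem conn_inComp (hAB : GoodPair A B) (v₀ : V) :
    Conn (rst A (InComp A B v₀)) (rst B (InComp A B v₀)) := by
  have h1 : ∀ v (hv : InComp A B v₀ v), Relation.ReflTransGen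
      (fun u v => rst A (InComp A B v₀) u v ≠ 0 ∨ rst B (InComp A B v₀) u v ≠ 0)
      ⟨v₀, Relation.ReflTransGen.refl⟩ ⟨v, hv⟩ := by
    intro v hv
    induction hv with
    | refl => exact Relation.ReflTransGen.refl
    | tail hb hbc ih => exact ih.tail hbc
  intro u v
  refine Relation.ReflTransGen.trans ?_ (h1 v v.2)
  have : Std.Symm fun u v : {v // InComp A B v₀ v} =>
      rst A (InComp A B v₀) u v ≠ 0 ∨ rst B (InComp A B v₀) u v ≠ 0 := ⟨fun a b hab => ?_⟩
  · exact Relation.ReflTransGen.stdSymm.symm _ _ (h1 u u.2)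
  rcases hab with h | h
  · exact Or.inl (by rwa [rst, hAB.symA])
  · exact Or.inr (by rwa [rst, hAB.symB])

end

section
variable {W : Type} [Fintype W] [DecidableEq W]

theorem RealSol.swap {A B : W → W → ℕ} {X : ℤ → W → ℝ} (h : RealSol A B X) : RealSol B A X :=
  ⟨h.pos, fun t v => by rw [h.step, add_comm]⟩

/-- If a solution which is greater than one at time zero is periodic, then the graph has top
eigenvalue less than two: otherwise `∑ v, p v * log (X t v)` would be strictly convex where it is
largest. -/
theorem RealSol.eig_lt_two [Nonempty W] {A B : W → W → ℕ} {X : ℤ → W → ℝ} (hX : RealSol A B X)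
    {N : ℤ} (hN : 0 < N) (hper : ∀ t v, X (t + N) v = X t v) (h1 : ∀ v, 1 < X 0 v)
    (hsym : ∀ u v, A u v = A v u) {p : W → ℝ} {l : ℝ} (hp : ∀ v, 0 < p v)
    (he : ∀ u, ∑ v, (A u v : ℝ) * p v = l * p u) : l < 2 := by
  set L : ℤ → ℝ := fun t => ∑ v, p v * Real.log (X t v) with hL
  have hLper : Function.Periodic L N := fun t => by simp only [hL, hper]
  have hL0 : 0 < L 0 := Finset.sum_pos (fun v _ => mul_pos (hp v) (Real.log_pos (h1 v)))
    Finset.univ_nonempty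
  obtain ⟨s, -, hs⟩ := Finset.exists_max_image (Finset.Ico 0 N) L ⟨0, by simp [hN]⟩
  have hmax : ∀ t, L t ≤ L s := fun t => by
    obtain ⟨y, hy, hty⟩ := hLper.exists_mem_Ico₀ hN t
    rw [hty]
    exact hs y (by simpa using hy)
  have hconv : l * L s < L (s + 1) + L (s - 1) := by
    have e1 : L (s + 1) + L (s - 1) = ∑ v, p v * Real.log (X (s + 1) v * X (s - 1) v) := by
      rw [hL, ← Finset.sum_add_distrib]
      refine Finset.sum_congr rfl fun v _ => ?_
      rw [Real.log_mul (hX.pos _ v).ne' (hX.pos _ v).ne', mul_add]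
    have e2 : l * L s = ∑ v, p v * Real.log (∏ u, X s u ^ A v u) := by
      have : ∀ v, Real.log (∏ u, X s u ^ A v u) = ∑ u, (A v u : ℝ) * Real.log (X s u) := by
        intro v
        rw [Real.log_prod fun u _ => (pow_pos (hX.pos _ u) _).ne']
        exact Finset.sum_congr rfl fun u _ => Real.log_pow _ _
      simp only [this, Finset.mul_sum]
      rw [Finset.sum_comm]
      rw [hL, Finset.mul_sum]
      refine Finset.sum_congr rfl fun v _ => ?_
      rw [← mul_assoc, ← he, Finset.sum_mul]
      refine Finset.sum_congr rfl fun u _ => ?_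
      rw [hsym v u]; ring
    rw [e1, e2]
    refine Finset.sum_lt_sum_of_nonempty Finset.univ_nonempty fun v _ => ?_
    refine mul_lt_mul_of_pos_left (Real.log_lt_log
      (Finset.prod_pos fun u _ => pow_pos (hX.pos _ u) _) ?_) (hp v)
    rw [hX.step]
    exact lt_add_of_pos_right _ (Finset.prod_pos fun u _ => pow_pos (hX.pos _ u) _)
  have hpos : 0 < L s := hL0.trans_le (hmax 0)
  have h2 := hmax (s + 1)
  have h3 := hmax (s - 1)
  by_contra hcon
  nlinarith

end

section
variable {V : Type} [Fintype V] [DecidableEq V] {eps : V → ℤ} {A B : V → V → ℕ}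

theorem BipartiteData.goodPair (hQ : BipartiteData eps A B) (hrec : RecurrentQuiver A B) :
    GoodPair A B where
  symA := hQ.2.1
  symB := hQ.2.2.1
  disj u v := mul_eq_zero.1 (hQ.2.2.2.2.2.2 u v)
  comm := hrec

open Classical in
/-- All components of the bigraph have a common positive eigenvector with eigenvalues less than
two. -/
def SmallEig (A B : V → V → ℕ) : Prop :=
  ∀ v₀, ∃ (p : {v // InComp A B v₀ v} → ℝ) (l m : ℝ), (∀ v, 0 < p v) ∧
    (∀ u, ∑ v, (rst A (InComp A B v₀) u v : ℝ) * p v = l * p u) ∧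
    (∀ u, ∑ v, (rst B (InComp A B v₀) u v : ℝ) * p v = m * p u) ∧ l < 2 ∧ m < 2

open Classical in
theorem smallEig_of_periodic (hQ : BipartiteData eps A B) (hrec : RecurrentQuiver A B)
    {T : ℤ → V → FractionRing (MvPolynomial V ℚ)} (hT : IsTSystem eps A B T) {N : ℕ} (hN : 0 < N)
    (h : ∀ v t, Even (t + eps v) → T (t + 2 * N) v = T t v) : SmallEig A B := by
  intro v₀
  have hAB := hQ.goodPair hrec
  obtain ⟨X, hX, hper, h0⟩ := real_periodic_of_tsystem hQ hT h (ξ := fun _ => 2) fun _ => two_pos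
  have hcl := closed_inComp (A := A) (B := B) v₀
  have : Nonempty {v // InComp A B v₀ v} := ⟨⟨v₀, Relation.ReflTransGen.refl⟩⟩
  obtain ⟨p, l, m, hp, hl, hm⟩ := joint_eigen (hcl.goodPair hAB) (conn_inComp hAB v₀)
  have hXr := hcl.realSol hX
  have hN' : (0 : ℤ) < 2 * N := by positivity
  refine ⟨p, l, m, hp, hl, hm, ?_, ?_⟩
  · exact hXr.eig_lt_two hN' (fun t v => hper t v) (fun v => by rw [h0]; norm_num)
      (fun u v => hAB.symA _ _) hp hl
  · exact hXr.swap.eig_lt_two hN' (fun t v => hper t v) (fun v => by rw [h0]; norm_num)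
      (fun u v => hAB.symB _ _) hp hm

open Classical in
theorem periodic_of_smallEig (hQ : BipartiteData eps A B) (hrec : RecurrentQuiver A B)
    {T : ℤ → V → FractionRing (MvPolynomial V ℚ)} (hT : IsTSystem eps A B T) (h : SmallEig A B) :
    ∃ N : ℕ, 0 < N ∧ ∀ v t, Even (t + eps v) → T (t + 2 * N) v = T t v := by
  have hAB := hQ.goodPair hrec
  have key : ∀ v₀, ∃ P : ℕ, 0 < P ∧ ∀ X, RealSol A B X → ∀ t, X (t + P) v₀ = X t v₀ := by
    intro v₀
    obtain ⟨p, l, m, hp, hl, hm, hl2, hm2⟩ := h v₀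
    have hcl := closed_inComp (A := A) (B := B) v₀
    have dA : Dynkin (fun v : {v // InComp A B v₀ v} => eps v) (rst A _) p l :=
      ⟨fun v => hQ.1 v, fun u v huv => (hQ.2.2.2.2.2.1 u v huv).1, fun u v => hAB.symA _ _, hp, hl,
        hl2⟩
    have dB : Dynkin (fun v : {v // InComp A B v₀ v} => eps v) (rst B _) p m :=
      ⟨fun v => hQ.1 v, fun u v huv => (hQ.2.2.2.2.2.1 u v huv).2, fun u v => hAB.symB _ _, hp, hm,
        hm2⟩
    obtain ⟨P, hP, hX⟩ := Dynkin.periodic dA dB (hcl.goodPair hAB)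
    refine ⟨P, hP, fun X hsol t => ?_⟩
    have := (hX (fun n v => X (t + n) v) (fun n v => hsol.pos _ _) (fun n v => ?_)).1
    · have := congrFun this ⟨v₀, Relation.ReflTransGen.refl⟩
      simpa using this
    · have := (hcl.realSol hsol).step (t + n + 1) v
      rw [add_sub_cancel_right] at this
      push_cast
      rw [show t + ((n : ℤ) + 2) = t + n + 1 + 1 by ring, show t + ((n : ℤ) + 1) = t + n + 1 by ring]
      exact this
  choose P hP hPX using key
  refine ⟨∏ v, P v, Finset.prod_pos fun v _ => hP v, ?_⟩
  refine tsystem_periodic_of_real hQ hT fun X hX t v => ?_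
  obtain ⟨k, hk⟩ := Finset.dvd_prod_of_mem P (Finset.mem_univ v)
  have hmul : ∀ (n : ℕ) t, X (t + n * P v) v = X t v := by
    intro n
    induction n with
    | zero => intro t; simp
    | succ n ih =>
      intro t
      rw [← ih t, ← hPX v X hX (t + n * P v)]
      congr 1; push_cast; ring
  rw [← hmul (2 * k) t, hk]
  congr 1; push_cast; ring

end

/-! ### Labelled graphs -/

section
variable {U : Type} [Fintype U] [DecidableEq U] {G : SimpleGraph U}

open Classical in
/-- No nonzero nonnegative function is dominated by half the sum of its values at the neighbours. -/
def Pos (G : SimpleGraph U) : Prop :=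
  ∀ d : U → ℕ, (∀ u, d u ≠ 0 → 2 * d u ≤ ∑ w with G.Adj u w, d w) → ∀ u, d u = 0

/-- The vertices are numbered `0, …, n - 1` by `L`, with adjacency given by `R`. -/
structure IsLab (G : SimpleGraph U) (n : ℕ) (R : ℕ → ℕ → Prop) (L : U → ℕ) : Prop where
  inj : Function.Injective L
  lt : ∀ u, L u < n
  surj : ∀ a < n, ∃ u, L u = a
  adj : ∀ u w, G.Adj u w ↔ R (L u) (L w)

theorem IsLab.relabel {n : ℕ} {R R' : ℕ → ℕ → Prop} {L : U → ℕ} (h : IsLab G n R L) (s : ℕ → ℕ)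
    (hs : ∀ a < n, s a < n) (hi : ∀ a < n, ∀ b < n, s a = s b → a = b)
    (hR : ∀ a < n, ∀ b < n, (R a b ↔ R' (s a) (s b))) : IsLab G n R' (s ∘ L) where
  inj u w huw := h.inj (hi _ (h.lt u) _ (h.lt w) huw)
  lt u := hs _ (h.lt u)
  surj a ha := by
    have h1 : Set.SurjOn s (Finset.range n) (Finset.range n) :=
      Finset.surjOn_of_injOn_of_card_le s (fun a ha => by
        simpa using hs a (by simpa using ha)) (fun a ha b hb hab =>
        hi a (by simpa using ha) b (by simpa using hb) hab) le_rfl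
    obtain ⟨b, hb, rfl⟩ := h1 (by simpa using ha : a ∈ _)
    obtain ⟨u, rfl⟩ := h.surj b (by simpa using hb)
    exact ⟨u, rfl⟩
  adj u w := by rw [h.adj, hR _ (h.lt u) _ (h.lt w)]; rfl

/-- A labelled graph does not have the property `Pos` if a nonzero `D` satisfies the forbidden
inequality; it suffices to sum over some of the neighbours. -/
theorem IsLab.not_pos {n : ℕ} {R : ℕ → ℕ → Prop} {L : U → ℕ} (h : IsLab G n R L) (hG : Pos G)
    (D : ℕ → ℕ) (hD : ∃ a < n, D a ≠ 0) (hs : ∀ a < n, D a ≠ 0 → ∃ s : Finset ℕ,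
      (∀ b ∈ s, b < n ∧ R a b) ∧ 2 * D a ≤ ∑ b ∈ s, D b) : False := by
  classical
  obtain ⟨a, ha, hne⟩ := hD
  obtain ⟨u, rfl⟩ := h.surj a ha
  refine hne (hG (fun u => D (L u)) (fun u hu => ?_) u)
  obtain ⟨s, hsR, hle⟩ := hs _ (h.lt u) hu
  refine hle.trans ?_
  rw [← Finset.sum_image (s := Finset.univ.filter fun w => G.Adj u w) (f := D) (g := L)
    h.inj.injOn]
  refine Finset.sum_le_sum_of_subset fun b hb => ?_
  obtain ⟨hbn, hR⟩ := hsR b hb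
  obtain ⟨w, rfl⟩ := h.surj b hbn
  exact Finset.mem_image_of_mem _ (by simpa [h.adj] using hR)

open Classical in
theorem IsLab.sum_le {n : ℕ} {R : ℕ → ℕ → Prop} {L : U → ℕ} (h : IsLab G n R L)
    (D : ℕ → ℕ) (u : U) (s : Finset ℕ) (hs : ∀ b < n, R (L u) b → b ∈ s) :
    ∑ w with G.Adj u w, D (L w) ≤ ∑ b ∈ s, D b := by
  rw [← Finset.sum_image (s := Finset.univ.filter fun w => G.Adj u w) (f := D) (g := L)
    h.inj.injOn]
  refine Finset.sum_le_sum_of_subset fun b hb => ?_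
  obtain ⟨w, hw, rfl⟩ := Finset.mem_image.1 hb
  exact hs _ (h.lt w) ((h.adj u w).1 (by simpa using hw))

theorem IsLab.toIso {n : ℕ} {R : ℕ → ℕ → Prop} {L : U → ℕ} (h : IsLab G n R L)
    (H : SimpleGraph (Fin n)) (hH : ∀ i j : Fin n, H.Adj i j ↔ R i j) : Nonempty (G ≃g H) := by
  have hb : Function.Bijective fun u => (⟨L u, h.lt u⟩ : Fin n) :=
    ⟨fun u w huw => h.inj (congrArg Fin.val huw), fun a => by
      obtain ⟨u, hu⟩ := h.surj a a.2
      exact ⟨u, Fin.ext hu⟩⟩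
  exact ⟨⟨Equiv.ofBijective _ hb, fun {u w} => by rw [hH, h.adj]; rfl⟩⟩

theorem isLab_of_iso {n : ℕ} {H : SimpleGraph (Fin n)} (e : G ≃g H) {R : ℕ → ℕ → Prop}
    (hH : ∀ i j : Fin n, H.Adj i j ↔ R i j) : IsLab G n R fun u => (e u : ℕ) where
  inj u w huw := e.injective (Fin.ext huw)
  lt u := (e u).2
  surj a ha := ⟨e.symm ⟨a, ha⟩, by simp⟩
  adj u w := by rw [← hH]; exact e.map_adj_iff.symm

/-- A path on `0, …, n - 2` with a further vertex `n - 1` attached at `k`. For suitable `k` these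
are all the ADE diagrams with at least two vertices. -/
def YRel (n k a b : ℕ) : Prop :=
  (a + 1 = b ∧ b ≤ n - 2) ∨ (b + 1 = a ∧ a ≤ n - 2) ∨ (a = k ∧ b = n - 1) ∨ (b = k ∧ a = n - 1)

/-- The relation `YRel n k` with a further vertex `n` attached at `i`. -/
def YRel' (n k i a b : ℕ) : Prop :=
  (a + 1 = b ∧ b ≤ n - 2) ∨ (b + 1 = a ∧ a ≤ n - 2) ∨ (a = k ∧ b = n - 1) ∨
    (b = k ∧ a = n - 1) ∨ (a = i ∧ b = n) ∨ (b = i ∧ a = n)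

theorem IsLab.relabelY {n k' : ℕ} {R : ℕ → ℕ → Prop} {L : U → ℕ} (h : IsLab G n R L) (s : ℕ → ℕ)
    (hs : ∀ a < n, s a < n) (hi : ∀ a < n, ∀ b < n, s a = s b → a = b)
    (h1 : ∀ a < n, ∀ b < n, R a b → YRel n k' (s a) (s b))
    (h2 : ∀ a < n, ∀ b < n, YRel n k' (s a) (s b) → R a b) : ∃ L, IsLab G n (YRel n k') L :=
  ⟨_, h.relabel s hs hi fun a ha b hb => ⟨h1 a ha b hb, h2 a ha b hb⟩⟩

theorem IsLab.reflect {n k : ℕ} {L : U → ℕ} (hk : k + 2 ≤ n) (h : IsLab G n (YRel n k) L) :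
    ∃ L, IsLab G n (YRel n (n - 2 - k)) L := by
  refine ⟨_, h.relabel (fun a => if a = n - 1 then a else n - 2 - a) ?_ ?_ ?_⟩
  · intro a ha; split_ifs <;> omega
  · intro a ha b hb; split_ifs <;> omega
  · intro a ha b hb; dsimp only [YRel]; split_ifs <;> omega

theorem IsLab.reflect' {n k i : ℕ} {L : U → ℕ} (hk : k + 2 ≤ n) (hi : i + 2 ≤ n)
    (h : IsLab G (n + 1) (YRel' n k i) L) :
    ∃ L, IsLab G (n + 1) (YRel' n (n - 2 - k) (n - 2 - i)) L := by
  refine ⟨_, h.relabel (fun a => if n - 1 ≤ a then a else n - 2 - a) ?_ ?_ ?_⟩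
  · intro a ha; split_ifs <;> omega
  · intro a ha b hb; split_ifs <;> omega
  · intro a ha b hb
    dsimp only [YRel']
    constructor
    · rintro (h | h | h | h | h | h) <;> split_ifs <;> first
      | (left; omega)
      | (right; left; omega)
      | (right; right; left; omega)
      | (right; right; right; left; omega)
      | (right; right; right; right; left; omega)
      | (right; right; right; right; right; omega)
    · split_ifs <;> rintro (h | h | h | h | h | h) <;> first
      | (left; omega)
      | (right; left; omega)
      | (right; right; left; omega)
      | (right; right; right; left; omega)
      | (right; right; right; right; left; omega)
      | (right; right; right; right; right; omega)

theorem IsLab.reflect'' {n k : ℕ} {L : U → ℕ} (hk : k + 2 ≤ n)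
    (h : IsLab G (n + 1) (YRel' n k (n - 1)) L) :
    ∃ L, IsLab G (n + 1) (YRel' n (n - 2 - k) (n - 1)) L := by
  refine ⟨_, h.relabel (fun a => if n - 1 ≤ a then a else n - 2 - a) ?_ ?_ ?_⟩
  · intro a ha; split_ifs <;> omega
  · intro a ha b hb; split_ifs <;> omega
  · intro a ha b hb
    dsimp only [YRel']
    constructor
    · rintro (h | h | h | h | h | h) <;> split_ifs <;> first
      | (left; omega)
      | (right; left; omega)
      | (right; right; left; omega)
      | (right; right; right; left; omega)
      | (right; right; right; right; left; omega)
      | (right; right; right; right; right; omega)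
    · split_ifs <;> rintro (h | h | h | h | h | h) <;> first
      | (left; omega)
      | (right; left; omega)
      | (right; right; left; omega)
      | (right; right; right; left; omega)
      | (right; right; right; right; left; omega)
      | (right; right; right; right; right; omega)

end

/-! ### Excluded affine diagrams -/

section
variable {U : Type} [Fintype U] [DecidableEq U] {G : SimpleGraph U}

theorem IsLab.not_pos_list {n : ℕ} {R : ℕ → ℕ → Prop} {L : U → ℕ} (h : IsLab G n R L) (hG : Pos G)
    (D : ℕ → ℕ) (hD : ∃ a < n, D a ≠ 0) (hs : ∀ a < n, D a ≠ 0 → ∃ s : List ℕ, s.Nodup ∧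
      (∀ b ∈ s, b < n ∧ R a b) ∧ 2 * D a ≤ (s.map D).sum) : False := by
  refine h.not_pos hG D hD fun a ha hne => ?_
  obtain ⟨s, h1, h2, h3⟩ := hs a ha hne
  refine ⟨s.toFinset, fun b hb => h2 b (List.mem_toFinset.1 hb), ?_⟩
  rwa [List.sum_toFinset _ h1]

/-- The affine diagram of type `D` is not contained in a graph with top eigenvalue less than two. -/
theorem IsLab.not_affineD {n k i : ℕ} {L : U → ℕ} (h : IsLab G (n + 1) (YRel' n k i) L)
    (hG : Pos G) (hk : 1 ≤ k) (hki : k ≤ i) (hi : i + 3 ≤ n) : False := by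
  set D : ℕ → ℕ := fun a => if k ≤ a ∧ a ≤ i then 2 else
    if a + 1 = k ∨ a = i + 1 ∨ a + 1 = n ∨ a = n then 1 else 0 with hD
  have D2 : ∀ a, k ≤ a → a ≤ i → D a = 2 := fun a h1 h2 => if_pos ⟨h1, h2⟩
  have D1 : ∀ a, a + 1 = k ∨ a = i + 1 ∨ a + 1 = n ∨ a = n → D a = 1 := fun a h1 => by
    simp only [hD]; rw [if_neg (by omega), if_pos h1]
  refine h.not_pos_list hG D ⟨k, by omega, by rw [D2 k le_rfl hki]; decide⟩ fun a ha hne => ?_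
  have : (k ≤ a ∧ a ≤ i) ∨ a + 1 = k ∨ a = i + 1 ∨ a + 1 = n ∨ a = n := by
    by_contra hcon
    rw [not_or] at hcon
    exact hne (by simp only [hD]; rw [if_neg hcon.1, if_neg hcon.2])
  rcases this with ⟨h1, h2⟩ | h1 | h1 | h1 | h1
  · rw [D2 a h1 h2]
    rcases h1.eq_or_lt with h1 | h1 <;> rcases h2.eq_or_lt with h2 | h2
    · refine ⟨[a - 1, a + 1, n - 1, n], by simp; omega, ?_, ?_⟩
      · simp only [List.forall_mem_cons, YRel']; grind
      · simp [D1 (a - 1) (by omega), D1 (a + 1) (by omega), D1 (n - 1) (by omega), D1 n (by omega)]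
    · refine ⟨[a - 1, a + 1, n - 1], by simp; omega, ?_, ?_⟩
      · simp only [List.forall_mem_cons, YRel']; grind
      · simp [D1 (a - 1) (by omega), D2 (a + 1) (by omega) (by omega), D1 (n - 1) (by omega)]
    · refine ⟨[a - 1, a + 1, n], by simp; omega, ?_, ?_⟩
      · simp only [List.forall_mem_cons, YRel']; grind
      · simp [D2 (a - 1) (by omega) (by omega), D1 (a + 1) (by omega), D1 n (by omega)]
    · refine ⟨[a - 1, a + 1], by simp, ?_, ?_⟩
      · simp only [List.forall_mem_cons, YRel']; grind
      · simp [D2 (a - 1) (by omega) (by omega), D2 (a + 1) (by omega) (by omega)]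
  · refine ⟨[k], by simp, ?_, by rw [D1 a (by omega)]; simp [D2 k le_rfl hki]⟩
    simp only [List.forall_mem_cons, YRel']; grind
  · refine ⟨[i], by simp, ?_, by rw [D1 a (by omega)]; simp [D2 i hki le_rfl]⟩
    simp only [List.forall_mem_cons, YRel']; grind
  · refine ⟨[k], by simp, ?_, by rw [D1 a (by omega)]; simp [D2 k le_rfl hki]⟩
    simp only [List.forall_mem_cons, YRel']; grind
  · refine ⟨[i], by simp, ?_, by rw [D1 a (by omega)]; simp [D2 i hki le_rfl]⟩
    simp only [List.forall_mem_cons, YRel']; grind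

/-- The affine diagram of type `E₆` is not contained in a graph with top eigenvalue less than
two. -/
theorem IsLab.not_affineE6 {n k : ℕ} {L : U → ℕ} (h : IsLab G (n + 1) (YRel' n k (n - 1)) L)
    (hG : Pos G) (hk : 2 ≤ k) (hn : k + 4 ≤ n) : False := by
  set D : ℕ → ℕ := fun a => if a = k then 3 else if a + 1 = k ∨ a = k + 1 ∨ a + 1 = n then 2 else
    if a + 2 = k ∨ a = k + 2 ∨ a = n then 1 else 0 with hD
  have D3 : D k = 3 := if_pos rfl
  have D2 : ∀ a, a + 1 = k ∨ a = k + 1 ∨ a + 1 = n → D a = 2 := fun a h1 => by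
    simp only [hD]; rw [if_neg (by omega), if_pos h1]
  have D1 : ∀ a, a + 2 = k ∨ a = k + 2 ∨ a = n → D a = 1 := fun a h1 => by
    simp only [hD]; rw [if_neg (by omega), if_neg (by omega), if_pos h1]
  refine h.not_pos_list hG D ⟨k, by omega, by rw [D3]; decide⟩ fun a ha hne => ?_
  have : a = k ∨ (a + 1 = k ∨ a = k + 1 ∨ a + 1 = n) ∨ a + 2 = k ∨ a = k + 2 ∨ a = n := by
    by_contra hcon
    simp only [not_or] at hcon
    exact hne (by simp only [hD]; rw [if_neg (by omega), if_neg (by omega), if_neg (by omega)])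
  rcases this with h1 | (h1 | h1 | h1) | h1 | h1 | h1
  · refine ⟨[k - 1, k + 1, n - 1], by simp; omega, ?_, ?_⟩
    · simp only [List.forall_mem_cons, YRel']; grind
    · simp [h1, D3, D2 (k - 1) (by omega), D2 (k + 1) (by omega), D2 (n - 1) (by omega)]
  · refine ⟨[k, k - 2], by simp; omega, ?_, ?_⟩
    · simp only [List.forall_mem_cons, YRel']; grind
    · simp [D2 a (by omega), D3, D1 (k - 2) (by omega)]
  · refine ⟨[k, k + 2], by simp, ?_, ?_⟩
    · simp only [List.forall_mem_cons, YRel']; grind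
    · simp [D2 a (by omega), D3, D1 (k + 2) (by omega)]
  · refine ⟨[k, n], by simp; omega, ?_, ?_⟩
    · simp only [List.forall_mem_cons, YRel']; grind
    · simp [D2 a (by omega), D3, D1 n (by omega)]
  · refine ⟨[k - 1], by simp, ?_, ?_⟩
    · simp only [List.forall_mem_cons, YRel']; grind
    · simp [D1 a (by omega), D2 (k - 1) (by omega)]
  · refine ⟨[k + 1], by simp, ?_, ?_⟩
    · simp only [List.forall_mem_cons, YRel']; grind
    · simp [D1 a (by omega), D2 (k + 1) (by omega)]
  · refine ⟨[n - 1], by simp, ?_, ?_⟩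
    · simp only [List.forall_mem_cons, YRel']; grind
    · simp [D1 a (by omega), D2 (n - 1) (by omega)]

/-- The affine diagram of type `E₇` is not contained in a graph with top eigenvalue less than
two. -/
theorem IsLab.not_affineE7 {n k : ℕ} {L : U → ℕ} (h : IsLab G n (YRel n k) L)
    (hG : Pos G) (hk : 3 ≤ k) (hn : k + 5 ≤ n) : False := by
  set D : ℕ → ℕ := fun a => if a + 1 = n then 2 else 4 - (a - k) - (k - a) with hD
  have Dn : D (n - 1) = 2 := if_pos (by omega)
  have Dd : ∀ a j, a + 1 ≠ n → a + j = k ∨ a = k + j → D a = 4 - j := fun a j h1 h2 => by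
    simp only [hD]; rw [if_neg h1]; omega
  refine h.not_pos_list hG D ⟨n - 1, by omega, by rw [Dn]; decide⟩ fun a ha hne => ?_
  have : a + 1 = n ∨ (a + 1 ≠ n ∧ a ≤ k + 3 ∧ k ≤ a + 3) := by
    by_contra hcon
    exact hne (by simp only [hD]; rw [if_neg (by omega)]; omega)
  rcases this with h1 | ⟨h1, h2, h3⟩
  · refine ⟨[k], by simp, ?_, ?_⟩
    · simp only [List.forall_mem_cons, YRel]; grind
    · simp [show a = n - 1 by omega, Dn, Dd k 0 (by omega) (by omega)]
  by_cases hak : a = k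
  · refine ⟨[k - 1, k + 1, n - 1], by simp; omega, ?_, ?_⟩
    · simp only [List.forall_mem_cons, YRel]; grind
    · simp [hak, Dn, Dd k 0 (by omega) (by omega), Dd (k - 1) 1 (by omega) (by omega),
        Dd (k + 1) 1 (by omega) (by omega)]
  by_cases ha3 : a + 3 = k
  · refine ⟨[a + 1], by simp, ?_, ?_⟩
    · simp only [List.forall_mem_cons, YRel]; grind
    · simp [Dd a 3 (by omega) (by omega), Dd (a + 1) 2 (by omega) (by omega)]
  by_cases ha3' : a = k + 3
  · refine ⟨[a - 1], by simp, ?_, ?_⟩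
    · simp only [List.forall_mem_cons, YRel]; grind
    · simp [Dd a 3 (by omega) (by omega), Dd (a - 1) 2 (by omega) (by omega)]
  refine ⟨[a - 1, a + 1], by simp, ?_, ?_⟩
  · simp only [List.forall_mem_cons, YRel]; grind
  · obtain ⟨j, hj⟩ : ∃ j, a + j = k ∨ a = k + j := ⟨(a - k) + (k - a), by omega⟩
    rcases hj with hj | hj
    · simp [Dd a j (by omega) (by omega), Dd (a - 1) (j + 1) (by omega) (by omega),
        Dd (a + 1) (j - 1) (by omega) (by omega)]
      omega
    · simp [Dd a j (by omega) (by omega), Dd (a - 1) (j - 1) (by omega) (by omega),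
        Dd (a + 1) (j + 1) (by omega) (by omega)]
      omega

/-- The affine diagram of type `E₈` is not contained in a graph with top eigenvalue less than
two. -/
theorem IsLab.not_affineE8 {n : ℕ} {L : U → ℕ} (h : IsLab G n (YRel n 2) L)
    (hG : Pos G) (hn : 9 ≤ n) : False := by
  set D : ℕ → ℕ := fun a => if a + 1 = n then 3 else if a < 2 then 2 * a + 2 else 8 - a with hD
  have Dn : D (n - 1) = 3 := if_pos (by omega)
  have D0 : ∀ a, a + 1 ≠ n → a < 2 → D a = 2 * a + 2 := fun a h1 h2 => by
    simp only [hD]; rw [if_neg h1, if_pos h2]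
  have D1 : ∀ a, a + 1 ≠ n → 2 ≤ a → D a = 8 - a := fun a h1 h2 => by
    simp only [hD]; rw [if_neg h1, if_neg (by omega)]
  refine h.not_pos_list hG D ⟨n - 1, by omega, by rw [Dn]; decide⟩ fun a ha hne => ?_
  have : a + 1 = n ∨ (a + 1 ≠ n ∧ a < 8) := by
    by_contra hcon
    exact hne (by rw [D1 _ (by omega) (by omega)]; omega)
  rcases this with h1 | ⟨h1, h2⟩
  · refine ⟨[2], by simp, ?_, ?_⟩
    · simp only [List.forall_mem_cons, YRel]; grind
    · simp [show a = n - 1 by omega, Dn, D1 2 (by omega) (by omega)]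
  by_cases ha0 : a = 0
  · refine ⟨[1], by simp, ?_, ?_⟩
    · simp only [List.forall_mem_cons, YRel]; grind
    · simp [ha0, D0 0 (by omega) (by omega), D0 1 (by omega) (by omega)]
  by_cases ha1 : a = 1
  · refine ⟨[0, 2], by simp, ?_, ?_⟩
    · simp only [List.forall_mem_cons, YRel]; grind
    · simp [ha1, D0 0 (by omega) (by omega), D0 1 (by omega) (by omega), D1 2 (by omega) (by omega)]
  by_cases ha2 : a = 2
  · refine ⟨[1, 3, n - 1], by simp; omega, ?_, ?_⟩
    · simp only [List.forall_mem_cons, YRel]; grind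
    · simp [ha2, D0 1 (by omega) (by omega), D1 2 (by omega) (by omega), D1 3 (by omega) (by omega),
        Dn]
  by_cases ha7 : a = 7
  · refine ⟨[6], by simp, ?_, ?_⟩
    · simp only [List.forall_mem_cons, YRel]; grind
    · simp [ha7, D1 6 (by omega) (by omega), D1 7 (by omega) (by omega)]
  refine ⟨[a - 1, a + 1], by simp, ?_, ?_⟩
  · simp only [List.forall_mem_cons, YRel]; grind
  · simp [D1 (a - 1) (by omega) (by omega), D1 a (by omega) (by omega),
      D1 (a + 1) (by omega) (by omega)]
    omega

end

/-! ### Growing a connected graph leaf by leaf -/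

section
variable {U : Type} [Fintype U] [DecidableEq U] {G : SimpleGraph U}

/-- A leaf attached to a Y-shaped tree gives again a Y-shaped tree; otherwise the graph would contain
an affine diagram. -/
theorem IsLab.pos_step {n k i : ℕ} {L : U → ℕ} (h : IsLab G (n + 1) (YRel' n k i) L)
    (hG : Pos G) (hk : k + 2 ≤ n) (hi : i < n) :
    ∃ k', k' + 2 ≤ n + 1 ∧ ∃ L, IsLab G (n + 1) (YRel (n + 1) k') L := by
  by_cases hin : i = n - 1
  · -- the new vertex prolongs the short arm
    subst hin
    wlog hk2 : k + k + 2 ≤ n generalizing k L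
    · obtain ⟨L', h'⟩ := h.reflect'' hk
      exact this (k := n - 2 - k) (by omega) h' (by omega)
    by_cases hk0 : k = 0
    · subst hk0
      refine ⟨n - 1, by omega, h.relabelY
        (fun a => if a = n then 0 else if a = n - 1 then 1 else a + 2) ?_ ?_ ?_ ?_⟩
      · intro a ha; split_ifs <;> omega
      · intro a ha b hb hab; beta_reduce at hab; split_ifs at hab <;> omega
      · intro a ha b hb; dsimp only [YRel, YRel']; grind
      · intro a ha b hb; dsimp only [YRel, YRel']; grind
    by_cases hk1 : k = 1
    · subst hk1
      refine ⟨2, by omega, h.relabelY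
        (fun a => if a = n then 0 else if a = n - 1 then 1 else if a = 0 then n else a + 1)
        ?_ ?_ ?_ ?_⟩
      · intro a ha; split_ifs <;> omega
      · intro a ha b hb hab; beta_reduce at hab; split_ifs at hab <;> omega
      · intro a ha b hb; dsimp only [YRel, YRel']; grind
      · intro a ha b hb; dsimp only [YRel, YRel']; grind
    exact (h.not_affineE6 hG (by omega) (by omega)).elim
  wlog hki : k ≤ i generalizing k i L
  · obtain ⟨L', h'⟩ := h.reflect' hk (by omega)
    exact this h' (by omega) (by omega) (by omega) (by omega)
  by_cases hi2 : i = n - 2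
  · -- the new vertex prolongs a long arm
    subst hi2
    refine ⟨k, by omega, h.relabelY
      (fun a => if a = n then n - 1 else if a = n - 1 then n else a) ?_ ?_ ?_ ?_⟩
    · intro a ha; split_ifs <;> omega
    · intro a ha b hb hab; beta_reduce at hab; split_ifs at hab <;> omega
    · intro a ha b hb; dsimp only [YRel, YRel']; grind
    · intro a ha b hb; dsimp only [YRel, YRel']; grind
  by_cases hk0 : k = 0
  · -- the new vertex is attached to a path
    subst hk0
    refine ⟨i + 1, by omega, h.relabelY
      (fun a => if a = n then n else if a = n - 1 then 0 else a + 1) ?_ ?_ ?_ ?_⟩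
    · intro a ha; split_ifs <;> omega
    · intro a ha b hb hab; beta_reduce at hab; split_ifs at hab <;> omega
    · intro a ha b hb; dsimp only [YRel, YRel']; grind
    · intro a ha b hb; dsimp only [YRel, YRel']; grind
  exact (h.not_affineD hG (by omega) hki (by omega)).elim

open Classical in
/-- If removing the leaf `v` leaves a Y-shaped tree, then the graph is a Y-shaped tree with a leaf
attached. -/
theorem exists_yRel' {v w : U} (hvw : G.Adj v w) (hw : ∀ x, G.Adj v x → x = w) {n k : ℕ}
    {L : ({v}ᶜ : Set U) → ℕ} (h : IsLab (G.induce {v}ᶜ) n (YRel n k) L) (hk : k + 2 ≤ n) :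
    ∃ i < n, ∃ L, IsLab G (n + 1) (YRel' n k i) L := by
  have hwv : w ≠ v := fun h => G.irrefl (h ▸ hvw)
  set M : U → ℕ := fun u => if hu : u = v then n else L ⟨u, hu⟩ with hM
  have Mv : M v = n := dif_pos rfl
  have Mu : ∀ u (hu : u ≠ v), M u = L ⟨u, hu⟩ := fun u hu => dif_neg hu
  have Mlt : ∀ u, u ≠ v → M u < n := fun u hu => by rw [Mu u hu]; exact h.lt _
  have Minj : Function.Injective M := by
    intro a b hab
    by_cases ha : a = v <;> by_cases hb : b = v
    · rw [ha, hb]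
    · rw [ha, Mv] at hab; have := Mlt b hb; omega
    · rw [hb, Mv] at hab; have := Mlt a ha; omega
    · rw [Mu a ha, Mu b hb] at hab
      exact congrArg Subtype.val (h.inj hab)
  refine ⟨M w, Mlt w hwv, M, Minj, fun u => ?_, fun a ha => ?_, fun a b => ?_⟩
  · by_cases hu : u = v
    · rw [hu, Mv]; omega
    · have := Mlt u hu; omega
  · by_cases han : a = n
    · exact ⟨v, by rw [han, Mv]⟩
    · obtain ⟨u, hu⟩ := h.surj a (by omega)
      exact ⟨u, by rw [Mu u u.2]; exact hu⟩
  · have nb : ∀ b, b ≠ v → (G.Adj v b ↔ YRel' n k (M w) n (M b)) := by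
      intro b hb
      have h1 := Mlt b hb
      have h2 := Mlt w hwv
      have : G.Adj v b ↔ M b = M w :=
        ⟨fun hvb => by rw [hw b hvb], fun hbw => by rw [Minj hbw]; exact hvw⟩
      rw [this]
      dsimp only [YRel']
      omega
    have symm : ∀ a b, YRel' n k (M w) a b ↔ YRel' n k (M w) b a := by
      intro a b; dsimp only [YRel']; grind
    by_cases ha : a = v <;> by_cases hb : b = v
    · have h2 := Mlt w hwv
      have : ¬ YRel' n k (M w) n n := by dsimp only [YRel']; omega
      rw [ha, hb, Mv]
      exact iff_of_false G.irrefl this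
    · rw [ha, Mv, nb b hb]
    · rw [hb, Mv, G.adj_comm, nb a ha, symm]
    · have h1 := h.adj ⟨a, ha⟩ ⟨b, hb⟩
      rw [← Mu a ha, ← Mu b hb] at h1
      have h2 := Mlt a ha
      have h3 := Mlt b hb
      rw [show G.Adj a b ↔ YRel n k (M a) (M b) from h1]
      dsimp only [YRel, YRel']
      grind

open Classical in
theorem Pos.exists_leaf [Nonempty U] (hG : Pos G) : ∃ v, G.degree v < 2 := by
  by_contra! hcon
  obtain ⟨u⟩ := ‹Nonempty U›
  refine one_ne_zero (hG (fun _ => 1) (fun v _ => ?_) u)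
  have := hcon v
  rw [← SimpleGraph.card_neighborFinset_eq_degree, SimpleGraph.neighborFinset_eq_filter] at this
  simpa using this

open Classical in
theorem Pos.induce (hG : Pos G) (S : Set U) [Fintype S] : Pos (G.induce S) := by
  intro d hd u
  have key := hG (fun u => if hu : u ∈ S then d ⟨u, hu⟩ else 0) (fun u hu => ?_) u
  · simpa using key
  · by_cases huv : u ∈ S
    · rw [dif_pos huv] at hu
      rw [dif_pos huv]
      have hd' : 2 * d ⟨u, huv⟩ ≤ ∑ w with (G.induce S).Adj ⟨u, huv⟩ w, d w := by
        convert hd _ hu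
      refine hd'.trans ?_
      have e : ∑ w with (G.induce S).Adj ⟨u, huv⟩ w, d w = ∑ w with (G.induce S).Adj ⟨u, huv⟩ w,
          (fun w : U => if hw : w ∈ S then d ⟨w, hw⟩ else 0) w :=
        Finset.sum_congr rfl fun w _ => by simp
      rw [e, ← Finset.sum_image (g := Subtype.val)
        (f := fun w => if hw : w ∈ S then d ⟨w, hw⟩ else 0) Subtype.val_injective.injOn]
      refine Finset.sum_le_sum_of_subset fun w hw => ?_
      obtain ⟨x, hx, rfl⟩ := Finset.mem_image.1 hw
      simpa using hx
    · simp [huv] at hu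

/-- A leaf exists because the constant function one is not admissible in `Pos`, and removing it
leaves a smaller connected graph. -/
theorem Pos.exists_lab : ∀ (n : ℕ) (U : Type) [Fintype U] [DecidableEq U] (G : SimpleGraph U),
    G.Connected → Pos G → Fintype.card U = n + 2 →
    ∃ k, k + 2 ≤ n + 2 ∧ ∃ L, IsLab G (n + 2) (YRel (n + 2) k) L := by
  classical
  intro n
  induction n with
  | zero =>
    intro U _ _ G hc _ hcard
    let e := Fintype.equivFinOfCardEq hcard
    refine ⟨0, le_rfl, fun u => e u, fun a b hab => e.injective (Fin.ext hab), fun u => (e u).2,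
      fun a ha => ⟨e.symm ⟨a, ha⟩, by simp⟩, fun a b => ?_⟩
    have hnt : Nontrivial U := Fintype.one_lt_card_iff_nontrivial.1 (by omega)
    have hall : ∀ a b, a ≠ b → G.Adj a b := by
      intro a b hab
      obtain ⟨c, hac⟩ := (G.degree_pos_iff_exists_adj a).1 (hc.preconnected.degree_pos_of_nontrivial a)
      have : c = b := by
        by_contra hcb
        have := Finset.card_le_univ ({a, b, c} : Finset U)
        rw [Finset.card_eq_three.2 ⟨a, b, c, hab, hac.ne, fun h => hcb h.symm, rfl⟩] at this
        omega
      exact this ▸ hac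
    have h1 : G.Adj a b ↔ e a ≠ e b :=
      ⟨fun h he => h.ne (e.injective he), fun h => hall a b fun he => h (by rw [he])⟩
    rw [h1, Ne, Fin.ext_iff]
    have := (e a).2
    have := (e b).2
    dsimp only [YRel]
    omega
  | succ n ih =>
    intro U _ _ G hc hG hcard
    have hnt : Nontrivial U := Fintype.one_lt_card_iff_nontrivial.1 (by omega)
    obtain ⟨v, hv⟩ := hG.exists_leaf
    have hv1 : G.degree v = 1 := by
      have := hc.preconnected.degree_pos_of_nontrivial v
      omega
    have hc' := hc.induce_compl_singleton_of_degree_eq_one hv1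
    obtain ⟨w, hvw, hw⟩ := SimpleGraph.degree_eq_one_iff_existsUnique_adj.1 hv1
    have hcard' : Fintype.card ({v}ᶜ : Set U) = n + 2 := by
      rw [Fintype.card_compl_set]; simp [hcard]
    obtain ⟨k, hk, L, hL⟩ := ih ({v}ᶜ : Set U) _ hc' (hG.induce _) hcard'
    obtain ⟨i, hi, L', hL'⟩ := exists_yRel' hvw hw hL hk
    exact hL'.pos_step hG hk hi

end

/-! ### The classification of graphs with top eigenvalue less than two -/

section
variable {U : Type} [Fintype U] [DecidableEq U] {G : SimpleGraph U}

theorem adeA_adj {n : ℕ} (i j : Fin n) :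
    (adeA n).Adj i j ↔ ((i : ℕ) + 1 = j ∨ (j : ℕ) + 1 = i) := by
  rw [adeA, SimpleGraph.fromRel_adj, Ne, Fin.ext_iff]; omega

theorem adeD_adj {n : ℕ} (hn : 4 ≤ n) (i j : Fin n) :
    (adeD n).Adj i j ↔ YRel n (n - 3) i j := by
  rw [adeD, SimpleGraph.fromRel_adj, Ne, Fin.ext_iff]; dsimp only [YRel]; omega

theorem adeE_adj {n : ℕ} (hn : 6 ≤ n) (i j : Fin n) :
    (adeE n).Adj i j ↔ YRel n 2 i j := by
  rw [adeE, SimpleGraph.fromRel_adj, Ne, Fin.ext_iff]; dsimp only [YRel]; omega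

/-- By `Pos.exists_lab` the graph is a Y-shaped tree; the affine diagrams of type E bound the lengths
of its arms. -/
theorem Pos.isADE (hG : Pos G) (hc : G.Connected) : IsADE G := by
  obtain ⟨u⟩ := hc.nonempty
  have hpos : 0 < Fintype.card U := Fintype.card_pos_iff.2 ⟨u⟩
  by_cases h1 : Fintype.card U = 1
  · have hs : ∀ a b : U, a = b := Fintype.card_le_one_iff.1 h1.le
    refine .inl ⟨1, le_rfl, IsLab.toIso (L := fun _ => 0) (R := fun a b => a + 1 = b ∨ b + 1 = a)
      ⟨fun a b _ => hs a b, fun _ => one_pos, fun a ha => ⟨u, by omega⟩, fun a b => ?_⟩ _ adeA_adj⟩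
    rw [hs a b]
    exact iff_of_false G.irrefl (by omega)
  obtain ⟨n, hn⟩ : ∃ n, Fintype.card U = n + 2 := ⟨Fintype.card U - 2, by omega⟩
  obtain ⟨k, hk, L, hL⟩ := hG.exists_lab n U G hc hn
  generalize n + 2 = n at hk hL
  wlog hkk : k + k + 2 ≤ n generalizing k L
  · obtain ⟨L', h'⟩ := hL.reflect hk
    exact this (n - 2 - k) L' (by omega) h' (by omega)
  by_cases hk0 : k = 0
  · subst hk0
    refine .inl ⟨n, by omega, IsLab.toIso (hL.relabel
      (R' := fun a b => a + 1 = b ∨ b + 1 = a) (fun a => if a = n - 1 then 0 else a + 1)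
      ?_ ?_ ?_) _ adeA_adj⟩
    · intro a ha; split_ifs <;> omega
    · intro a ha b hb hab; beta_reduce at hab; split_ifs at hab <;> omega
    · intro a ha b hb; dsimp only [YRel]; grind
  by_cases hk1 : k = 1
  · subst hk1
    obtain ⟨L', h'⟩ := hL.reflect hk
    rw [show n - 2 - 1 = n - 3 by omega] at h'
    exact .inr (.inl ⟨n, by omega, h'.toIso _ (adeD_adj (by omega))⟩)
  by_cases hk2 : k = 2
  · subst hk2
    by_cases hn9 : 9 ≤ n
    · exact (hL.not_affineE8 hG hn9).elim
    · exact .inr (.inr ⟨n, by omega, hL.toIso _ (adeE_adj (by omega))⟩)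
  exact (hL.not_affineE7 hG (by omega) (by omega)).elim

open Classical in
/-- A positive function which is at least half the sum of its values at the neighbours, with
strict inequality somewhere. -/
def HasLabels (G : SimpleGraph U) : Prop :=
  ∃ d : U → ℕ, (∀ u, 0 < d u) ∧ (∀ u, ∑ w with G.Adj u w, d w ≤ 2 * d u) ∧
    ∃ u, ∑ w with G.Adj u w, d w < 2 * d u

theorem IsLab.hasLabels {n : ℕ} {R : ℕ → ℕ → Prop} {L : U → ℕ} (h : IsLab G n R L)
    (D : ℕ → ℕ) (s : ℕ → Finset ℕ) (hs : ∀ a < n, ∀ b < n, R a b → b ∈ s a)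
    (hD : ∀ a < n, 0 < D a) (hle : ∀ a < n, ∑ b ∈ s a, D b ≤ 2 * D a)
    (hlt : ∃ a < n, ∑ b ∈ s a, D b < 2 * D a) : HasLabels G := by
  have key : ∀ u, _ := fun u => h.sum_le D u (s (L u)) fun b hb => hs _ (h.lt u) b hb
  obtain ⟨a, ha, hlt⟩ := hlt
  obtain ⟨u, rfl⟩ := h.surj a ha
  exact ⟨fun u => D (L u), fun u => hD _ (h.lt u), fun u => (key u).trans (hle _ (h.lt u)), u,
    (key u).trans_lt hlt⟩

theorem IsADE.hasLabels (h : IsADE G) : HasLabels G := by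
  obtain ⟨n, hn, ⟨e⟩⟩ | ⟨n, hn, ⟨e⟩⟩ | ⟨n, hn, ⟨e⟩⟩ := h
  · refine (isLab_of_iso e (R := fun a b => a + 1 = b ∨ b + 1 = a) adeA_adj).hasLabels (fun _ => 1)
      (fun a => if a = 0 then {1} else {a - 1, a + 1}) ?_ ?_ ?_ ?_
    · intro a ha b hb hab; split_ifs <;> simp <;> omega
    · simp
    · intro a ha; split_ifs <;> simp
    · exact ⟨0, hn, by simp⟩
  · refine (isLab_of_iso e (adeD_adj hn)).hasLabels (fun a => if a + 2 < n then 2 else 1)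
      (fun a => if a = 0 then {1} else if a + 3 < n then {a - 1, a + 1} else
        if a = n - 3 then {n - 4, n - 2, n - 1} else {n - 3}) ?_ ?_ ?_ ?_
    · intro a ha b hb; dsimp only [YRel]; split_ifs <;> simp <;> omega
    · intro a ha; split_ifs <;> omega
    · intro a ha
      by_cases h0 : a = 0
      · rw [if_pos h0, Finset.sum_singleton]; split_ifs <;> omega
      by_cases h1 : a + 3 < n
      · rw [if_neg h0, if_pos h1, Finset.sum_pair (by omega)]; split_ifs <;> omega
      by_cases h2 : a = n - 3
      · rw [if_neg h0, if_neg h1, if_pos h2, Finset.sum_insert (by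
          rw [Finset.mem_insert, Finset.mem_singleton]; omega), Finset.sum_pair (by omega)]
        split_ifs <;> omega
      · rw [if_neg h0, if_neg h1, if_neg h2, Finset.sum_singleton]; split_ifs <;> omega
    · refine ⟨0, by omega, ?_⟩
      rw [if_pos rfl, Finset.sum_singleton]; split_ifs <;> omega
  · have hn6 : 6 ≤ n := by omega
    refine (isLab_of_iso e (adeE_adj hn6)).hasLabels
      (fun a => if a = n - 1 then 3 else if a < 3 then 2 * a + 2 else 8 - a)
      (fun a => (Finset.range n).filter fun b => (a + 1 = b ∧ b + 2 ≤ n) ∨ (b + 1 = a ∧ a + 2 ≤ n) ∨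
        (a = 2 ∧ b + 1 = n) ∨ (b = 2 ∧ a + 1 = n)) ?_ ?_ ?_ ?_
    · intro a ha b hb; dsimp only [YRel]; simp; omega
    · intro a ha; split_ifs <;> omega
    · rcases hn with rfl | rfl | rfl <;> decide
    · rcases hn with rfl | rfl | rfl <;> decide

end

/-! ### Eigenvalues less than two and ADE diagrams -/

section
variable {U : Type} [Fintype U] [DecidableEq U] {G : SimpleGraph U}

open Classical in
theorem sum_adj_comm (f g : U → ℝ) :
    ∑ u, f u * ∑ w with G.Adj u w, g w = ∑ u, g u * ∑ w with G.Adj u w, f w := by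
  simp only [Finset.sum_filter, Finset.mul_sum, mul_ite, mul_zero]
  rw [Finset.sum_comm]
  refine Finset.sum_congr rfl fun u _ => Finset.sum_congr rfl fun w _ => ?_
  simp only [G.adj_comm w u, mul_comm]

open Classical in
/-- Pairing `d` with the positive eigenvector contradicts `l < 2` unless `d = 0`. -/
theorem pos_of_eig {P : U → ℝ} {l : ℝ} (hP : ∀ u, 0 < P u)
    (he : ∀ u, ∑ w with G.Adj u w, P w = l * P u) (hl : l < 2) : Pos G := by
  intro d hd
  have h1 : ∑ u, P u * (2 * (d u : ℝ)) ≤ ∑ u, P u * ∑ w with G.Adj u w, (d w : ℝ) := by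
    refine Finset.sum_le_sum fun u _ => mul_le_mul_of_nonneg_left ?_ (hP u).le
    by_cases hu : d u = 0
    · rw [hu, Nat.cast_zero, mul_zero]
      exact Finset.sum_nonneg fun w _ => Nat.cast_nonneg _
    · exact_mod_cast hd u hu
  rw [sum_adj_comm, ← sub_nonneg, ← Finset.sum_sub_distrib] at h1
  have h2 : ∀ u ∈ Finset.univ, 0 ≤ (2 - l) * (P u * (d u : ℝ)) := fun u _ =>
    mul_nonneg (by linarith) (mul_nonneg (hP u).le (Nat.cast_nonneg _))
  have h3 : ∑ u, (2 - l) * (P u * (d u : ℝ)) = 0 := by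
    refine le_antisymm ?_ (Finset.sum_nonneg h2)
    rw [← neg_nonneg, ← Finset.sum_neg_distrib]
    refine h1.trans (Finset.sum_le_sum fun u _ => ?_)
    rw [he]
    exact le_of_eq (by ring)
  intro u
  have h4 := (Finset.sum_eq_zero_iff_of_nonneg h2).1 h3 u (Finset.mem_univ _)
  simpa [(sub_pos.2 hl).ne', (hP u).ne'] using h4

open Classical in
/-- Pairing the labels with the positive eigenvector gives `l * ∑ d P < 2 * ∑ d P`. -/
theorem HasLabels.eig_lt_two (h : HasLabels G) {P : U → ℝ} {l : ℝ} (hP : ∀ u, 0 < P u)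
    (he : ∀ u, ∑ w with G.Adj u w, P w = l * P u) : l < 2 := by
  obtain ⟨d, hd, hle, u₀, hlt⟩ := h
  have hle' : ∀ u, ∑ w with G.Adj u w, (d w : ℝ) ≤ 2 * d u := fun u => by exact_mod_cast hle u
  have hlt' : ∑ w with G.Adj u₀ w, (d w : ℝ) < 2 * d u₀ := by exact_mod_cast hlt
  have h1 : ∑ u, P u * ∑ w with G.Adj u w, (d w : ℝ) < ∑ u, P u * (2 * (d u : ℝ)) :=
    Finset.sum_lt_sum (fun u _ => mul_le_mul_of_nonneg_left (hle' u) (hP u).le)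
      ⟨u₀, Finset.mem_univ _, mul_lt_mul_of_pos_left hlt' (hP u₀)⟩
  rw [sum_adj_comm] at h1
  simp only [he] at h1
  by_contra! hl
  refine h1.not_ge (Finset.sum_le_sum fun u _ => ?_)
  have := mul_nonneg (hP u).le (Nat.cast_nonneg (α := ℝ) (d u))
  nlinarith

end

section
variable {V : Type} [Fintype V] [DecidableEq V] {A B : V → V → ℕ} {S : V → Prop}

theorem graphOf_adj (hs : ∀ u v, A u v = A v u) (h0 : ∀ v, A v v = 0) (u v : V) :
    (graphOf A).Adj u v ↔ A u v = 1 := by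
  rw [graphOf, SimpleGraph.fromRel_adj, hs v u, or_self, and_iff_right_iff_imp]
  rintro h rfl
  rw [h0] at h
  exact zero_ne_one h

theorem Closed.supp_subset (h : Closed A B S) (hs : ∀ u v, A u v = A v u) (h0 : ∀ v, A v v = 0)
    {v₀ : V} (hv₀ : S v₀) : ∀ v ∈ ((graphOf A).connectedComponentMk v₀).supp, S v := by
  intro v hv
  have hr : (graphOf A).Reachable v₀ v := (SimpleGraph.ConnectedComponent.exact hv).symm
  clear hv
  rw [SimpleGraph.reachable_iff_reflTransGen] at hr
  induction hr with
  | refl => exact hv₀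
  | @tail b c _ hbc ih =>
    exact h b c ih (.inl (by rw [(graphOf_adj hs h0 b c).1 hbc]; exact one_ne_zero))

open Classical in
/-- A positive eigenvector on a closed set of vertices restricts to the components of the graph. -/
theorem Closed.eig_supp (h : Closed A B S) (hs : ∀ u v, A u v = A v u) (h0 : ∀ v, A v v = 0)
    (h1 : ∀ u v, A u v ≤ 1) {p : {v // S v} → ℝ} {l : ℝ}
    (he : ∀ u, ∑ v, (rst A S u v : ℝ) * p v = l * p u)
    (c : (graphOf A).ConnectedComponent) (hc : ∀ v ∈ c.supp, S v) (u : c.supp) :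
    ∑ w with ((graphOf A).induce c.supp).Adj u w, p ⟨w, hc w w.2⟩ = l * p ⟨u, hc u u.2⟩ := by
  set f : V → ℝ := fun v => if hv : S v then p ⟨v, hv⟩ else 0 with hf
  have hfp : ∀ v hv, f v = p ⟨v, hv⟩ := fun v hv => dif_pos hv
  have hcl : Closed A A fun v => v ∈ c.supp := by
    intro a b ha hab
    have hab : A a b = 1 := by have := h1 a b; omega
    exact (c.mem_supp_congr_adj ((graphOf_adj hs h0 a b).2 hab)).1 ha
  rw [← he ⟨u, hc u u.2⟩]
  have e1 := h.sum (R := ℝ) ⟨u, hc u u.2⟩ f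
  have e2 := hcl.sum (R := ℝ) u f
  calc _ = ∑ w : {v // v ∈ c.supp}, (rst A (fun v => v ∈ c.supp) u w : ℝ) * f w := by
        rw [Finset.sum_filter]
        refine Finset.sum_congr rfl fun w _ => ?_
        have hr : rst A (fun v => v ∈ c.supp) u w = A u w := rfl
        rw [hfp w (hc w w.2), hr]
        split_ifs with ha <;> rw [SimpleGraph.induce_adj, graphOf_adj hs h0] at ha
        · rw [ha, Nat.cast_one, one_mul]
        · rw [show A u w = 0 by have := h1 u w; omega, Nat.cast_zero, zero_mul]
    _ = _ := e2.trans e1.symm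
    _ = _ := Finset.sum_congr rfl fun w _ => by rw [hfp w w.2]

open Classical in
/-- A double edge would make the positive eigenvector larger at each of its ends than at the other. -/
theorem Closed.le_one (hs : ∀ u v, A u v = A v u) (h : Closed A B S) {p : {v // S v} → ℝ} {l : ℝ}
    (hp : ∀ v, 0 < p v) (he : ∀ u, ∑ v, (rst A S u v : ℝ) * p v = l * p u) (hl : l < 2)
    (u v : V) (hu : S u) : A u v ≤ 1 := by
  by_contra! h2
  have hv : S v := h u v hu (.inl (by omega))
  have key : ∀ a b : {v // S v}, 2 ≤ A a b → p b < p a := by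
    intro a b hab
    have h3 := Finset.single_le_sum (f := fun v => (rst A S a v : ℝ) * p v)
      (fun v _ => mul_nonneg (Nat.cast_nonneg _) (hp v).le) (Finset.mem_univ b)
    rw [he] at h3
    have h4 : (2 : ℝ) ≤ rst A S a b := by exact_mod_cast hab
    nlinarith [hp a, hp b]
  exact lt_asymm (key ⟨u, hu⟩ ⟨v, hv⟩ h2) (key ⟨v, hv⟩ ⟨u, hu⟩ (by rw [hs]; exact h2))

open Classical in
theorem Closed.isADE (h : Closed A B S) (hs : ∀ u v, A u v = A v u) (h0 : ∀ v, A v v = 0)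
    (h1 : ∀ u v, A u v ≤ 1) {p : {v // S v} → ℝ} {l : ℝ} (hp : ∀ v, 0 < p v)
    (he : ∀ u, ∑ v, (rst A S u v : ℝ) * p v = l * p u) (hl : l < 2)
    {v₀ : V} (hv₀ : S v₀) :
    IsADE ((graphOf A).induce ((graphOf A).connectedComponentMk v₀).supp) :=
  (pos_of_eig (fun _ => hp _) (h.eig_supp hs h0 h1 he _ (h.supp_subset hs h0 hv₀)) hl).isADE
    (SimpleGraph.ConnectedComponent.connected_toSimpleGraph _)

open Classical in
theorem Closed.eig_lt_two (h : Closed A B S) (hs : ∀ u v, A u v = A v u) (h0 : ∀ v, A v v = 0)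
    (h1 : ∀ u v, A u v ≤ 1) {p : {v // S v} → ℝ} {l : ℝ} (hp : ∀ v, 0 < p v)
    (he : ∀ u, ∑ v, (rst A S u v : ℝ) * p v = l * p u) {v₀ : V} (hv₀ : S v₀)
    (hA : IsADE ((graphOf A).induce ((graphOf A).connectedComponentMk v₀).supp)) : l < 2 :=
  hA.hasLabels.eig_lt_two (fun _ => hp _) (h.eig_supp hs h0 h1 he _ (h.supp_subset hs h0 hv₀))

open Classical in
/-- Both conditions are tested on the components: the joint eigenvector on a component of the bigraph
restricts to a positive eigenvector on each component of `Γ` and of `Δ` inside it. -/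
theorem smallEig_iff {eps : V → ℤ} (hQ : BipartiteData eps A B) (hrec : RecurrentQuiver A B) :
    SmallEig A B ↔ AdmissibleADE A B := by
  obtain ⟨-, sA, sB, zA, zB, -⟩ := id hQ
  have hcl := closed_inComp (A := A) (B := B)
  have hin : ∀ v₀, InComp A B v₀ v₀ := fun _ => .refl
  constructor
  · intro h
    have hA : ∀ u v, A u v ≤ 1 := fun u v => by
      obtain ⟨p, l, m, hp, hl, hm, l2, m2⟩ := h u
      exact (hcl u).le_one sA hp hl l2 u v (hin u)
    have hB : ∀ u v, B u v ≤ 1 := fun u v => by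
      obtain ⟨p, l, m, hp, hl, hm, l2, m2⟩ := h u
      exact (hcl u).swap.le_one sB hp hm m2 u v (hin u)
    refine ⟨hA, hB, fun c => ?_, fun c => ?_⟩
    · induction c using SimpleGraph.ConnectedComponent.ind with | _ v₀
      obtain ⟨p, l, m, hp, hl, hm, l2, m2⟩ := h v₀
      exact (hcl v₀).isADE sA zA hA hp hl l2 (hin v₀)
    · induction c using SimpleGraph.ConnectedComponent.ind with | _ v₀
      obtain ⟨p, l, m, hp, hl, hm, l2, m2⟩ := h v₀
      exact (hcl v₀).swap.isADE sB zB hB hp hm m2 (hin v₀)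
  · rintro ⟨hA, hB, cA, cB⟩ v₀
    have hAB := hQ.goodPair hrec
    have : Nonempty {v // InComp A B v₀ v} := ⟨v₀, hin v₀⟩
    obtain ⟨p, l, m, hp, hl, hm⟩ := joint_eigen ((hcl v₀).goodPair hAB) (conn_inComp hAB v₀)
    exact ⟨p, l, m, hp, hl, hm, (hcl v₀).eig_lt_two sA zA hA hp hl (hin v₀) (cA _),
      (hcl v₀).swap.eig_lt_two sB zB hB hp hm (hin v₀) (cB _)⟩

end

/-- For a bipartite recurrent quiver `Q`, the associated `T`-system is periodic
(for some positive integer `N`, `T (t + 2N) v = T t v` for all `v` and all `t` with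
`t + eps v` even) if and only if `G(Q)` is an admissible ADE bigraph. -/
theorem tsystem_periodic_iff_admissibleADE
    {V : Type} [Fintype V] [DecidableEq V]
    (eps : V → ℤ) (A B : V → V → ℕ)
    (hbip : BipartiteData eps A B) (hrec : RecurrentQuiver A B)
    (T : ℤ → V → FractionRing (MvPolynomial V ℚ))
    (hT : IsTSystem eps A B T) :
    (∃ N : ℕ, 0 < N ∧ ∀ (v : V) (t : ℤ), Even (t + eps v) →
        T (t + 2 * N) v = T t v) ↔ AdmissibleADE A B := by
  rw [← smallEig_iff hbip hrec]
  exact ⟨fun ⟨N, hN, h⟩ => smallEig_of_periodic hbip hrec hT hN h,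
    periodic_of_smallEig hbip hrec hT⟩
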